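/- arXiv:2304.13715 — 3 statements merged into one kernel-verified Lean document; each statement's English description precedes it below -/
import Mathlib

section
/- For every positive integer Δ and every ν > 0, there exists μ > 0 (depending on Δ and ν) such that for every positive integer s there exists M (depending on Δ, ν and s) such that the following holds: if H is a bipartite graph with maximum degree Δ(H) ≤ Δ, every connected component of H has at most s vertices, and |V(H)| ≥ M, and G is a graph with minimum degree δ(G) ≥ (1−μ)·|V(H)| and |V(G)| ≥ (1+ν)·|V(H)|, then H is a minor of G. -/
open SimpleGraph

/-- The degree of a vertex: the number of neighbours. -/
noncomputable def deg {V : Type*} (G : SimpleGraph V) (v : V) : ℕ :=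
  (G.neighborSet v).ncard

/-- The minimum degree of a graph. -/
noncomputable def minDeg {V : Type*} (G : SimpleGraph V) : ℕ :=
  sInf (Set.range (deg G))

/-- The maximum degree of a graph. -/
noncomputable def maxDeg {V : Type*} (G : SimpleGraph V) : ℕ :=
  sSup (Set.range (deg G))

/-- The density of a graph: number of edges divided by number of vertices. -/
noncomputable def density {V : Type*} (G : SimpleGraph V) : ℝ :=
  (G.edgeSet.ncard : ℝ) / (Nat.card V : ℝ)

/-- The density of a subgraph of `G`. -/
noncomputable def subDensity {V : Type*} {G : SimpleGraph V} (J : G.Subgraph) : ℝ :=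
  (J.edgeSet.ncard : ℝ) / (J.verts.ncard : ℝ)

/-- A model (branch decomposition) of `H` in `G`: pairwise disjoint branch sets,
each inducing a connected (in particular nonempty) subgraph, with an edge of `G`
between the branch sets of any two adjacent vertices of `H`. -/
def IsModel {α β : Type*} (H : SimpleGraph α) (G : SimpleGraph β) (μ : α → Set β) : Prop :=
  (∀ u v : α, u ≠ v → Disjoint (μ u) (μ v)) ∧
  (∀ v : α, (G.induce (μ v)).Connected) ∧
  (∀ u v : α, H.Adj u v → ∃ a ∈ μ u, ∃ b ∈ μ v, G.Adj a b)

/-- `H` is a minor of `G`: there is a model of `H` in `G`. -/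
def IsMinor {α β : Type*} (H : SimpleGraph α) (G : SimpleGraph β) : Prop :=
  ∃ μ : α → Set β, IsModel H G μ

/-- `H` is isomorphic to a subgraph of `G`. -/
def IsSubgraphEmb {α β : Type*} (H : SimpleGraph α) (G : SimpleGraph β) : Prop :=
  ∃ f : α ↪ β, ∀ u v : α, H.Adj u v → G.Adj (f u) (f v)

/-- A (proper) separation of `G`. -/
def IsSeparation {V : Type*} (G : SimpleGraph V) (A B : Set V) : Prop :=
  A ∪ B = Set.univ ∧ ¬ A ⊆ B ∧ ¬ B ⊆ A ∧
    ∀ u ∈ A \ B, ∀ v ∈ B \ A, ¬ G.Adj u v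

/-- The pair `(G, X)` is `k`-dense: `X` is a proper subset of the vertices, and for
every separation of order at most `k` one of the two sides is contained in `X`. -/
def KDense {V : Type*} (G : SimpleGraph V) (X : Set V) (k : ℝ) : Prop :=
  X ≠ Set.univ ∧
  ∀ A B : Set V, IsSeparation G A B → ((A ∩ B).ncard : ℝ) ≤ k →
    A \ B ⊆ X ∨ B \ A ⊆ X

/-- The pair `(G, X)` is `(d, k)`-dense. -/
def DensePair {V : Type*} (G : SimpleGraph V) (X : Set V) (d k : ℝ) : Prop :=
  X ≠ Set.univ ∧
  (∀ v : V, v ∉ X → d ≤ (deg G v : ℝ)) ∧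
  ∀ A B : Set V, IsSeparation G A B → ((A ∩ B).ncard : ℝ) ≤ k →
    A \ B ⊆ X ∨ B \ A ⊆ X

/-- A graph family (of finite graphs, represented on the vertex sets `Fin n`) with
strongly sublinear separators: closed under subgraphs, and there are `c > 0` and
`0 < β < 1` such that every member has a balanced separation of order ≤ `c * n ^ β`. -/
def SSLS (F : ∀ n : ℕ, SimpleGraph (Fin n) → Prop) : Prop :=
  (∀ (n m : ℕ) (G : SimpleGraph (Fin n)) (H : SimpleGraph (Fin m)),
      F n G → IsSubgraphEmb H G → F m H) ∧
  ∃ c : ℝ, 0 < c ∧ ∃ β : ℝ, 0 < β ∧ β < 1 ∧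
    ∀ (n : ℕ) (G : SimpleGraph (Fin n)), F n G →
      ∃ A B : Set (Fin n), IsSeparation G A B ∧
        (A.ncard : ℝ) ≤ 2 / 3 * n ∧ (B.ncard : ℝ) ≤ 2 / 3 * n ∧
        ((A ∩ B).ncard : ℝ) ≤ c * (n : ℝ) ^ (β : ℝ)

/-- The extremal function `c(H)`: the supremum of densities of non-null graphs
with no `H` minor. -/
noncomputable def extremalFunction {α : Type*} (H : SimpleGraph α) : ℝ :=
  sSup {x : ℝ | ∃ (n : ℕ) (G : SimpleGraph (Fin n)), 0 < n ∧ ¬ IsMinor H G ∧ density G = x}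

/-- `G` is `H`-linked: `G` has at least as many vertices as `H` and every injection
`φ` of the vertices of `H` into those of `G` extends to a `φ`-rooted model of `H`. -/
def IsLinked {α β : Type*} (H : SimpleGraph α) (G : SimpleGraph β) : Prop :=
  Nat.card α ≤ Nat.card β ∧
  ∀ φ : α ↪ β, ∃ μ : α → Set β, IsModel H G μ ∧ ∀ v : α, φ v ∈ μ v

/-- `H'` is obtained from `H` by a simple edge extension: adding a new vertex joined
by an edge to at most one vertex of `H`, or two new vertices joined by an edge. -/
def IsSimpleEdgeExt {α β : Type*} (H : SimpleGraph α) (H' : SimpleGraph β) : Prop :=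
  ∃ f : α ↪ β,
    ((∃ x : β, x ∉ Set.range f ∧ (∀ y : β, y = x ∨ y ∈ Set.range f) ∧
       ((∀ u v : β, H'.Adj u v ↔ ∃ a b : α, u = f a ∧ v = f b ∧ H.Adj a b) ∨
        (∃ a : α, ∀ u v : β, H'.Adj u v ↔
          ((∃ a' b' : α, u = f a' ∧ v = f b' ∧ H.Adj a' b') ∨
           (u = x ∧ v = f a) ∨ (v = x ∧ u = f a))))) ∨
     (∃ x y : β, x ≠ y ∧ x ∉ Set.range f ∧ y ∉ Set.range f ∧
       (∀ z : β, z = x ∨ z = y ∨ z ∈ Set.range f) ∧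
       (∀ u v : β, H'.Adj u v ↔
         ((∃ a b : α, u = f a ∧ v = f b ∧ H.Adj a b) ∨
          (u = x ∧ v = y) ∨ (u = y ∧ v = x)))))

/-- `J` is a `k`-edge extension of `H`: obtained by a sequence of at most `k`
simple edge extensions (up to isomorphism). -/
def IsKEdgeExt {α β : Type*} (k : ℕ) (H : SimpleGraph α) (J : SimpleGraph β) : Prop :=
  ∃ j : ℕ, j ≤ k ∧ ∃ c : ℕ → (Σ n : ℕ, SimpleGraph (Fin n)),
    Nonempty (H ≃g (c 0).2) ∧ Nonempty (J ≃g (c j).2) ∧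
    ∀ i : ℕ, i < j → IsSimpleEdgeExt (c i).2 (c (i + 1)).2

/-- `G` is `(H + k)`-linked: `G` is `J`-linked for every `k`-edge extension `J` of `H`. -/
def IsPlusKLinked {α β : Type*} (H : SimpleGraph α) (k : ℕ) (G : SimpleGraph β) : Prop :=
  ∀ (m : ℕ) (J : SimpleGraph (Fin m)), IsKEdgeExt k H J → IsLinked J G

-- The connectivity of `G`: the minimum order of a separation, except for complete
-- graphs, where it is the number of vertices minus one.
open scoped Classical in
noncomputable def connectivity {V : Type*} (G : SimpleGraph V) : ℕ :=
  if ∀ u v : V, u ≠ v → G.Adj u v then Nat.card V - 1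
  else sInf {k : ℕ | ∃ A B : Set V, IsSeparation G A B ∧ (A ∩ B).ncard = k}

section BCM
open Classical

/-- Number of neighbours of `v` in `X`. -/
noncomputable def dn {W : Type} (G : SimpleGraph W) (X : Finset W) (v : W) : ℕ :=
  (X.filter (fun w => G.Adj v w)).card

/-- `S` is a disjoint union of vertex sets of copies of `K_{t,t}`. -/
inductive Tiled {W : Type} (G : SimpleGraph W) (t : ℕ) : Finset W → Prop
  | nil : Tiled G t ∅
  | cons (S A B : Finset W) : Tiled G t S → Disjoint S (A ∪ B) → A.card = t → B.card = t →
      (∀ a ∈ A, ∀ b ∈ B, G.Adj a b) → Tiled G t (S ∪ (A ∪ B))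

lemma complete_disj {W : Type} {G : SimpleGraph W} {A B : Finset W}
    (h : ∀ a ∈ A, ∀ b ∈ B, G.Adj a b) : Disjoint A B := by
  rw [Finset.disjoint_left]
  intro a ha hb
  exact G.loopless.irrefl a (h a ha a hb)

lemma tiled_union {W : Type} {G : SimpleGraph W} {t : ℕ} {S S' : Finset W}
    (h : Tiled G t S) (h' : Tiled G t S') (hd : Disjoint S S') : Tiled G t (S ∪ S') := by
  induction h' with
  | nil => simpa using h
  | cons S' A B hS' hdis hA hB hAB ih =>
    rw [← Finset.union_assoc]
    rw [Finset.disjoint_union_right] at hd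
    refine Tiled.cons _ A B (ih hd.1) ?_ hA hB hAB
    rw [Finset.disjoint_union_left]
    exact ⟨hd.2, hdis⟩

lemma tiled_complete {W : Type} {G : SimpleGraph W} {t : ℕ} (q : ℕ) :
    ∀ {A B : Finset W}, A.card = q * t → B.card = q * t →
    (∀ a ∈ A, ∀ b ∈ B, G.Adj a b) → Tiled G t (A ∪ B) := by
  induction q with
  | zero =>
    intro A B hA hB _
    simp at hA hB
    subst hA hB
    simpa using Tiled.nil
  | succ q ih =>
    intro A B hA hB hAB
    obtain ⟨A', hA', hA'c⟩ := Finset.exists_subset_card_eq (s := A) (n := t) (by rw [hA]; nlinarith)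
    obtain ⟨B', hB', hB'c⟩ := Finset.exists_subset_card_eq (s := B) (n := t) (by rw [hB]; nlinarith)
    have h1 : Tiled G t ((A \ A') ∪ (B \ B')) := by
      apply ih
      · rw [Finset.card_sdiff_of_subset hA', hA, hA'c, add_mul]; simp
      · rw [Finset.card_sdiff_of_subset hB', hB, hB'c, add_mul]; simp
      · intro a ha b hb
        exact hAB a (Finset.mem_sdiff.1 ha).1 b (Finset.mem_sdiff.1 hb).1
    have hd := complete_disj hAB
    have h2 := Tiled.cons _ A' B' h1 (by
      rw [Finset.disjoint_left] at hd ⊢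
      intro x hx hx'
      simp only [Finset.mem_union, Finset.mem_sdiff] at hx hx'
      have := @hA' x
      have := @hB' x
      have := @hd x
      tauto) hA'c hB'c (fun a ha b hb => hAB a (hA' ha) b (hB' hb))
    have : ((A \ A') ∪ (B \ B')) ∪ (A' ∪ B') = A ∪ B := by
      ext x
      simp only [Finset.mem_union, Finset.mem_sdiff]
      have := @hA' x
      have := @hB' x
      tauto
    rwa [this] at h2

lemma tiled_split {W : Type} {G : SimpleGraph W} {t : ℕ} (q : ℕ) {S : Finset W}
    (h : Tiled G (q * t) S) : Tiled G t S := by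
  induction h with
  | nil => exact Tiled.nil
  | cons S A B hS hdis hA hB hAB ih => exact tiled_union ih (tiled_complete q hA hB hAB) hdis

lemma dn_mono {W : Type} (G : SimpleGraph W) {X Y : Finset W} (h : X ⊆ Y) (v : W) :
    dn G X v ≤ dn G Y v := Finset.card_le_card (Finset.filter_subset_filter _ h)

lemma dn_le {W : Type} (G : SimpleGraph W) (X : Finset W) (v : W) :
    dn G X v ≤ X.card := Finset.card_filter_le _ _

lemma dn_union {W : Type} (G : SimpleGraph W) {X Y : Finset W} (h : Disjoint X Y) (v : W) :
    dn G (X ∪ Y) v = dn G X v + dn G Y v := by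
  unfold dn
  rw [Finset.filter_union, Finset.card_union_of_disjoint]
  exact Finset.disjoint_filter_filter h

lemma dn_sum_comm {W : Type} (G : SimpleGraph W) (X Y : Finset W) :
    ∑ v ∈ X, dn G Y v = ∑ v ∈ Y, dn G X v := by
  unfold dn
  simp_rw [Finset.card_filter]
  rw [Finset.sum_comm]
  simp_rw [G.adj_comm]

lemma pig {W : Type} (G : SimpleGraph W) (R Y : Finset W) (t m : ℕ)
    (hY : ∀ y ∈ Y, t ≤ dn G R y) (h : 2 ^ R.card * m ≤ Y.card) (hm : 0 < m) :
    ∃ A ⊆ R, A.card = t ∧ ∃ Y' ⊆ Y, Y'.card = m ∧ ∀ a ∈ A, ∀ b ∈ Y', G.Adj a b := by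
  have h1 : ∀ y ∈ Y, ∃ A ⊆ R, A.card = t ∧ ∀ a ∈ A, G.Adj a y := by
    intro y hy
    obtain ⟨A, hA, hAc⟩ := Finset.exists_subset_card_eq (hY y hy)
    refine ⟨A, fun a ha => (Finset.mem_filter.1 (hA ha)).1, hAc, fun a ha => ?_⟩
    exact ((Finset.mem_filter.1 (hA ha)).2).symm
  choose! f hf using h1
  obtain ⟨A, hA, hAf⟩ := Finset.exists_le_card_fiber_of_mul_le_card_of_maps_to
    (s := Y) (t := R.powerset) (f := f) (n := m) (fun y hy => Finset.mem_powerset.2 (hf y hy).1)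
    ⟨∅, by simp⟩ (by rw [Finset.card_powerset]; exact h)
  obtain ⟨Y', hY', hY'c⟩ := Finset.exists_subset_card_eq hAf
  have hY2 : ∀ y ∈ Y', y ∈ Y ∧ f y = A := fun y hy => Finset.mem_filter.1 (hY' hy)
  obtain ⟨y, hy⟩ : Y'.Nonempty := by rw [← Finset.card_pos]; omega
  refine ⟨A, Finset.mem_powerset.1 hA, ?_, Y', fun y hy => (hY2 y hy).1, hY'c, ?_⟩
  · rw [← (hY2 y hy).2]; exact (hf y (hY2 y hy).1).2.1
  · intro a ha b hb
    have := (hf b (hY2 b hb).1).2.2 a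
    rw [(hY2 b hb).2] at this
    exact this ha

lemma kst (ε C : ℝ) (hε : 0 < ε) (hC : 0 < C) (t : ℕ) (ht : 0 < t) : ∃ M : ℕ, 0 < M ∧ ∀ n : ℕ, M ≤ n →
    ∀ {W : Type} (G : SimpleGraph W) (X : Finset W), (X.card : ℝ) ≤ C * n →
    ε * n ^ 2 ≤ ∑ v ∈ X, (dn G X v : ℝ) →
    ∃ A ⊆ X, ∃ B ⊆ X, A.card = t ∧ B.card = t ∧ ∀ a ∈ A, ∀ b ∈ B, G.Adj a b := by
  obtain ⟨r, hr⟩ := exists_nat_ge (4 * t * C ^ 2 / ε)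
  obtain ⟨M, hM⟩ := exists_nat_ge ((r + 2 ^ r * t) * (4 * C / ε) : ℝ)
  refine ⟨M + 1, by omega, ?_⟩
  intro n hn W G X hX hE
  have hn' : ((M : ℝ) + 1) ≤ n := by exact_mod_cast hn
  have hnpos : (0 : ℝ) < n := by have : (0:ℝ) ≤ M := by positivity
                                 linarith
  have hrpos : (0 : ℝ) < r := lt_of_lt_of_le (by positivity) hr
  have hbig : (r + 2 ^ r * t : ℝ) ≤ ε / (4 * C) * n := by
    have : (r + 2 ^ r * t) * (4 * C / ε) ≤ (n : ℝ) := by linarith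
    calc (r + 2 ^ r * t : ℝ) = ε / (4 * C) * ((r + 2 ^ r * t) * (4 * C / ε)) := by field_simp
      _ ≤ ε / (4 * C) * n := by gcongr
  -- high degree vertices
  set Hi := X.filter (fun v => ε / (2 * C) * n ≤ (dn G X v : ℝ)) with hHi
  have hHic : (r : ℝ) ≤ Hi.card := by
    have h1 : ∑ v ∈ X, (dn G X v : ℝ) ≤ ∑ v ∈ X, ((if v ∈ Hi then (C * n) else 0) + ε / (2 * C) * n) := by
      apply Finset.sum_le_sum
      intro v hv
      by_cases h : v ∈ Hi
      · simp only [h, if_true]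
        have : (dn G X v : ℝ) ≤ X.card := by exact_mod_cast dn_le G X v
        have : 0 ≤ ε / (2 * C) * n := by positivity
        linarith
      · simp only [h, if_false]
        simp only [hHi, Finset.mem_filter, hv, true_and, not_le] at h
        linarith
    rw [Finset.sum_add_distrib, ← Finset.sum_filter, Finset.sum_const, Finset.sum_const] at h1
    have h2 : X.filter (fun v => v ∈ Hi) = Hi := by
      rw [Finset.filter_mem_eq_inter]; exact Finset.inter_eq_right.2 (Finset.filter_subset _ _)
    rw [h2] at h1
    simp only [nsmul_eq_mul] at h1
    have h3 : (X.card : ℝ) * (ε / (2 * C) * n) ≤ C * n * (ε / (2 * C) * n) := by gcongr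
    have h4 : C * n * (ε / (2 * C) * n) = ε * n ^ 2 / 2 := by field_simp
    have h5 : ε * n ^ 2 / 2 ≤ Hi.card * (C * n) := by linarith
    have h6 : ε / (2 * C) * n ≤ Hi.card := by
      rw [← sub_nonneg] at h5 ⊢
      have : (Hi.card : ℝ) - ε / (2 * C) * n = (Hi.card * (C * n) - ε * n ^ 2 / 2) / (C * n) := by
        field_simp
      rw [this]; positivity
    have h7 : ε / (4 * C) * n ≤ ε / (2 * C) * n := by gcongr; norm_num
    have : (0:ℝ) ≤ 2 ^ r * t := by positivity
    linarith
  obtain ⟨R, hR, hRc⟩ := Finset.exists_subset_card_eq (s := Hi) (n := r) (by exact_mod_cast hHic)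
  set Y := X.filter (fun v => t ≤ dn G R v) with hY
  have hsum : ∑ v ∈ X, (dn G R v : ℝ) = ∑ v ∈ R, (dn G X v : ℝ) := by exact_mod_cast dn_sum_comm G X R
  have hlow : (r : ℝ) * (ε / (2 * C) * n) ≤ ∑ v ∈ R, (dn G X v : ℝ) := by
    rw [← hRc, ← nsmul_eq_mul]
    apply Finset.card_nsmul_le_sum
    intro v hv
    exact (Finset.mem_filter.1 (hR hv)).2
  have hup : ∑ v ∈ X, (dn G R v : ℝ) ≤ Y.card * r + X.card * t := by
    have h1 : ∑ v ∈ X, (dn G R v : ℝ) ≤ ∑ v ∈ X, ((if v ∈ Y then (r : ℝ) else 0) + t) := by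
      apply Finset.sum_le_sum
      intro v hv
      by_cases h : v ∈ Y
      · simp only [h, if_true]
        have : (dn G R v : ℝ) ≤ r := by rw [← hRc]; exact_mod_cast dn_le G R v
        have : (0 : ℝ) ≤ t := by positivity
        linarith
      · simp only [h, if_false]
        simp only [hY, Finset.mem_filter, hv, true_and, not_le] at h
        have : (dn G R v : ℝ) ≤ t := by exact_mod_cast h.le
        linarith
    rw [Finset.sum_add_distrib, ← Finset.sum_filter, Finset.sum_const, Finset.sum_const] at h1
    have h2 : X.filter (fun v => v ∈ Y) = Y := by
      rw [Finset.filter_mem_eq_inter]; exact Finset.inter_eq_right.2 (Finset.filter_subset _ _)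
    rw [h2] at h1
    simpa only [nsmul_eq_mul] using h1
  have hYc : (2 ^ r * t : ℝ) ≤ Y.card := by
    have h1 : (X.card : ℝ) * t ≤ r * (ε / (4 * C) * n) := by
      have : (4 * t * C ^ 2 / ε) * (ε / (4 * C) * n) ≤ r * (ε / (4 * C) * n) := by gcongr
      have h2 : (4 * t * C ^ 2 / ε) * (ε / (4 * C) * n) = C * n * t := by field_simp
      have : (X.card : ℝ) * t ≤ C * n * t := by gcongr
      linarith
    have h2 : r * (ε / (2 * C) * n) = 2 * (r * (ε / (4 * C) * n)) := by field_simp; norm_num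
    have h3 : r * (ε / (4 * C) * n) ≤ r * Y.card := by linarith
    have h4 := le_of_mul_le_mul_left h3 hrpos
    linarith
  obtain ⟨A, hA, hAc, B, hB, hBc, hAB⟩ := pig G R Y t t
    (fun y hy => (Finset.mem_filter.1 hy).2) (by rw [hRc]; exact_mod_cast hYc) ht
  exact ⟨A, fun a ha => (Finset.mem_filter.1 (hR (hA ha))).1, B,
    fun b hb => (Finset.mem_filter.1 (hB hb)).1, hAc, hBc, hAB⟩

end BCM

section BCM
open Classical

lemma aug_combine {W : Type} (G : SimpleGraph W) (t : ℕ) (A A' B B' L L1 Y2 : Finset W)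
    (hdAB : Disjoint A B) (hA' : A' ⊆ A) (hB' : B' ⊆ B) (hL1 : L1 ⊆ Y2)
    (hY2L : ∀ y ∈ Y2, y ∈ L) (hdL' : ∀ x, x ∈ L → x ∉ A ∧ x ∉ B)
    (hA'c : A'.card = t) (hB'c : B'.card = t) (hL1c : L1.card = t) (hY2c : Y2.card = 2 * t)
    (T1 : Tiled G t ((A \ A') ∪ (B \ B')))
    (hAY1 : ∀ a ∈ A', ∀ b ∈ Y2, G.Adj a b) (hBY2 : ∀ a ∈ B', ∀ b ∈ Y2, G.Adj a b) :
    Tiled G t ((A ∪ B) ∪ Y2) := by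
  have hd' : ∀ x, x ∈ A → x ∉ B := fun x hx => Finset.disjoint_left.1 hdAB hx
  have e1 : Disjoint ((A \ A') ∪ (B \ B')) (A' ∪ L1) := by
    rw [Finset.disjoint_left]
    grind
  have T2 := Tiled.cons _ A' L1 T1 e1 hA'c hL1c (fun a ha b hb => hAY1 a ha b (hL1 hb))
  have e2 : Disjoint (((A \ A') ∪ (B \ B')) ∪ (A' ∪ L1)) (B' ∪ (Y2 \ L1)) := by
    rw [Finset.disjoint_left]
    grind
  have T3 := Tiled.cons _ B' (Y2 \ L1) T2 e2 hB'c
      (by rw [Finset.card_sdiff_of_subset hL1]; omega)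
      (fun a ha b hb => hBY2 a ha b (Finset.mem_sdiff.1 hb).1)
  have e3 : (A ∪ B) ∪ Y2 = (((A \ A') ∪ (B \ B')) ∪ (A' ∪ L1)) ∪ (B' ∪ (Y2 \ L1)) := by
    ext x
    grind
  rw [e3]
  exact T3

lemma aug_tile {W : Type} (G : SimpleGraph W) (t Q : ℕ) (ht : 0 < t) (hQ : 0 < Q)
    (A B L X : Finset W) (g : ℝ) (hA : A.card = Q * t) (hB : B.card = Q * t)
    (hAB : ∀ a ∈ A, ∀ b ∈ B, G.Adj a b) (hdL : Disjoint (A ∪ B) L)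
    (hbig : (2 ^ (Q * t) * 2 ^ (Q * t) * (2 * t) : ℝ) + (L ∩ X).card ≤ (g - 1 / (2 * Q)) * L.card)
    (hE : (1 / 2 + g) * (2 * (Q * t)) * L.card < ∑ v ∈ L, (dn G (A ∪ B) v : ℝ)) :
    ∃ L1 ⊆ L \ X, L1.card = 2 * t ∧ Tiled G t ((A ∪ B) ∪ L1) := by
  have hdAB := complete_disj hAB
  set Y := L.filter (fun v => t ≤ dn G A v ∧ t ≤ dn G B v) with hY
  have hQt : (0 : ℝ) < Q * t := by positivity
  have hup : ∑ v ∈ L, (dn G (A ∪ B) v : ℝ) ≤ Y.card * (2 * (Q * t)) + L.card * (Q * t + t) := by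
    have h1 : ∑ v ∈ L, (dn G (A ∪ B) v : ℝ) ≤
        ∑ v ∈ L, ((if v ∈ Y then (2 * (Q * t) : ℝ) else 0) + (Q * t + t)) := by
      apply Finset.sum_le_sum
      intro v hv
      rw [dn_union G hdAB]
      have hA' : dn G A v ≤ Q * t := by rw [← hA]; exact dn_le G A v
      have hB' : dn G B v ≤ Q * t := by rw [← hB]; exact dn_le G B v
      by_cases h : v ∈ Y
      · simp only [h, if_true]
        have : ((dn G A v + dn G B v : ℕ) : ℝ) ≤ ((Q * t + Q * t : ℕ) : ℝ) := by
          exact_mod_cast add_le_add hA' hB'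
        push_cast at this ⊢
        nlinarith [(Nat.cast_nonneg t : (0:ℝ) ≤ t)]
      · simp only [h, if_false]
        simp only [hY, Finset.mem_filter, hv, true_and, not_and_or, not_le] at h
        have : dn G A v + dn G B v ≤ Q * t + t := by omega
        have : ((dn G A v + dn G B v : ℕ) : ℝ) ≤ ((Q * t + t : ℕ) : ℝ) := by exact_mod_cast this
        push_cast at this ⊢
        linarith
    rw [Finset.sum_add_distrib, ← Finset.sum_filter, Finset.sum_const, Finset.sum_const] at h1
    have h2 : L.filter (fun v => v ∈ Y) = Y := by
      rw [Finset.filter_mem_eq_inter]; exact Finset.inter_eq_right.2 (Finset.filter_subset _ _)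
    rw [h2] at h1
    simpa only [nsmul_eq_mul] using h1
  have hYc : (g - 1 / (2 * Q)) * L.card ≤ Y.card := by
    have h1 : (g - 1 / (2 * Q)) * L.card * (2 * (Q * t)) ≤ Y.card * (2 * (Q * t)) := by
      have : (g - 1 / (2 * Q)) * L.card * (2 * (Q * t)) = (1 / 2 + g) * (2 * (Q * t)) * L.card
        - L.card * (Q * t + t) := by field_simp; ring
      linarith
    exact le_of_mul_le_mul_right h1 (by positivity)
  have hYX : 2 ^ (Q * t) * (2 ^ (Q * t) * (2 * t)) ≤ (Y \ X).card := by
    have h1 : Y.card ≤ (Y \ X).card + (L ∩ X).card := by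
      have : Y ⊆ (Y \ X) ∪ (L ∩ X) := by
        intro y hy
        have : y ∈ L := (Finset.mem_filter.1 hy).1
        by_cases hx : y ∈ X
        · exact Finset.mem_union_right _ (Finset.mem_inter.2 ⟨this, hx⟩)
        · exact Finset.mem_union_left _ (Finset.mem_sdiff.2 ⟨hy, hx⟩)
      exact (Finset.card_le_card this).trans (Finset.card_union_le _ _)
    have h2 : (Y.card : ℝ) ≤ (Y \ X).card + (L ∩ X).card := by exact_mod_cast h1
    have h3 : (2 ^ (Q * t) * (2 ^ (Q * t) * (2 * t)) : ℝ) ≤ (Y \ X).card := by linarith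
    exact_mod_cast h3
  have hYm : ∀ y ∈ Y \ X, y ∈ L ∧ y ∉ X ∧ t ≤ dn G A y ∧ t ≤ dn G B y := by
    intro y hy
    rw [Finset.mem_sdiff, hY, Finset.mem_filter] at hy
    tauto
  obtain ⟨A', hA', hA'c, Y1, hY1, hY1c, hAY1⟩ := pig G A (Y \ X) t (2 ^ (Q * t) * (2 * t))
    (fun y hy => (hYm y hy).2.2.1) (by rw [hA]; exact hYX) (by positivity)
  obtain ⟨B', hB', hB'c, Y2, hY2, hY2c, hBY2⟩ := pig G B Y1 t (2 * t)
    (fun y hy => (hYm y (hY1 hy)).2.2.2) (by rw [hB, hY1c]) (by positivity)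
  obtain ⟨L1, hL1, hL1c⟩ := Finset.exists_subset_card_eq (s := Y2) (n := t) (by omega)
  have hY2L : ∀ y ∈ Y2, y ∈ L ∧ y ∉ X := fun y hy => ⟨(hYm y (hY1 (hY2 hy))).1, (hYm y (hY1 (hY2 hy))).2.1⟩
  refine ⟨Y2, fun y hy => Finset.mem_sdiff.2 (hY2L y hy), hY2c, ?_⟩
  obtain ⟨q, rfl⟩ : ∃ q, Q = q + 1 := ⟨Q - 1, by omega⟩
  have T1 : Tiled G t ((A \ A') ∪ (B \ B')) := by
    apply tiled_complete q
    · rw [Finset.card_sdiff_of_subset hA', hA, hA'c, add_mul]; simp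
    · rw [Finset.card_sdiff_of_subset hB', hB, hB'c, add_mul]; simp
    · intro a ha b hb
      exact hAB a (Finset.mem_sdiff.1 ha).1 b (Finset.mem_sdiff.1 hb).1
  have hdL' : ∀ x, x ∈ L → x ∉ A ∧ x ∉ B := by
    intro x hx
    have := Finset.disjoint_right.1 hdL hx
    simpa using this
  exact aug_combine G t A A' B B' L L1 Y2 hdAB hA' hB' hL1 (fun y hy => (hY2L y hy).1) hdL'
    hA'c hB'c hL1c hY2c T1 (fun a ha b hb => hAY1 a ha b (hY2 hb)) hBY2

lemma aug {W : Type} (G : SimpleGraph W) (t Q : ℕ) (ht : 0 < t) (hQ : 0 < Q)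
    (L S : Finset W) (g : ℝ) (hS : Tiled G (Q * t) S) (hd : Disjoint S L)
    (hbig : (2 ^ (Q * t) * 2 ^ (Q * t) * (2 * t) : ℝ) + S.card / Q ≤ (g - 1 / (2 * Q)) * L.card) :
    ∃ S', Tiled G t S' ∧ S ⊆ S' ∧ S' ⊆ S ∪ L ∧ Q * S'.card ≤ (Q + 1) * S.card ∧
      ∑ v ∈ L, (dn G S v : ℝ) ≤ (1 / 2 + g) * S.card * L.card +
        Q * ((S'.card : ℝ) - S.card) * L.card := by
  induction hS with
  | nil => exact ⟨∅, Tiled.nil, by simp, by simp, by simp, by simp [dn]⟩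
  | cons S A B hS hdis hA hB hAB ih =>
    rw [Finset.disjoint_union_left] at hd
    have hdAB := complete_disj hAB
    have hc : (S ∪ (A ∪ B)).card = S.card + 2 * (Q * t) := by
      rw [Finset.card_union_of_disjoint hdis, Finset.card_union_of_disjoint hdAB]; omega
    have hQ' : (0 : ℝ) < Q := by positivity
    obtain ⟨S', hT, hSS', hS'L, hcard, hsum⟩ := ih hd.1 (by
      refine le_trans ?_ hbig
      have : S.card ≤ (S ∪ (A ∪ B)).card := by omega
      gcongr)
    have hmem : ∀ x, x ∈ S' → x ∉ A ∪ B := by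
      intro x hx hx'
      rcases Finset.mem_union.1 (hS'L hx) with h | h
      · exact Finset.disjoint_left.1 hdis h hx'
      · exact Finset.disjoint_left.1 hd.2 hx' h
    have hdS' : Disjoint S' (A ∪ B) := Finset.disjoint_left.2 hmem
    have hsplit : ∑ v ∈ L, (dn G (S ∪ (A ∪ B)) v : ℝ) =
        ∑ v ∈ L, (dn G S v : ℝ) + ∑ v ∈ L, (dn G (A ∪ B) v : ℝ) := by
      rw [← Finset.sum_add_distrib]
      apply Finset.sum_congr rfl
      intro v _
      rw [dn_union G hdis]; push_cast; ring
    have hABc : (A ∪ B).card = 2 * (Q * t) := by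
      rw [Finset.card_union_of_disjoint hdAB]; omega
    by_cases hE : (1 / 2 + g) * (2 * (Q * t)) * L.card < ∑ v ∈ L, (dn G (A ∪ B) v : ℝ)
    · have hLS : ((L ∩ S').card : ℝ) ≤ (S ∪ (A ∪ B)).card / Q := by
        have h1 : S.card + (L ∩ S').card ≤ S'.card := by
          rw [← Finset.card_union_of_disjoint]
          · apply Finset.card_le_card
            intro x hx
            rcases Finset.mem_union.1 hx with h | h
            · exact hSS' h
            · exact (Finset.mem_inter.1 h).2
          · exact hd.1.mono_right Finset.inter_subset_left
        have h2 : Q * (L ∩ S').card ≤ S.card := by nlinarith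
        rw [le_div_iff₀ hQ', hc]
        have : (L ∩ S').card * Q ≤ S.card + 2 * (Q * t) := by nlinarith
        exact_mod_cast this
      obtain ⟨L1, hL1, hL1c, hT1⟩ := aug_tile G t Q ht hQ A B L S' g hA hB hAB hd.2
        (by linarith) hE
      have hdd : Disjoint S' ((A ∪ B) ∪ L1) := by
        rw [Finset.disjoint_union_right]
        refine ⟨hdS', Finset.disjoint_left.2 fun x hx hx' => (Finset.mem_sdiff.1 (hL1 hx')).2 hx⟩
      have hdd2 : Disjoint (A ∪ B) L1 :=
        hd.2.mono_right fun x hx => (Finset.mem_sdiff.1 (hL1 hx)).1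
      have hcc : (S' ∪ ((A ∪ B) ∪ L1)).card = S'.card + 2 * (Q * t) + 2 * t := by
        rw [Finset.card_union_of_disjoint hdd, Finset.card_union_of_disjoint hdd2]; omega
      refine ⟨S' ∪ ((A ∪ B) ∪ L1), tiled_union hT hT1 hdd, ?_, ?_, ?_, ?_⟩
      · intro x hx
        have := @hSS' x
        simp only [Finset.mem_union] at hx ⊢
        tauto
      · intro x hx
        have h1 := @hS'L x
        have := fun h => (Finset.mem_sdiff.1 (@hL1 x h)).1
        simp only [Finset.mem_union] at hx h1 ⊢
        tauto
      · rw [hcc, hc]; nlinarith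
      · rw [hsplit, hcc, hc]
        have h1 : ∑ v ∈ L, (dn G (A ∪ B) v : ℝ) ≤ L.card * (2 * (Q * t)) := by
          rw [← nsmul_eq_mul]
          apply Finset.sum_le_card_nsmul
          intro v _
          have := dn_le G (A ∪ B) v
          rw [hABc] at this
          exact_mod_cast this
        have hg : 0 ≤ (1 / 2 + g) * (2 * (Q * t)) * L.card := by
          have h3 : 0 ≤ (g - 1 / (2 * Q)) * L.card := le_trans (by positivity) hbig
          have h4 : 0 ≤ 1 / (2 * (Q : ℝ)) * L.card := by positivity
          have h5 : 0 ≤ (1 / 2 + g) * L.card := by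
            have : (0:ℝ) ≤ L.card := by positivity
            nlinarith
          have := mul_nonneg h5 (by positivity : (0:ℝ) ≤ 2 * (Q * t))
          linarith
        push_cast
        linarith
    · rw [not_lt] at hE
      have hT1 := tiled_complete (G := G) (t := t) Q hA hB hAB
      have hcc : (S' ∪ (A ∪ B)).card = S'.card + 2 * (Q * t) := by
        rw [Finset.card_union_of_disjoint hdS']; omega
      refine ⟨S' ∪ (A ∪ B), tiled_union hT hT1 hdS', ?_, ?_, ?_, ?_⟩
      · exact Finset.union_subset_union_left hSS'
      · intro x hx
        have h1 := @hS'L x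
        simp only [Finset.mem_union] at hx h1 ⊢
        tauto
      · rw [hcc, hc]; nlinarith
      · rw [hsplit, hcc, hc]
        push_cast
        linarith

/-- maximal tiled subset -/
lemma exists_max_tiled {W : Type} (G : SimpleGraph W) (t : ℕ) (ht : 0 < t) (X : Finset W) :
    ∃ S ⊆ X, Tiled G t S ∧ ¬ ∃ A ⊆ X \ S, ∃ B ⊆ X \ S, A.card = t ∧ B.card = t ∧
      ∀ a ∈ A, ∀ b ∈ B, G.Adj a b := by
  obtain ⟨S, hS, hmax⟩ := Finset.exists_max_image (X.powerset.filter (fun S => Tiled G t S))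
    Finset.card ⟨∅, by simp [Tiled.nil]⟩
  rw [Finset.mem_filter, Finset.mem_powerset] at hS
  refine ⟨S, hS.1, hS.2, ?_⟩
  rintro ⟨A, hA, B, hB, hAc, hBc, hAB⟩
  have hd : Disjoint S (A ∪ B) := by
    rw [Finset.disjoint_left]
    intro x hx hx'
    rcases Finset.mem_union.1 hx' with h | h
    · exact (Finset.mem_sdiff.1 (hA h)).2 hx
    · exact (Finset.mem_sdiff.1 (hB h)).2 hx
  have := hmax (S ∪ (A ∪ B)) (by
    rw [Finset.mem_filter, Finset.mem_powerset]
    refine ⟨?_, Tiled.cons S A B hS.2 hd hAc hBc hAB⟩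
    apply Finset.union_subset hS.1
    apply Finset.union_subset
    · exact hA.trans Finset.sdiff_subset
    · exact hB.trans Finset.sdiff_subset)
  rw [Finset.card_union_of_disjoint hd, Finset.card_union_of_disjoint (complete_disj hAB)] at this
  omega

end BCM

section BCM
open Classical

set_option maxHeartbeats 1000000 in
lemma dense_step (γ C : ℝ) (hγ : 0 < γ) (hγ1 : γ ≤ 1) (hC : 0 < C) (Q : ℕ)
    (hQ : 1000 / γ ^ 2 ≤ Q) (j : ℕ) :
    ∀ t : ℕ, 0 < t → ∃ M : ℕ, ∀ n : ℕ, M ≤ n → ∀ (W : Type) (G : SimpleGraph W) (U : Finset W),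
      (U.card : ℝ) ≤ C * n → (1 + γ) * n ≤ U.card →
      (∀ v ∈ U, (1 + γ) * n / 2 ≤ (dn G U v : ℝ)) →
      ∃ S ⊆ U, Tiled G t S ∧
        ((1 + γ / 2) * n ≤ S.card ∨ j * (γ / (16 * Q)) * n ≤ S.card) := by
  have hQpos : (0 : ℝ) < Q := lt_of_lt_of_le (by positivity) hQ
  have hQN : 0 < Q := by exact_mod_cast hQpos
  have hQinv : 1 / (Q : ℝ) ≤ γ ^ 2 / 1000 := by
    rw [div_le_div_iff₀ hQpos (by norm_num)]
    rw [div_le_iff₀ (by positivity)] at hQ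
    linarith
  have hγ2 : γ ^ 2 ≤ γ := by nlinarith
  induction j with
  | zero => exact fun t ht => ⟨0, fun n _ W G U _ _ _ => ⟨∅, by simp, Tiled.nil, Or.inr (by simp)⟩⟩
  | succ j ih =>
    intro t ht
    obtain ⟨M1, hM1⟩ := ih (Q * t) (by positivity)
    obtain ⟨M2, hM2pos, hM2⟩ := kst (γ / 16 * (γ / 4)) C (by positivity) hC t ht
    obtain ⟨M3, hM3⟩ := exists_nat_ge ((2 ^ (Q * t) * 2 ^ (Q * t) * (2 * t) : ℝ) * 100 / γ ^ 2)
    refine ⟨M1 + M2 + M3, ?_⟩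
    intro n hn W G U hU hU2 hdeg
    have hnpos : (0 : ℝ) < n := by exact_mod_cast (by omega : 0 < n)
    obtain ⟨S, hSU, hST, hSc⟩ := hM1 n (by omega) W G U hU hU2 hdeg
    by_cases hbigS : (1 + γ / 2) * n ≤ S.card
    · exact ⟨S, hSU, tiled_split Q hST, Or.inl hbigS⟩
    replace hSc := hSc.resolve_left hbigS
    rw [not_le] at hbigS
    obtain ⟨S2, hS2U, hS2T, hS2max⟩ := exists_max_tiled G t ht (U \ S)
    have hdSS2 : Disjoint S S2 := Finset.disjoint_right.2 fun x hx => (Finset.mem_sdiff.1 (hS2U hx)).2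
    have hS2U' : S2 ⊆ U := hS2U.trans Finset.sdiff_subset
    set δ := γ / (16 * Q) with hδ
    have hδpos : 0 < δ := by positivity
    have hδ' : δ = γ / 16 * (1 / Q) := by rw [hδ]; field_simp
    have hδle : δ ≤ γ / 16000 := by rw [hδ']; nlinarith
    by_cases hS2c : δ * n ≤ S2.card
    · refine ⟨S ∪ S2, Finset.union_subset hSU hS2U', tiled_union (tiled_split Q hST) hS2T hdSS2,
        Or.inr ?_⟩
      rw [Finset.card_union_of_disjoint hdSS2]
      push_cast
      linarith
    rw [not_le] at hS2c
    set L := (U \ S) \ S2 with hL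
    have hLU : L ⊆ U := Finset.sdiff_subset.trans Finset.sdiff_subset
    have hUeq : U = S ∪ (S2 ∪ L) := by
      ext x
      have := @hSU x
      have := @hS2U' x
      simp only [hL, Finset.mem_union, Finset.mem_sdiff]
      tauto
    have hd2 : Disjoint S2 L := Finset.disjoint_sdiff
    have hdSL : Disjoint S L := by
      rw [Finset.disjoint_left]
      intro x hx hx'
      simp only [hL, Finset.mem_sdiff] at hx'
      tauto
    have hd1 : Disjoint S (S2 ∪ L) := Finset.disjoint_union_right.2 ⟨hdSS2, hdSL⟩
    have hUc : (U.card : ℝ) = S.card + (S2.card + L.card) := by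
      have : U.card = S.card + (S2.card + L.card) := by
        conv_lhs => rw [hUeq]
        rw [Finset.card_union_of_disjoint hd1, Finset.card_union_of_disjoint hd2]
      exact_mod_cast this
    have hLc : γ / 4 * n ≤ L.card := by nlinarith
    have hLpos : (0 : ℝ) < L.card := lt_of_lt_of_le (by positivity) hLc
    have hLL : ∑ v ∈ L, (dn G L v : ℝ) ≤ γ / 16 * n * L.card := by
      by_contra hcon
      rw [not_le] at hcon
      apply hS2max
      apply hM2 n (by omega) G L
      · have : (L.card : ℝ) ≤ U.card := by exact_mod_cast Finset.card_le_card hLU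
        linarith
      · refine le_trans ?_ hcon.le
        have : γ / 16 * n * (γ / 4 * n) ≤ γ / 16 * n * L.card := by gcongr
        linarith
    have hsum : ∑ v ∈ L, (dn G U v : ℝ) = ∑ v ∈ L, (dn G S v : ℝ) + ∑ v ∈ L, (dn G S2 v : ℝ) +
        ∑ v ∈ L, (dn G L v : ℝ) := by
      rw [← Finset.sum_add_distrib, ← Finset.sum_add_distrib]
      apply Finset.sum_congr rfl
      intro v _
      conv_lhs => rw [hUeq]
      rw [dn_union G hd1, dn_union G hd2]
      push_cast; ring
    have hlow : L.card * ((1 + γ) * n / 2) ≤ ∑ v ∈ L, (dn G U v : ℝ) := by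
      rw [← nsmul_eq_mul]
      exact Finset.card_nsmul_le_sum _ _ _ fun v hv => hdeg v (hLU hv)
    have hS2sum : ∑ v ∈ L, (dn G S2 v : ℝ) ≤ L.card * (δ * n) := by
      rw [← nsmul_eq_mul]
      apply Finset.sum_le_card_nsmul
      intro v _
      have : (dn G S2 v : ℝ) ≤ S2.card := by exact_mod_cast dn_le G S2 v
      linarith
    obtain ⟨S', hT', hSS', hS'L, -, haug⟩ := aug G t Q ht hQN L S (γ / 16) hST hdSL (by
      have hn3 : (M3 : ℝ) ≤ n := by exact_mod_cast (by omega : M3 ≤ n)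
      have h1 : (2 ^ (Q * t) * 2 ^ (Q * t) * (2 * t) : ℝ) * 100 / γ ^ 2 ≤ n := hM3.trans hn3
      rw [div_le_iff₀ (by positivity)] at h1
      have h2 : (S.card : ℝ) / Q ≤ 3 / 2 * n * (γ ^ 2 / 1000) := by
        rw [div_eq_mul_one_div]
        have : (S.card : ℝ) ≤ 3 / 2 * n := by nlinarith
        gcongr
      have h3 : 1 / (2 * (Q : ℝ)) ≤ γ / 2000 := by
        have : 1 / (2 * (Q : ℝ)) = 1 / 2 * (1 / Q) := by field_simp
        rw [this]; linarith
      have h4 : (γ / 16 - γ / 2000) * (γ / 4 * n) ≤ (γ / 16 - 1 / (2 * Q)) * L.card := by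
        apply mul_le_mul (by linarith) hLc (by positivity) (by linarith)
      have h5 : 0 < γ ^ 2 * n := by positivity
      nlinarith)
    refine ⟨S', ?_, hT', Or.inr ?_⟩
    · refine hS'L.trans (Finset.union_subset hSU hLU)
    have hkey : L.card * ((1 + γ) * n / 2 - δ * n - γ / 16 * n) ≤
        L.card * ((1 / 2 + γ / 16) * S.card + Q * ((S'.card : ℝ) - S.card)) := by
      linarith
    have hkey2 := le_of_mul_le_mul_left hkey hLpos
    have h6 : (1 / 2 + γ / 16) * (S.card : ℝ) ≤ (1 / 2 + γ / 16) * ((1 + γ / 2) * n) := by gcongr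
    have h7 : γ / 16 * n ≤ Q * ((S'.card : ℝ) - S.card) := by
      have h8 : γ * (γ * n) ≤ γ * n := by
        have : 0 < γ * n := by positivity
        nlinarith
      have h9 : δ * n ≤ γ / 16000 * n := by gcongr
      linarith
    have h8 : δ * n ≤ (S'.card : ℝ) - S.card := by
      have : δ * n = γ / 16 * n / Q := by rw [hδ]; field_simp
      rw [this, div_le_iff₀ hQpos]; linarith
    push_cast
    linarith

lemma dense_tiling (γ C : ℝ) (hγ : 0 < γ) (hγ1 : γ ≤ 1) (hC : 0 < C) :
    ∀ t : ℕ, 0 < t → ∃ M : ℕ, ∀ n : ℕ, M ≤ n → ∀ (W : Type) (G : SimpleGraph W) (U : Finset W),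
      (U.card : ℝ) ≤ C * n → (1 + γ) * n ≤ U.card →
      (∀ v ∈ U, (1 + γ) * n / 2 ≤ (dn G U v : ℝ)) →
      ∃ S ⊆ U, Tiled G t S ∧ (1 + γ / 2) * n ≤ S.card := by
  intro t ht
  obtain ⟨Q, hQ⟩ := exists_nat_ge (1000 / γ ^ 2)
  have hQpos : (0 : ℝ) < Q := lt_of_lt_of_le (by positivity) hQ
  obtain ⟨j, hj⟩ := exists_nat_ge ((1 + γ / 2) / (γ / (16 * Q)))
  obtain ⟨M, hM⟩ := dense_step γ C hγ hγ1 hC Q hQ j t ht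
  refine ⟨M, fun n hn W G U h1 h2 h3 => ?_⟩
  obtain ⟨S, hS, hT, h⟩ := hM n hn W G U h1 h2 h3
  refine ⟨S, hS, hT, ?_⟩
  rcases h with h | h
  · exact h
  · rw [div_le_iff₀ (by positivity)] at hj
    refine le_trans ?_ h
    gcongr

end BCM

section BCM
open Classical

lemma fill_tile {α : Type} [Fintype α] (H : SimpleGraph α) (c0 : α → Bool)
    (hc0 : ∀ u v, H.Adj u v → c0 u ≠ c0 v) (s t : ℕ)
    (hs : ∀ v : α, (Finset.univ.filter (fun w => H.Reachable v w)).card ≤ s)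
    (R : Finset α) (hR : ∀ u v, H.Adj u v → u ∈ R → v ∈ R) :
    ∃ F ⊆ R, (∀ u v, H.Adj u v → u ∈ F → v ∈ F) ∧ ∃ c : α → Bool,
      (∀ u ∈ F, ∀ v, H.Adj u v → c u ≠ c v) ∧ (F.filter (fun v => c v = true)).card ≤ t ∧
      (F.filter (fun v => c v = false)).card ≤ t ∧ (F = R ∨ 2 * t ≤ F.card + 3 * s) := by
  let P : Finset α → Prop := fun F => (∀ u v, H.Adj u v → u ∈ F → v ∈ F) ∧ ∃ c : α → Bool,
      (∀ u ∈ F, ∀ v, H.Adj u v → c u ≠ c v) ∧ (F.filter (fun v => c v = true)).card ≤ t ∧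
      (F.filter (fun v => c v = false)).card ≤ t ∧
      (F.filter (fun v => c v = true)).card ≤ (F.filter (fun v => c v = false)).card + s ∧
      (F.filter (fun v => c v = false)).card ≤ (F.filter (fun v => c v = true)).card + s
  obtain ⟨F, hF, hmax⟩ := Finset.exists_max_image (R.powerset.filter P)
    Finset.card ⟨∅, by simp [P]⟩
  rw [Finset.mem_filter, Finset.mem_powerset] at hF
  obtain ⟨hFR, hFc, c, hc, ha, hb, hab, hba⟩ := hF
  refine ⟨F, hFR, hFc, c, hc, ha, hb, ?_⟩
  by_contra hcon
  rw [not_or] at hcon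
  have hFcard : ∀ (F : Finset α) (c : α → Bool), F.card = (F.filter (fun v => c v = true)).card +
      (F.filter (fun v => c v = false)).card := by
    intro F c
    rw [← Finset.card_filter_add_card_filter_not (s := F) (fun v => c v = true)]
    simp
  obtain ⟨v, hvR, hvF⟩ : ∃ v ∈ R, v ∉ F := by
    by_contra h
    push Not at h
    exact hcon.1 (Finset.Subset.antisymm hFR h)
  set D := Finset.univ.filter (fun w => H.Reachable v w) with hD
  have hDs := hs v
  rw [← hD] at hDs
  have hDcl : ∀ u w, H.Adj u w → u ∈ D → w ∈ D := by
    intro u w huw hu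
    simp only [hD, Finset.mem_filter, Finset.mem_univ, true_and] at hu ⊢
    exact hu.trans huw.reachable
  have closed_reach : ∀ X : Finset α, (∀ u v, H.Adj u v → u ∈ X → v ∈ X) →
      ∀ u w, H.Reachable u w → u ∈ X → w ∈ X := by
    intro X hX u w ⟨p⟩
    induction p with
    | nil => exact id
    | cons h _ ih => exact fun hu => ih (hX _ _ h hu)
  have hDR : D ⊆ R := by
    intro w hw
    exact closed_reach R hR v w (by simpa [hD] using hw) hvR
  have hvD : v ∈ D := by simp [hD]
  have hFD : Disjoint F D := by
    rw [Finset.disjoint_left]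
    intro w hw hw'
    apply hvF
    refine closed_reach F hFc w v ?_ hw
    have : H.Reachable v w := by simpa [hD] using hw'
    exact this.symm
  -- extension by a colouring of D
  have hext : ∀ d : α → Bool, (∀ u v, H.Adj u v → d u ≠ d v) →
      (F.filter (fun v => c v = true)).card + (D.filter (fun v => d v = true)).card ≤ t →
      (F.filter (fun v => c v = false)).card + (D.filter (fun v => d v = false)).card ≤ t →
      (F.filter (fun v => c v = true)).card + (D.filter (fun v => d v = true)).card ≤
       (F.filter (fun v => c v = false)).card + (D.filter (fun v => d v = false)).card + s →
      (F.filter (fun v => c v = false)).card + (D.filter (fun v => d v = false)).card ≤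
       (F.filter (fun v => c v = true)).card + (D.filter (fun v => d v = true)).card + s → False := by
    intro d hd h1 h2 h3 h4
    have hcnt : ∀ b : Bool, ((F ∪ D).filter (fun v => (if v ∈ D then d v else c v) = b)).card =
        (F.filter (fun v => c v = b)).card + (D.filter (fun v => d v = b)).card := by
      intro b
      rw [Finset.filter_union, Finset.card_union_of_disjoint (Finset.disjoint_filter_filter hFD)]
      congr 2
      · apply Finset.filter_congr
        intro x hx
        simp [Finset.disjoint_left.1 hFD hx]
      · apply Finset.filter_congr
        intro x hx
        simp [hx]
    have := hmax (F ∪ D) (by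
      rw [Finset.mem_filter, Finset.mem_powerset]
      refine ⟨Finset.union_subset hFR hDR, ?_, fun v => if v ∈ D then d v else c v, ?_, ?_⟩
      · intro u w huw hu
        rcases Finset.mem_union.1 hu with h | h
        · exact Finset.mem_union_left _ (hFc u w huw h)
        · exact Finset.mem_union_right _ (hDcl u w huw h)
      · intro u hu w huw
        rcases Finset.mem_union.1 hu with h | h
        · have hw := hFc u w huw h
          simp only [Finset.disjoint_left.1 hFD hw, Finset.disjoint_left.1 hFD h, if_false]
          exact hc u h w huw
        · have hw := hDcl u w huw h
          simp only [hw, h, if_true]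
          exact hd u w huw
      · simp only [hcnt]
        exact ⟨h1, h2, h3, h4⟩)
    rw [Finset.card_union_of_disjoint hFD] at this
    have : 0 < D.card := Finset.card_pos.2 ⟨v, hvD⟩
    omega
  have e1 := hext c0 hc0
  have e2 := hext (fun v => !(c0 v)) (by intro u v h; have := hc0 u v h; simpa using this)
  simp only [Bool.not_eq_true', Bool.not_eq_false'] at e2
  have f1 := hFcard D c0
  have f2 := hFcard F c
  have g1 := hcon.2
  rcases le_total (F.filter (fun v => c v = true)).card (F.filter (fun v => c v = false)).card
    with h | h <;>
  rcases le_total (D.filter (fun v => c0 v = true)).card (D.filter (fun v => c0 v = false)).card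
    with h' | h'
  · apply e2 <;> omega
  · apply e1 <;> omega
  · apply e1 <;> omega
  · apply e2 <;> omega

lemma exists_inj_map {α W : Type} (w0 : W) (F : Finset α) (A : Finset W) (h : F.card ≤ A.card) :
    ∃ f : α → W, (∀ x ∈ F, f x ∈ A) ∧ ∀ x ∈ F, ∀ y ∈ F, f x = f y → x = y := by
  obtain ⟨e⟩ := Function.Embedding.nonempty_of_card_le (α := F) (β := A) (by simpa using h)
  refine ⟨fun x => if h : x ∈ F then (e ⟨x, h⟩ : W) else w0, ?_, ?_⟩
  · intro x hx
    simp only [hx, dif_pos]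
    exact (e ⟨x, hx⟩).2
  · intro x hx y hy hxy
    simp only [hx, hy, dif_pos] at hxy
    have := e.injective (Subtype.ext hxy)
    simpa using this

lemma pack {α W : Type} [Fintype α] (w0 : W) (H : SimpleGraph α) (c0 : α → Bool)
    (hc0 : ∀ u v, H.Adj u v → c0 u ≠ c0 v) (s t : ℕ)
    (hs : ∀ v : α, (Finset.univ.filter (fun w => H.Reachable v w)).card ≤ s)
    (G : SimpleGraph W) (S : Finset W) (hS : Tiled G t S) :
    ∃ K : Finset α, (∀ u v, H.Adj u v → u ∈ K → v ∈ K) ∧ ∃ f : α → W, (∀ x ∈ K, f x ∈ S) ∧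
      (∀ x ∈ K, ∀ y ∈ K, f x = f y → x = y) ∧ (∀ x ∈ K, ∀ y, H.Adj x y → G.Adj (f x) (f y)) ∧
      (K = Finset.univ ∨ 2 * t * S.card ≤ 2 * t * K.card + 3 * s * S.card) := by
  induction hS with
  | nil => exact ⟨∅, by simp, fun _ => w0, by simp, by simp, by simp, by simp⟩
  | cons S A B hS hdis hA hB hAB ih =>
    obtain ⟨K, hK, f, hfS, hfi, hfa, hcard⟩ := ih
    obtain ⟨F, hFK, hFc, c, hc, hcA, hcB, hFcard⟩ := fill_tile H c0 hc0 s t hs (Finset.univ \ K) (by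
      intro u v huv hu
      simp only [Finset.mem_sdiff, Finset.mem_univ, true_and] at hu ⊢
      exact fun hv => hu (hK v u huv.symm hv))
    obtain ⟨f1, hf1, hf1i⟩ := exists_inj_map w0 _ A (hA ▸ hcA)
    obtain ⟨f2, hf2, hf2i⟩ := exists_inj_map w0 _ B (hB ▸ hcB)
    have hFK' : ∀ x ∈ F, x ∉ K := fun x hx => (Finset.mem_sdiff.1 (hFK hx)).2
    have hdAB := complete_disj hAB
    simp only [Finset.mem_filter, and_imp] at hf1 hf2 hf1i hf2i
    set g : α → W := fun x => if x ∈ K then f x else if c x then f1 x else f2 x with hg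
    have gK : ∀ x ∈ K, g x = f x := fun x hx => by simp [hg, hx]
    have g1 : ∀ x ∈ F, c x = true → g x = f1 x := fun x hx h => by simp [hg, hFK' x hx, h]
    have g2 : ∀ x ∈ F, c x = false → g x = f2 x := fun x hx h => by simp [hg, hFK' x hx, h]
    have gF : ∀ x ∈ F, g x ∈ A ∪ B := by
      intro x hx
      cases h : c x
      · rw [g2 x hx h]; exact Finset.mem_union_right _ (hf2 x hx h)
      · rw [g1 x hx h]; exact Finset.mem_union_left _ (hf1 x hx h)
    refine ⟨K ∪ F, ?_, g, ?_, ?_, ?_, ?_⟩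
    · intro u v huv hu
      rcases Finset.mem_union.1 hu with h | h
      · exact Finset.mem_union_left _ (hK u v huv h)
      · exact Finset.mem_union_right _ (hFc u v huv h)
    · intro x hx
      rcases Finset.mem_union.1 hx with h | h
      · rw [gK x h]; exact Finset.mem_union_left _ (hfS x h)
      · exact Finset.mem_union_right _ (gF x h)
    · intro x hx y hy hxy
      rcases Finset.mem_union.1 hx with h | h <;> rcases Finset.mem_union.1 hy with h' | h'
      · rw [gK x h, gK y h'] at hxy; exact hfi x h y h' hxy
      · exfalso
        have := gF y h'
        rw [← hxy, gK x h] at this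
        exact Finset.disjoint_left.1 hdis (hfS x h) this
      · exfalso
        have := gF x h
        rw [hxy, gK y h'] at this
        exact Finset.disjoint_left.1 hdis (hfS y h') this
      · cases e : c x <;> cases e' : c y
        · rw [g2 x h e, g2 y h' e'] at hxy; exact hf2i x h e y h' e' hxy
        · exfalso
          rw [g2 x h e, g1 y h' e'] at hxy
          have := hf2 x h e
          rw [hxy] at this
          exact Finset.disjoint_left.1 hdAB (hf1 y h' e') this
        · exfalso
          rw [g1 x h e, g2 y h' e'] at hxy
          have := hf1 x h e
          rw [hxy] at this
          exact Finset.disjoint_left.1 hdAB this (hf2 y h' e')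
        · rw [g1 x h e, g1 y h' e'] at hxy; exact hf1i x h e y h' e' hxy
    · intro x hx y hxy
      rcases Finset.mem_union.1 hx with h | h
      · rw [gK x h, gK y (hK x y hxy h)]; exact hfa x h y hxy
      · have h' := hFc x y hxy h
        have hne := hc x h y hxy
        cases e : c x <;> cases e' : c y
        · simp [e, e'] at hne
        · rw [g2 x h e, g1 y h' e']; exact (hAB _ (hf1 y h' e') _ (hf2 x h e)).symm
        · rw [g1 x h e, g2 y h' e']; exact hAB _ (hf1 x h e) _ (hf2 y h' e')
        · simp [e, e'] at hne
    · rcases hcard with h | h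
      · left; rw [h]; simp
      rcases hFcard with h' | h'
      · left; rw [h']; simp
      right
      rw [Finset.card_union_of_disjoint hdis, Finset.card_union_of_disjoint hdAB, hA, hB,
        Finset.card_union_of_disjoint (Finset.disjoint_right.2 hFK')]
      nlinarith

lemma pack_all {α W : Type} [Fintype α] (w0 : W) (H : SimpleGraph α) (c0 : α → Bool)
    (hc0 : ∀ u v, H.Adj u v → c0 u ≠ c0 v) (s t : ℕ)
    (hs : ∀ v : α, (Finset.univ.filter (fun w => H.Reachable v w)).card ≤ s)
    (G : SimpleGraph W) (S : Finset W) (hS : Tiled G t S) (γ : ℝ) (hγ : 0 < γ) (hγ1 : γ ≤ 1)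
    (ht : 12 * s ≤ γ * t) (htpos : 0 < t) (hn : 0 < Fintype.card α)
    (hSc : (1 + γ / 2) * (Fintype.card α : ℝ) ≤ S.card) :
    ∃ f : α → W, (∀ x, f x ∈ S) ∧ Function.Injective f ∧ ∀ x y, H.Adj x y → G.Adj (f x) (f y) := by
  obtain ⟨K, hK, f, h1, h2, h3, h4⟩ := pack w0 H c0 hc0 s t hs G S hS
  have hKu : K = Finset.univ := by
    rcases h4 with h | h
    · exact h
    · exfalso
      have hKc : (K.card : ℝ) ≤ Fintype.card α := by exact_mod_cast Finset.card_le_univ K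
      have h' : (2 * t * S.card : ℝ) ≤ 2 * t * K.card + 3 * s * S.card := by exact_mod_cast h
      have hn' : (0 : ℝ) < Fintype.card α := by exact_mod_cast hn
      have ht' : (0 : ℝ) < t := by exact_mod_cast htpos
      set n : ℝ := (Fintype.card α : ℝ)
      have hSpos : (0 : ℝ) < S.card := lt_of_lt_of_le (by positivity) hSc
      have e1 : (3 * s * S.card : ℝ) ≤ γ / 4 * t * S.card := by
        have : (3 * s : ℝ) ≤ γ / 4 * t := by linarith
        gcongr
      have e2 : (t : ℝ) * ((2 - γ / 4) * S.card) ≤ t * (2 * n) := by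
        have : (2 * t * K.card : ℝ) ≤ 2 * t * n := by gcongr
        linarith
      have e3 := le_of_mul_le_mul_left e2 ht'
      have e4 : (2 - γ / 4) * ((1 + γ / 2) * n) ≤ 2 * n := by
        refine le_trans ?_ e3
        have : 0 ≤ 2 - γ / 4 := by linarith
        gcongr
      have : 0 < γ * n := by positivity
      nlinarith
  subst hKu
  exact ⟨f, fun x => h1 x (by simp), fun x y h => h2 x (by simp) y (by simp) h,
    fun x y h => h3 x (by simp) y h⟩

end BCM

section BCM
open Classical

/-- `J` (living on the vertex set `V`) is a minor of `G`. -/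
def MinorOn {W : Type} (G : SimpleGraph W) (V : Finset W) (J : SimpleGraph W) : Prop :=
  ∃ μ : W → Set W, (∀ u ∈ V, ∀ v ∈ V, u ≠ v → Disjoint (μ u) (μ v)) ∧
    (∀ v ∈ V, (G.induce (μ v)).Connected) ∧
    (∀ u v, J.Adj u v → u ∈ V ∧ v ∈ V ∧ ∃ a ∈ μ u, ∃ b ∈ μ v, G.Adj a b)

lemma minorOn_refl {W : Type} [Fintype W] (G : SimpleGraph W) : MinorOn G Finset.univ G := by
  refine ⟨fun v => {v}, ?_, ?_, ?_⟩
  · intro u _ v _ h; simpa using h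
  · intro v _
    rw [induce_singleton_eq_top]
    have : Nonempty ↑({v} : Set W) := ⟨⟨v, rfl⟩⟩
    exact connected_top
  · intro u v h
    exact ⟨by simp, by simp, u, rfl, v, rfl, h⟩

lemma minorOn_emb {α W : Type} {G J : SimpleGraph W} {V : Finset W} (h : MinorOn G V J)
    (H : SimpleGraph α) (f : α → W) (hf : Function.Injective f) (hV : ∀ x, f x ∈ V)
    (ha : ∀ x y, H.Adj x y → J.Adj (f x) (f y)) : IsMinor H G := by
  obtain ⟨μ, h1, h2, h3⟩ := h
  refine ⟨fun x => μ (f x), fun u v huv => h1 _ (hV u) _ (hV v) (fun h => huv (hf h)),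
    fun v => h2 _ (hV v), fun u v huv => (h3 _ _ (ha u v huv)).2.2⟩

/-- delete a vertex -/
def delV {W : Type} (J : SimpleGraph W) (v : W) : SimpleGraph W where
  Adj x y := J.Adj x y ∧ x ≠ v ∧ y ≠ v
  symm := ⟨fun _ _ h => ⟨h.1.symm, h.2.2, h.2.1⟩⟩
  loopless := ⟨fun x h => J.loopless.irrefl x h.1⟩

/-- contract the edge `uv` into `u` -/
def mergeE {W : Type} (J : SimpleGraph W) (u v : W) : SimpleGraph W where
  Adj x y := x ≠ y ∧ x ≠ v ∧ y ≠ v ∧ (J.Adj x y ∨ (x = u ∧ J.Adj v y) ∨ (y = u ∧ J.Adj v x))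
  symm := ⟨fun _ _ h => ⟨h.1.symm, h.2.2.1, h.2.1, by
    rcases h.2.2.2 with h | h | h
    · exact Or.inl h.symm
    · exact Or.inr (Or.inr h)
    · exact Or.inr (Or.inl h)⟩⟩
  loopless := ⟨fun x h => h.1 rfl⟩

lemma minorOn_del {W : Type} {G J : SimpleGraph W} {V : Finset W} (h : MinorOn G V J) (v : W) :
    MinorOn G (V.erase v) (delV J v) := by
  obtain ⟨μ, h1, h2, h3⟩ := h
  refine ⟨μ, ?_, ?_, ?_⟩
  · intro x hx y hy
    exact h1 x (Finset.mem_of_mem_erase hx) y (Finset.mem_of_mem_erase hy)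
  · intro x hx
    exact h2 x (Finset.mem_of_mem_erase hx)
  · rintro x y ⟨hxy, hx, hy⟩
    obtain ⟨a, b, c⟩ := h3 x y hxy
    exact ⟨Finset.mem_erase.2 ⟨hx, a⟩, Finset.mem_erase.2 ⟨hy, b⟩, c⟩

lemma connected_union_adj {W : Type} {G : SimpleGraph W} {s t : Set W} {a b : W}
    (hs : (G.induce s).Connected) (ht : (G.induce t).Connected) (ha : a ∈ s) (hb : b ∈ t)
    (hab : G.Adj a b) : (G.induce (s ∪ t)).Connected := by
  have h1 := induce_union_connected hs.preconnected
    (induce_pair_connected_of_adj hab).preconnected ⟨a, ha, by simp⟩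
  have h2 := induce_union_connected h1.preconnected ht.preconnected ⟨b, by simp, hb⟩
  have : s ∪ {a, b} ∪ t = s ∪ t := by
    ext x
    simp only [Set.mem_union, Set.mem_insert_iff, Set.mem_singleton_iff]
    constructor
    · rintro ((h | rfl | rfl) | h) <;> tauto
    · tauto
  rwa [this] at h2

lemma minorOn_merge {W : Type} {G J : SimpleGraph W} {V : Finset W} (h : MinorOn G V J)
    {u v : W} (huv : J.Adj u v) : MinorOn G (V.erase v) (mergeE J u v) := by
  obtain ⟨μ, h1, h2, h3⟩ := h
  obtain ⟨hu, hv, a, ha, b, hb, hab⟩ := h3 u v huv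
  have hne : u ≠ v := huv.ne
  refine ⟨fun x => if x = u then μ u ∪ μ v else μ x, ?_, ?_, ?_⟩
  · intro x hx y hy hxy
    rw [Finset.mem_erase] at hx hy
    by_cases hxu : x = u
    · subst hxu
      have hyx : y ≠ x := hxy.symm
      simp only [if_true, hyx, if_false]
      rw [Set.disjoint_union_left]
      exact ⟨h1 _ hx.2 _ hy.2 hxy, h1 _ hv _ hy.2 hy.1.symm⟩
    · by_cases hyu : y = u
      · subst hyu
        simp only [if_true, hxu, if_false]
        rw [Set.disjoint_union_right]
        exact ⟨h1 _ hx.2 _ hy.2 hxy, h1 _ hx.2 _ hv hx.1⟩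
      · simp only [hxu, hyu, if_false]
        exact h1 _ hx.2 _ hy.2 hxy
  · intro x hx
    rw [Finset.mem_erase] at hx
    by_cases hxu : x = u
    · have e : (if x = u then μ u ∪ μ v else μ x) = μ u ∪ μ v := if_pos hxu
      show (G.induce (if x = u then μ u ∪ μ v else μ x)).Connected
      rw [e]
      exact connected_union_adj (h2 u hu) (h2 v hv) ha hb hab
    · have e : (if x = u then μ u ∪ μ v else μ x) = μ x := if_neg hxu
      show (G.induce (if x = u then μ u ∪ μ v else μ x)).Connected
      rw [e]
      exact h2 x hx.2
  · have hsub : ∀ x, μ x ⊆ (if x = u then μ u ∪ μ v else μ x) := by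
      intro x
      by_cases hxu : x = u
      · subst hxu; simp
      · simp [hxu]
    have hsubv : μ v ⊆ (if u = u then μ u ∪ μ v else μ u) := by simp
    rintro x y ⟨hxy, hx, hy, hadj⟩
    rcases hadj with hadj | ⟨rfl, hadj⟩ | ⟨rfl, hadj⟩
    · obtain ⟨hxV, hyV, p, hp, q, hq, hpq⟩ := h3 x y hadj
      exact ⟨Finset.mem_erase.2 ⟨hx, hxV⟩, Finset.mem_erase.2 ⟨hy, hyV⟩,
        p, hsub x hp, q, hsub y hq, hpq⟩
    · obtain ⟨hxV, hyV, p, hp, q, hq, hpq⟩ := h3 v y hadj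
      exact ⟨Finset.mem_erase.2 ⟨hx, hu⟩, Finset.mem_erase.2 ⟨hy, hyV⟩,
        p, hsubv hp, q, hsub y hq, hpq⟩
    · obtain ⟨hxV, hyV, p, hp, q, hq, hpq⟩ := h3 v x hadj
      exact ⟨Finset.mem_erase.2 ⟨hx, hyV⟩, Finset.mem_erase.2 ⟨hy, hu⟩,
        q, hsub x hq, p, hsubv hp, hpq.symm⟩

/-- sum of degrees -/
noncomputable def dsum {W : Type} [Fintype W] (J : SimpleGraph W) : ℕ :=
  ∑ v, dn J Finset.univ v

lemma dsum_del {W : Type} [Fintype W] (J : SimpleGraph W) (v : W) :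
    dsum J ≤ dsum (delV J v) + 2 * dn J Finset.univ v := by
  have hpt : ∀ x : W, dn J Finset.univ x ≤ dn (delV J v) Finset.univ x +
      (if J.Adj v x then 1 else 0) + (if x = v then dn J Finset.univ v else 0) := by
    intro x
    by_cases hx : x = v
    · subst hx; simp
    · simp only [hx, if_false, add_zero]
      unfold dn
      by_cases hvx : J.Adj v x
      · simp only [hvx, if_true]
        calc _ ≤ (insert v (Finset.univ.filter (fun w => (delV J v).Adj x w))).card := by
              apply Finset.card_le_card
              intro w hw
              by_cases hwv : w = v
              · simp [hwv]
              · simp only [Finset.mem_filter, Finset.mem_univ, true_and] at hw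
                simp [hwv, delV, hw, hx]
          _ ≤ _ := Finset.card_insert_le _ _
      · simp only [hvx, if_false, add_zero]
        apply Finset.card_le_card
        intro w hw
        simp only [Finset.mem_filter, Finset.mem_univ, true_and] at hw
        have hwv : w ≠ v := by rintro rfl; exact hvx hw.symm
        simp [hwv, delV, hw, hx]
  have hs := Finset.sum_le_sum (s := Finset.univ) (fun x _ => hpt x)
  rw [Finset.sum_add_distrib, Finset.sum_add_distrib, ← Finset.card_filter] at hs
  simp only [Finset.sum_ite_eq', Finset.mem_univ, if_true] at hs
  unfold dsum
  have : (Finset.univ.filter (fun x => J.Adj v x)).card = dn J Finset.univ v := rfl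
  omega

/-- common neighbours -/
noncomputable def codn {W : Type} [Fintype W] (J : SimpleGraph W) (u v : W) : ℕ :=
  (Finset.univ.filter (fun w => J.Adj u w ∧ J.Adj v w)).card

lemma dsum_merge {W : Type} [Fintype W] (J : SimpleGraph W) {u v : W} (huv : J.Adj u v) :
    dsum J ≤ dsum (mergeE J u v) + 2 * codn J u v + 2 := by
  have hne : u ≠ v := huv.ne
  have hpt : ∀ x : W, dn J Finset.univ x + (if x = u then dn J Finset.univ v else 0) ≤
      dn (mergeE J u v) Finset.univ x +
      (if J.Adj u x ∧ J.Adj v x then 1 else 0) + (if x = u then codn J u v + 2 else 0) +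
      (if x = v then dn J Finset.univ v else 0) := by
    intro x
    by_cases hxv : x = v
    · subst hxv; simp [hne.symm]
    by_cases hxu : x = u
    · subst hxu
      simp only [if_true, J.irrefl, false_and, if_false, hne, add_zero]
      have h1 := Finset.card_union_add_card_inter (Finset.univ.filter (fun w => J.Adj x w))
        (Finset.univ.filter (fun w => J.Adj v w))
      rw [← Finset.filter_and] at h1
      have h2 : ((Finset.univ.filter (fun w => J.Adj x w)) ∪
        (Finset.univ.filter (fun w => J.Adj v w))).card ≤
          (insert x (insert v (Finset.univ.filter (fun w => (mergeE J x v).Adj x w)))).card := by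
        apply Finset.card_le_card
        intro w hw
        simp only [Finset.mem_union, Finset.mem_filter, Finset.mem_univ, true_and] at hw
        by_cases hwx : w = x
        · simp [hwx]
        by_cases hwv : w = v
        · simp [hwv]
        have hwx' : x ≠ w := fun h => hwx h.symm
        simp only [Finset.mem_insert, hwx, hwv, Finset.mem_filter, Finset.mem_univ, mergeE]
        simp [hwx', hwv, hne, hw]
      have h3 := Finset.card_insert_le x
        (insert v (Finset.univ.filter (fun w => (mergeE J x v).Adj x w)))
      have h4 := Finset.card_insert_le v (Finset.univ.filter (fun w => (mergeE J x v).Adj x w))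
      unfold dn codn
      omega
    · simp only [hxu, hxv, if_false, add_zero]
      unfold dn
      by_cases hvx : J.Adj v x
      · by_cases hux : J.Adj u x
        · simp only [hvx, hux, and_self, if_true]
          calc _ ≤ (insert v (Finset.univ.filter (fun w => (mergeE J u v).Adj x w))).card := by
                apply Finset.card_le_card
                intro w hw
                by_cases hwv : w = v
                · simp [hwv]
                · simp only [Finset.mem_filter, Finset.mem_univ, true_and] at hw
                  simp [hwv, mergeE, hw, hxv, hw.ne]
            _ ≤ _ := Finset.card_insert_le _ _
        · simp only [hux, false_and, if_false, add_zero]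
          have hvm : v ∈ Finset.univ.filter (fun w => J.Adj x w) := by simp [hvx.symm]
          have hum : u ∉ (Finset.univ.filter (fun w => J.Adj x w)).erase v := by
            simp [hne, J.adj_comm x u, hux]
          calc _ = (insert u ((Finset.univ.filter (fun w => J.Adj x w)).erase v)).card := by
                rw [Finset.card_insert_of_notMem hum, Finset.card_erase_add_one hvm]
            _ ≤ _ := by
                apply Finset.card_le_card
                intro w hw
                rw [Finset.mem_insert, Finset.mem_erase, Finset.mem_filter] at hw
                rcases hw with rfl | ⟨hwv, -, hw⟩
                · simp [mergeE, hxu, hxv, hne, hvx]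
                · simp [hwv, mergeE, hw, hxv, hw.ne]
      · simp only [hvx, and_false, if_false, add_zero]
        apply Finset.card_le_card
        intro w hw
        simp only [Finset.mem_filter, Finset.mem_univ, true_and] at hw
        have hwv : w ≠ v := by rintro rfl; exact hvx hw.symm
        simp [hwv, mergeE, hw, hxv, hw.ne]
  have hs := Finset.sum_le_sum (s := Finset.univ) (fun x _ => hpt x)
  simp only [Finset.sum_add_distrib] at hs
  rw [← Finset.card_filter] at hs
  simp only [Finset.sum_ite_eq', Finset.mem_univ, if_true] at hs
  unfold dsum
  have : (Finset.univ.filter (fun x => J.Adj u x ∧ J.Adj v x)).card = codn J u v := rfl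
  omega

lemma merge_adj_iff {W : Type} (J : SimpleGraph W) {u v x y : W} (hxu : x ≠ u) (hxv : x ≠ v)
    (hyu : y ≠ u) (hyv : y ≠ v) : (mergeE J u v).Adj x y ↔ J.Adj x y := by
  constructor
  · rintro ⟨_, _, _, h | h | h⟩
    · exact h
    · exact (hxu h.1).elim
    · exact (hyu h.1).elim
  · intro h
    exact ⟨h.ne, hxv, hyv, Or.inl h⟩

lemma merge_dn_le {W : Type} [Fintype W] (J : SimpleGraph W) {u v z : W} (hzu : z ≠ u)
    (hzv : z ≠ v) : dn (mergeE J u v) Finset.univ z ≤ dn J Finset.univ z := by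
  unfold dn
  by_cases hvz : J.Adj v z
  · have hvm : v ∈ Finset.univ.filter (fun w => J.Adj z w) := by simp [hvz.symm]
    calc _ ≤ (insert u ((Finset.univ.filter (fun w => J.Adj z w)).erase v)).card := by
          apply Finset.card_le_card
          intro w hw
          simp only [Finset.mem_filter, Finset.mem_univ, true_and, mergeE, hzu, false_and,
            false_or] at hw
          rw [Finset.mem_insert, Finset.mem_erase, Finset.mem_filter]
          have := Finset.mem_univ w
          tauto
      _ ≤ ((Finset.univ.filter (fun w => J.Adj z w)).erase v).card + 1 := Finset.card_insert_le _ _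
      _ = _ := Finset.card_erase_add_one hvm
  · apply Finset.card_le_card
    intro w hw
    simp only [Finset.mem_filter, Finset.mem_univ, true_and, mergeE, hzu, false_and,
            false_or, hvz, and_false, or_false] at hw ⊢
    exact hw.2.2.2

end BCM

section BCM
open Classical

lemma minorOn_dn {W : Type} [Fintype W] {G J : SimpleGraph W} {V : Finset W}
    (h : MinorOn G V J) (v : W) : dn J Finset.univ v = dn J V v := by
  obtain ⟨μ, h1, h2, h3⟩ := h
  unfold dn
  congr 1
  ext w
  simp only [Finset.mem_filter, Finset.mem_univ, true_and]
  exact ⟨fun h => ⟨(h3 _ _ h).2.1, h⟩, fun h => h.2⟩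

lemma minorOn_dsum {W : Type} [Fintype W] {G J : SimpleGraph W} {V : Finset W}
    (h : MinorOn G V J) : dsum J = ∑ v ∈ V, dn J Finset.univ v := by
  obtain ⟨μ, h1, h2, h3⟩ := h
  unfold dsum
  symm
  apply Finset.sum_subset (Finset.subset_univ _)
  intro x _ hx
  unfold dn
  rw [Finset.card_eq_zero, Finset.filter_eq_empty_iff]
  intro y _ hxy
  exact hx (h3 _ _ hxy).1

lemma mader_struct {W : Type} [Fintype W] (G : SimpleGraph W) (n : ℕ) (hn : 0 < n) (d : ℝ)
    (hd : d = (1 + 1 / 1000) * n)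
    (h0 : ∃ V : Finset W, V.Nonempty ∧ ∃ J, MinorOn G V J ∧ d * V.card ≤ dsum J) :
    ∃ V : Finset W, ∃ J, MinorOn G V J ∧ ∃ U ⊆ V, (U.card : ℝ) ≤ 20 * n ∧ d ≤ U.card ∧
      ∀ v ∈ U, d / 2 ≤ (dn J U v : ℝ) := by
  have hn1 : (1 : ℝ) ≤ n := by exact_mod_cast hn
  have hdpos : 0 < d := by rw [hd]; positivity
  obtain ⟨V, ⟨hVne, J, hM, hds⟩, hmin⟩ : ∃ V : Finset W, (V.Nonempty ∧ ∃ J, MinorOn G V J ∧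
      d * V.card ≤ dsum J) ∧ ∀ V' : Finset W, (V'.Nonempty ∧ ∃ J, MinorOn G V' J ∧
      d * V'.card ≤ dsum J) → V.card ≤ V'.card := by
    obtain ⟨V, hV, hm⟩ := Finset.exists_min_image (Finset.univ.filter (fun V : Finset W =>
      V.Nonempty ∧ ∃ J, MinorOn G V J ∧ d * V.card ≤ dsum J)) Finset.card (by
        obtain ⟨V, hV⟩ := h0
        exact ⟨V, by simpa using hV⟩)
    refine ⟨V, (Finset.mem_filter.1 hV).2, fun V' hV' => hm V' ?_⟩
    simp only [Finset.mem_filter, Finset.mem_univ, true_and]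
    exact hV'
  have hVpos : 0 < V.card := hVne.card_pos
  have hVposR : (0 : ℝ) < V.card := by exact_mod_cast hVpos
  have hdsumV := minorOn_dsum hM
  have hdnV := minorOn_dn hM
  have hdVcard : d ≤ V.card := by
    have h1 : dsum J ≤ V.card * V.card := by
      rw [hdsumV]
      calc _ ≤ ∑ v ∈ V, V.card := Finset.sum_le_sum (fun v _ => by
              rw [hdnV]; exact Finset.card_le_card (Finset.filter_subset _ _))
        _ = _ := by simp
    have h2 : (dsum J : ℝ) ≤ V.card * V.card := by exact_mod_cast h1
    exact le_of_mul_le_mul_right (hds.trans h2) hVposR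
  have hV2 : ∀ v ∈ V, (V.erase v).Nonempty := by
    intro v hv
    rw [← Finset.card_pos, Finset.card_erase_of_mem hv]
    have : (1 : ℝ) < V.card := by rw [hd] at hdVcard; linarith
    have : 1 < V.card := by exact_mod_cast this
    omega
  have hcardE : ∀ v ∈ V, ((V.erase v).card : ℝ) = V.card - 1 := by
    intro v hv
    rw [Finset.card_erase_of_mem hv]
    push_cast [Nat.cast_sub hVpos]; ring
  have hred : ∀ v ∈ V, ∀ J', MinorOn G (V.erase v) J' → (dsum J' : ℝ) < d * (V.card - 1) := by
    intro v hv J' hJ'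
    by_contra hcon
    have := hmin (V.erase v) ⟨hV2 v hv, J', hJ', by rw [hcardE v hv]; linarith⟩
    rw [Finset.card_erase_of_mem hv] at this
    omega
  have hdel : ∀ v ∈ V, (dsum J : ℝ) < d * (V.card - 1) + 2 * dn J Finset.univ v := by
    intro v hv
    have h1 := hred v hv _ (minorOn_del hM v)
    have h2 : (dsum J : ℝ) ≤ dsum (delV J v) + 2 * dn J Finset.univ v := by
      exact_mod_cast dsum_del J v
    linarith
  have hmem : ∀ u v, J.Adj u v → u ∈ V ∧ v ∈ V := by
    obtain ⟨μ, _, _, h3⟩ := hM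
    exact fun u v h => ⟨(h3 u v h).1, (h3 u v h).2.1⟩
  have hcod : ∀ u v, J.Adj u v → d / 2 < codn J u v + 1 := by
    intro u v huv
    have h1 := hred v (hmem u v huv).2 _ (minorOn_merge hM huv)
    have h2 : (dsum J : ℝ) ≤ dsum (mergeE J u v) + 2 * codn J u v + 2 := by
      exact_mod_cast dsum_merge J huv
    linarith
  have hmind : ∀ v ∈ V, d / 2 < dn J Finset.univ v := by
    intro v hv
    have := hdel v hv
    linarith
  refine ⟨V, J, hM, ?_⟩
  by_cases hsmall : (V.card : ℝ) ≤ 20 * n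
  · refine ⟨V, subset_rfl, hsmall, hdVcard, fun v hv => ?_⟩
    rw [← hdnV]
    exact (hmind v hv).le
  push Not at hsmall
  have hub : (dsum J : ℝ) ≤ 2 * d * V.card := by
    have h1 : ∑ v ∈ V, (dsum J : ℝ) ≤
        ∑ v ∈ V, (d * (V.card - 1) + 2 * (dn J Finset.univ v : ℝ)) :=
      Finset.sum_le_sum (fun v hv => (hdel v hv).le)
    rw [Finset.sum_add_distrib] at h1
    simp only [Finset.sum_const, nsmul_eq_mul, ← Finset.mul_sum] at h1
    have h2 : (dsum J : ℝ) = ∑ v ∈ V, (dn J Finset.univ v : ℝ) := by exact_mod_cast hdsumV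
    rw [← h2] at h1
    by_contra hcon
    push Not at hcon
    have h3 : 0 < (V.card : ℝ) - 2 := by linarith
    have h4 := mul_lt_mul_of_pos_right hcon h3
    have h5 : 0 < d * V.card * (V.card - 3) := by
      have : 0 < (V.card : ℝ) - 3 := by linarith
      positivity
    nlinarith
  obtain ⟨U, hU, hUmax⟩ := Finset.exists_max_image (V.powerset.filter (fun U : Finset W =>
      (U.card : ℝ) ≤ 20 * n ∧ ∀ v ∈ U, d / 2 ≤ (dn J U v : ℝ))) Finset.card
      ⟨∅, by simp⟩
  simp only [Finset.mem_filter, Finset.mem_powerset] at hU hUmax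
  obtain ⟨hUV, hUc, hUd⟩ := hU
  refine ⟨U, hUV, hUc, ?_, hUd⟩
  by_contra hcon
  push Not at hcon
  -- find a vertex of small degree
  obtain ⟨v, hvV, hvU, hvd⟩ : ∃ v ∈ V, v ∉ U ∧ (dn J Finset.univ v : ℝ) ≤ 8 * n := by
    by_contra hno
    push Not at hno
    have h1 : ∑ v ∈ V \ U, (8 * n : ℝ) ≤ ∑ v ∈ V \ U, (dn J Finset.univ v : ℝ) :=
      Finset.sum_le_sum (fun v hv => by
        rw [Finset.mem_sdiff] at hv
        exact (hno v hv.1 hv.2).le)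
    have h2 : ∑ v ∈ V \ U, (dn J Finset.univ v : ℝ) ≤ ∑ v ∈ V, (dn J Finset.univ v : ℝ) :=
      Finset.sum_le_sum_of_subset_of_nonneg Finset.sdiff_subset (fun _ _ _ => by positivity)
    have h3 : (dsum J : ℝ) = ∑ v ∈ V, (dn J Finset.univ v : ℝ) := by exact_mod_cast hdsumV
    rw [← h3] at h2
    simp only [Finset.sum_const, nsmul_eq_mul] at h1
    have h4 : ((V \ U).card : ℝ) = V.card - U.card := by
      rw [Finset.card_sdiff_of_subset hUV, Nat.cast_sub (Finset.card_le_card hUV)]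
    rw [h4] at h1
    have h5 : (V.card : ℝ) * (9 / 10) ≤ V.card - U.card := by
      rw [hd] at hcon; linarith
    have h6 := mul_le_mul_of_nonneg_right h5 (by positivity : (0 : ℝ) ≤ 8 * n)
    have h7 : 2 * d * V.card < V.card * (9 / 10) * (8 * n) := by
      rw [hd]
      have : (0 : ℝ) < n * V.card := by positivity
      nlinarith
    linarith
  set Nv := insert v (V.filter (fun w => J.Adj v w)) with hNv
  have hNvc : (Nv.card : ℝ) ≤ 8 * n + 1 := by
    have h1 : Nv.card ≤ dn J V v + 1 := Finset.card_insert_le _ _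
    rw [← hdnV] at h1
    have h2 : (Nv.card : ℝ) ≤ dn J Finset.univ v + 1 := by exact_mod_cast h1
    linarith
  have hnew := hUmax (U ∪ Nv) ⟨?_, ?_, ?_⟩
  · have h1 : (insert v U).card ≤ (U ∪ Nv).card := Finset.card_le_card (by
      intro x hx
      rw [Finset.mem_insert] at hx
      rw [Finset.mem_union]
      rcases hx with rfl | hx
      · right; rw [hNv]; simp
      · left; exact hx)
    rw [Finset.card_insert_of_notMem hvU] at h1
    omega
  · apply Finset.union_subset hUV
    intro x hx
    rw [hNv, Finset.mem_insert, Finset.mem_filter] at hx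
    rcases hx with rfl | hx
    · exact hvV
    · exact hx.1
  · have h1 : ((U ∪ Nv).card : ℝ) ≤ U.card + Nv.card := by exact_mod_cast Finset.card_union_le _ _
    rw [hd] at hcon
    linarith
  · intro x hx
    rw [Finset.mem_union] at hx
    rcases hx with hx | hx
    · refine (hUd x hx).trans ?_
      have : dn J U x ≤ dn J (U ∪ Nv) x :=
        Finset.card_le_card (Finset.filter_subset_filter _ Finset.subset_union_left)
      exact_mod_cast this
    · rw [hNv, Finset.mem_insert, Finset.mem_filter] at hx
      rcases hx with rfl | ⟨hxV, hvx⟩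
      · refine (hmind x hvV).le.trans ?_
        have : dn J Finset.univ x ≤ dn J (U ∪ Nv) x := by
          rw [hdnV]
          apply Finset.card_le_card
          intro y hy
          rw [Finset.mem_filter] at hy ⊢
          refine ⟨?_, hy.2⟩
          rw [Finset.mem_union, hNv, Finset.mem_insert, Finset.mem_filter]
          exact Or.inr (Or.inr hy)
        exact_mod_cast this
      · refine (hcod v x hvx).le.trans ?_
        have : codn J v x + 1 ≤ dn J (U ∪ Nv) x := by
          unfold codn dn
          have hni : v ∉ Finset.univ.filter (fun w => J.Adj v w ∧ J.Adj x w) := by simp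
          rw [← Finset.card_insert_of_notMem hni]
          apply Finset.card_le_card
          intro y hy
          simp only [Finset.mem_insert, Finset.mem_filter, Finset.mem_univ, true_and] at hy
          rw [Finset.mem_filter, Finset.mem_union, hNv, Finset.mem_insert, Finset.mem_filter]
          rcases hy with rfl | ⟨h1, h2⟩
          · exact ⟨Or.inr (Or.inl rfl), hvx.symm⟩
          · exact ⟨Or.inr (Or.inr ⟨(hmem _ _ h1).2, h1⟩), h2⟩
        exact_mod_cast this

/-- Facts about `H`, bundled. -/
def GoodH {α : Type} [Fintype α] (H : SimpleGraph α) (s : ℕ) : Prop :=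
  (∃ c0 : α → Bool, ∀ u v, H.Adj u v → c0 u ≠ c0 v) ∧
    ∀ v : α, (Finset.univ.filter (fun w => H.Reachable v w)).card ≤ s

lemma minor_of_tiled {α W : Type} [Fintype α] {H : SimpleGraph α} {s : ℕ}
    (hH : GoodH H s) {G J : SimpleGraph W} {V S : Finset W} (hM : MinorOn G V J)
    (hSV : S ⊆ V) {t : ℕ} (hS : Tiled J t S) (γ : ℝ) (hγ : 0 < γ) (hγ1 : γ ≤ 1)
    (ht : 12 * s ≤ γ * t) (htpos : 0 < t) (hn : 0 < Fintype.card α)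
    (hSc : (1 + γ / 2) * (Fintype.card α : ℝ) ≤ S.card) : IsMinor H G := by
  obtain ⟨⟨c0, hc0⟩, hs⟩ := hH
  have hne : S.Nonempty := by
    rw [← Finset.card_pos]
    have : (0 : ℝ) < S.card := lt_of_lt_of_le (by positivity) hSc
    exact_mod_cast this
  obtain ⟨w0, _⟩ := hne
  obtain ⟨f, h1, h2, h3⟩ := pack_all w0 H c0 hc0 s t hs J S hS γ hγ hγ1 ht htpos hn hSc
  exact minorOn_emb hM H f h2 (fun x => hSV (h1 x)) h3

lemma mader (s : ℕ) : ∃ M : ℕ, ∀ (α W : Type) [Fintype α] [Fintype W] (H : SimpleGraph α)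
    (G : SimpleGraph W), GoodH H s → M ≤ Fintype.card α → 0 < Fintype.card α →
    (∃ V : Finset W, V.Nonempty ∧ ∃ J, MinorOn G V J ∧
      (1 + 1 / 1000) * (Fintype.card α : ℝ) * V.card ≤ dsum J) → IsMinor H G := by
  obtain ⟨M, hM⟩ := dense_tiling (1 / 1000) 20 (by norm_num) (by norm_num) (by norm_num)
    (12000 * s + 1) (by omega)
  refine ⟨M, fun α W _ _ H G hH hMn hn h0 => ?_⟩
  obtain ⟨V, J, hVJ, U, hUV, hU1, hU2, hU3⟩ := mader_struct G (Fintype.card α) hn _ rfl h0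
  obtain ⟨S, hSU, hST, hSc⟩ := hM _ hMn W J U hU1 hU2 hU3
  refine minor_of_tiled hH hVJ (hSU.trans hUV) hST (1 / 1000) (by norm_num) (by norm_num)
    ?_ (by omega) hn hSc
  push_cast
  linarith

end BCM

section BCM
open Classical

/-- States of the contraction process. -/
def CState {W : Type} [Fintype W] (G : SimpleGraph W) (n k : ℕ) (V : Finset W)
    (J : SimpleGraph W) (Z : Finset W) : Prop :=
  MinorOn G V J ∧ V.card + k = Fintype.card W ∧ Z ⊆ V ∧ Fintype.card W ≤ Z.card + 2 * k ∧
    (∀ x ∈ Z, ∀ y ∈ Z, (J.Adj x y ↔ G.Adj x y)) ∧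
    (∀ z ∈ Z, dn J Finset.univ z ≤ dn G Finset.univ z) ∧
    (dsum G : ℝ) ≤ dsum J + k * (n / 2 : ℝ)

lemma process {W : Type} [Fintype W] (G : SimpleGraph W) (n : ℕ) : ∀ k : ℕ,
    (∃ V J Z, CState G n k V J Z) ∨ ∃ k' ≤ k, ∃ V J Z, CState G n k' V J Z ∧
      ∀ u v, J.Adj u v → (n / 2 : ℝ) < 2 * codn J u v + 2 := by
  intro k
  induction k with
  | zero =>
    left
    refine ⟨Finset.univ, G, Finset.univ, minorOn_refl G, by simp, subset_rfl, by simp,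
      fun _ _ _ _ => Iff.rfl, fun _ _ => le_rfl, by simp⟩
  | succ k ih =>
    rcases ih with ⟨V, J, Z, hst⟩ | ⟨k', hk', h⟩
    · by_cases hterm : ∀ u v, J.Adj u v → (n / 2 : ℝ) < 2 * codn J u v + 2
      · exact Or.inr ⟨k, by omega, V, J, Z, hst, hterm⟩
      left
      push Not at hterm
      obtain ⟨u, v, huv, hc⟩ := hterm
      obtain ⟨hM, hVc, hZV, hZc, hadj, hdeg, hds⟩ := hst
      have hvV : v ∈ V := by
        obtain ⟨μ, _, _, h3⟩ := hM
        exact (h3 u v huv).2.1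
      have hVpos : 0 < V.card := Finset.card_pos.2 ⟨v, hvV⟩
      refine ⟨V.erase v, mergeE J u v, (Z.erase u).erase v, minorOn_merge hM huv, ?_, ?_, ?_,
        ?_, ?_, ?_⟩
      · rw [Finset.card_erase_of_mem hvV]; omega
      · exact Finset.erase_subset_erase _ ((Finset.erase_subset _ _).trans hZV)
      · have h1 := Finset.pred_card_le_card_erase (s := Z) (a := u)
        have h2 := Finset.pred_card_le_card_erase (s := Z.erase u) (a := v)
        omega
      · intro x hx y hy
        simp only [Finset.mem_erase] at hx hy
        rw [merge_adj_iff J hx.2.1 hx.1 hy.2.1 hy.1]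
        exact hadj x hx.2.2 y hy.2.2
      · intro z hz
        simp only [Finset.mem_erase] at hz
        exact (merge_dn_le J hz.2.1 hz.1).trans (hdeg z hz.2.2)
      · have h2 : (dsum J : ℝ) ≤ dsum (mergeE J u v) + 2 * codn J u v + 2 := by
          exact_mod_cast dsum_merge J huv
        push_cast
        linarith
    · exact Or.inr ⟨k', by omega, h⟩

lemma terminal_contra (t : ℕ) (ht : 0 < t) : ∃ M : ℕ, ∀ n : ℕ, M ≤ n →
    ∀ {W : Type} [Fintype W] (G J : SimpleGraph W) (Z S : Finset W),
    (∀ w, (999 / 1000 : ℝ) * n ≤ dn G Finset.univ w) →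
    (dsum G : ℝ) ≤ (1 + 1 / 1000) * n * Fintype.card W →
    (100000 : ℝ) * n ≤ Fintype.card W →
    (Fintype.card W : ℝ) ≤ Z.card + 8 / 1000 * Fintype.card W + 2 →
    (∀ x ∈ Z, ∀ y ∈ Z, (J.Adj x y ↔ G.Adj x y)) →
    (∀ z ∈ Z, dn J Finset.univ z ≤ dn G Finset.univ z) →
    (∀ u v, J.Adj u v → (n / 2 : ℝ) < 2 * codn J u v + 2) →
    (S.card : ℝ) ≤ 2 * n →
    (¬ ∃ A ⊆ (Z.filter (fun z => (dn G Finset.univ z : ℝ) < 2 * n)) \ S,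
      ∃ B ⊆ (Z.filter (fun z => (dn G Finset.univ z : ℝ) < 2 * n)) \ S,
      A.card = t ∧ B.card = t ∧ ∀ a ∈ A, ∀ b ∈ B, G.Adj a b) → False := by
  obtain ⟨M, hMpos, hkst⟩ := kst (1 / 10) 2 (by norm_num) (by norm_num) t ht
  refine ⟨max M 100, fun n hn W _ G J Z S hmin hdsum hN hZ hadj hdeg hterm hS hno => ?_⟩
  have hnM : M ≤ n := le_trans (le_max_left _ _) hn
  have hn100 : (100 : ℝ) ≤ n := by exact_mod_cast le_trans (le_max_right _ _) hn
  set N : ℝ := (Fintype.card W : ℝ) with hNdef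
  set Y := (Z.filter (fun z => (dn G Finset.univ z : ℝ) < 2 * n)) \ S with hY
  have hYmem : ∀ y ∈ Y, y ∈ Z ∧ (dn G Finset.univ y : ℝ) < 2 * n := by
    intro y hy
    rw [hY, Finset.mem_sdiff, Finset.mem_filter] at hy
    exact hy.1
  set D : W → ℝ := fun v => (dn G Finset.univ v : ℝ) with hD
  have hDsum : ∑ v, D v ≤ (1 + 1 / 1000) * n * N := by
    have : ∑ v, D v = (dsum G : ℝ) := by rw [hD, dsum]; push_cast; rfl
    rw [this]; exact hdsum
  have hNpos : 0 < N := by linarith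
  -- sums over any subset of the excess
  have hex : ∀ X : Finset W, ∑ v ∈ X, (D v - 999 / 1000 * n) ≤ 2 / 1000 * n * N := by
    intro X
    have h1 : ∑ v ∈ X, (D v - 999 / 1000 * n) ≤ ∑ v, (D v - 999 / 1000 * n) :=
      Finset.sum_le_sum_of_subset_of_nonneg (Finset.subset_univ _)
        (fun v _ _ => by have := hmin v; simp only [hD]; linarith)
    have h2 : ∑ v, (D v - 999 / 1000 * n) = ∑ v, D v - N * (999 / 1000 * n) := by
      rw [Finset.sum_sub_distrib]
      simp only [Finset.sum_const, nsmul_eq_mul, Finset.card_univ]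
      rfl
    linarith
  have hYc : ((Finset.univ \ Y).card : ℝ) ≤ 11 / 1000 * N := by
    set B := Finset.univ.filter (fun z => ¬ (D z < 2 * n)) with hB
    have hBc : (B.card : ℝ) ≤ 2 / 1000 * N := by
      have h1 := hex B
      have h2 : ∑ v ∈ B, (n : ℝ) ≤ ∑ v ∈ B, (D v - 999 / 1000 * n) := by
        apply Finset.sum_le_sum
        intro v hv
        rw [hB, Finset.mem_filter] at hv
        have := hv.2
        push Not at this
        linarith
      simp only [Finset.sum_const, nsmul_eq_mul] at h2
      have h3 : (B.card : ℝ) * n ≤ 2 / 1000 * N * n := by linarith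
      exact le_of_mul_le_mul_right h3 (by linarith)
    have h1 : (Finset.univ \ Y) ⊆ (Finset.univ \ Z) ∪ (B ∪ S) := by
      intro x hx
      simp only [hY, hB, hD, Finset.mem_sdiff, Finset.mem_univ, true_and, Finset.mem_filter,
        Finset.mem_union] at hx ⊢
      tauto
    have h2 := (Finset.card_le_card h1).trans (Finset.card_union_le _ _)
    have h3 := Finset.card_union_le B S
    have h4 : (Finset.univ \ Z).card + Z.card = Fintype.card W := by
      rw [Finset.card_sdiff_add_card_eq_card (Finset.subset_univ _), Finset.card_univ]
    have h4' : ((Finset.univ \ Z).card : ℝ) + Z.card = N := by rw [hNdef]; exact_mod_cast h4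
    have h5 : ((Finset.univ \ Y).card : ℝ) ≤ (Finset.univ \ Z).card + (B.card + S.card) := by
      have : (Finset.univ \ Y).card ≤ (Finset.univ \ Z).card + (B.card + S.card) := by omega
      exact_mod_cast this
    linarith
  have hYcard : ((Finset.univ \ Y).card : ℝ) + Y.card = N := by
    have : (Finset.univ \ Y).card + Y.card = Fintype.card W := by
      rw [Finset.card_sdiff_add_card_eq_card (Finset.subset_univ _), Finset.card_univ]
    rw [hNdef]; exact_mod_cast this
  have hYN : (Y.card : ℝ) ≤ N := by
    have : (0 : ℝ) ≤ ((Finset.univ \ Y).card : ℝ) := by positivity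
    linarith
  have hsplit : ∀ F : SimpleGraph W, ∀ y,
      dn F Finset.univ y = dn F Y y + dn F (Finset.univ \ Y) y := by
    intro F y
    unfold dn
    rw [← Finset.card_union_of_disjoint, ← Finset.filter_union]
    · congr 1
      ext z; simp
    · exact Finset.disjoint_filter_filter Finset.disjoint_sdiff
  have hO : ∑ y ∈ Y, (dn G (Finset.univ \ Y) y : ℝ) ≤ 13 / 1000 * n * N := by
    have h1 : ∑ y ∈ Y, dn G (Finset.univ \ Y) y = ∑ x ∈ Finset.univ \ Y, dn G Y x :=
      dn_sum_comm G Y (Finset.univ \ Y)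
    have h1' : ∑ y ∈ Y, (dn G (Finset.univ \ Y) y : ℝ) = ∑ x ∈ Finset.univ \ Y, (dn G Y x : ℝ) := by
      exact_mod_cast h1
    rw [h1']
    have h2 : ∑ x ∈ Finset.univ \ Y, (dn G Y x : ℝ) ≤ ∑ x ∈ Finset.univ \ Y, D x := by
      apply Finset.sum_le_sum
      intro x _
      have := hsplit G x
      simp only [hD]
      exact_mod_cast (by omega : dn G Y x ≤ dn G Finset.univ x)
    have h3 := hex (Finset.univ \ Y)
    rw [Finset.sum_sub_distrib] at h3
    simp only [Finset.sum_const, nsmul_eq_mul] at h3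
    have h4 := mul_le_mul_of_nonneg_right hYc (by linarith : (0 : ℝ) ≤ 999 / 1000 * n)
    have h5 : 0 ≤ (n : ℝ) * N := by positivity
    linarith
  have hE : 975 / 1000 * n * N ≤ ∑ y ∈ Y, (dn G Y y : ℝ) := by
    have h1 : ∑ y ∈ Y, D y = ∑ y ∈ Y, (dn G Y y : ℝ) + ∑ y ∈ Y, (dn G (Finset.univ \ Y) y : ℝ) := by
      rw [← Finset.sum_add_distrib]
      apply Finset.sum_congr rfl
      intro y _
      simp only [hD]
      exact_mod_cast hsplit G y
    have h2 : ∑ y ∈ Y, (999 / 1000 * n : ℝ) ≤ ∑ y ∈ Y, D y :=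
      Finset.sum_le_sum (fun y _ => hmin y)
    simp only [Finset.sum_const, nsmul_eq_mul] at h2
    have h3 : 989 / 1000 * N ≤ Y.card := by linarith
    have h4 := mul_le_mul_of_nonneg_right h3 (by linarith : (0 : ℝ) ≤ 999 / 1000 * n)
    have h5 : 0 ≤ (n : ℝ) * N := by positivity
    linarith
  have hpt : ∀ y ∈ Y, (dn G Y y : ℝ) * (n / 4 - 1) - 2 * n * dn G (Finset.univ \ Y) y ≤
      1 / 10 * (n : ℝ) ^ 2 := by
    intro y hy
    set X := Y.filter (fun w => G.Adj y w) with hX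
    have hXY : X ⊆ Y := Finset.filter_subset _ _
    have hXc : (X.card : ℝ) = dn G Y y := rfl
    have hX2 : (X.card : ℝ) ≤ 2 * n := by
      have h1 := (hYmem y hy).2
      have h2 : (dn G Finset.univ y : ℝ) = dn G Y y + dn G (Finset.univ \ Y) y := by
        exact_mod_cast hsplit G y
      have h3 : (0 : ℝ) ≤ dn G (Finset.univ \ Y) y := by positivity
      linarith
    have hlow : ∀ w ∈ X, (n / 4 - 1 : ℝ) - dn G (Finset.univ \ Y) y ≤ dn G X w := by
      intro w hw
      rw [hX, Finset.mem_filter] at hw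
      have hJ : J.Adj y w := (hadj y (hYmem y hy).1 w (hYmem w hw.1).1).2 hw.2
      have h1 := hterm y w hJ
      have h2 : codn J y w ≤ dn G X w + dn J (Finset.univ \ Y) y := by
        unfold codn dn
        refine le_trans (Finset.card_le_card ?_) (Finset.card_union_le _ _)
        intro z hz
        rw [Finset.mem_filter] at hz
        rw [Finset.mem_union]
        by_cases hzY : z ∈ Y
        · left
          rw [Finset.mem_filter, hX, Finset.mem_filter]
          exact ⟨⟨hzY, (hadj y (hYmem y hy).1 z (hYmem z hzY).1).1 hz.2.1⟩,
            (hadj w (hYmem w hw.1).1 z (hYmem z hzY).1).1 hz.2.2⟩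
        · right
          rw [Finset.mem_filter, Finset.mem_sdiff]
          exact ⟨⟨Finset.mem_univ _, hzY⟩, hz.2.1⟩
      have h3 : dn J Y y = dn G Y y := by
        unfold dn
        congr 1
        apply Finset.filter_congr
        intro z hz
        exact hadj y (hYmem y hy).1 z (hYmem z hz).1
      have h4 := hdeg y (hYmem y hy).1
      have h5 := hsplit J y
      have h6 := hsplit G y
      have h7 : codn J y w ≤ dn G X w + dn G (Finset.univ \ Y) y := by omega
      have h8 : (codn J y w : ℝ) ≤ dn G X w + dn G (Finset.univ \ Y) y := by exact_mod_cast h7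
      linarith
    have hup : ∑ w ∈ X, (dn G X w : ℝ) ≤ 1 / 10 * (n : ℝ) ^ 2 := by
      by_contra hcon
      push Not at hcon
      obtain ⟨A, hA, B, hB, h⟩ := hkst n hnM G X hX2 hcon.le
      exact hno ⟨A, hA.trans hXY, B, hB.trans hXY, h⟩
    have hs := Finset.sum_le_sum hlow
    simp only [Finset.sum_const, nsmul_eq_mul] at hs
    rw [← hXc]
    have h9 := mul_le_mul_of_nonneg_right hX2
      (by positivity : (0 : ℝ) ≤ (dn G (Finset.univ \ Y) y : ℝ))
    linarith
  have hs := Finset.sum_le_sum hpt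
  rw [Finset.sum_sub_distrib, ← Finset.sum_mul, ← Finset.mul_sum] at hs
  simp only [Finset.sum_const, nsmul_eq_mul] at hs
  have h1 := mul_le_mul_of_nonneg_left hO (by positivity : (0 : ℝ) ≤ 2 * n)
  have h2 := mul_le_mul_of_nonneg_right hE (by linarith : (0 : ℝ) ≤ n / 4 - 1)
  have h3 := mul_le_mul_of_nonneg_right hYN (by positivity : (0 : ℝ) ≤ 1 / 10 * (n : ℝ) ^ 2)
  have h4 : 0 < (n : ℝ) * N := by positivity
  have h5 := mul_le_mul_of_nonneg_left hn100 h4.le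
  have h6 : 0 < (n : ℝ) * N * n := by positivity
  nlinarith

lemma sparse (s : ℕ) : ∃ M : ℕ, ∀ (α W : Type) [Fintype α] [Fintype W] (H : SimpleGraph α)
    (G : SimpleGraph W), GoodH H s → M ≤ Fintype.card α →
    (∀ w, (999 / 1000 : ℝ) * Fintype.card α ≤ dn G Finset.univ w) →
    (100000 : ℝ) * Fintype.card α ≤ Fintype.card W → IsMinor H G := by
  obtain ⟨M1, hM1⟩ := mader s
  obtain ⟨M2, hM2⟩ := terminal_contra (12 * s + 1) (by omega)
  refine ⟨max M1 (max M2 1), fun α W _ _ H G hH hM hmin hN => ?_⟩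
  set n := Fintype.card α with hn
  have hm1 : M1 ≤ n := le_trans (le_max_left _ _) hM
  have hm2 : M2 ≤ n := le_trans (le_trans (le_max_left _ _) (le_max_right _ _)) hM
  have hn0 : 0 < n := le_trans (le_trans (le_max_right _ _) (le_max_right _ _)) hM
  have hn1 : (1 : ℝ) ≤ n := by exact_mod_cast hn0
  have hmader := hM1 α W H G hH hm1 hn0
  by_contra hcon
  set N : ℝ := (Fintype.card W : ℝ) with hNdef
  have hd1 : (dsum G : ℝ) < (1 + 1 / 1000) * n * N := by
    by_contra h
    push Not at h
    apply hcon
    apply hmader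
    refine ⟨Finset.univ, ?_, G, minorOn_refl G, ?_⟩
    · rw [← Finset.card_pos, Finset.card_univ]
      have : 0 < N := by linarith
      rw [hNdef] at this
      exact_mod_cast this
    · rw [Finset.card_univ]; exact h
  have hd2 : 999 / 1000 * n * N ≤ (dsum G : ℝ) := by
    have h1 : ∑ v : W, (999 / 1000 * n : ℝ) ≤ ∑ v : W, (dn G Finset.univ v : ℝ) :=
      Finset.sum_le_sum (fun v _ => hmin v)
    simp only [Finset.sum_const, nsmul_eq_mul, Finset.card_univ] at h1
    unfold dsum
    push_cast
    linarith
  set K := ⌈4 / 1000 * N⌉₊ with hK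
  have hK1 : 4 / 1000 * N ≤ K := Nat.le_ceil _
  have hK2 : (K : ℝ) < 4 / 1000 * N + 1 := Nat.ceil_lt_add_one (by linarith)
  rcases process G n K with ⟨V, J, Z, hM, hVc, -, -, -, -, hds⟩ |
    ⟨k, hk, V, J, Z, ⟨hM, hVc, hZV, hZc, hadj, hdeg, hds⟩, hterm⟩
  · apply hcon
    apply hmader
    have hVc' : (V.card : ℝ) + K = N := by rw [hNdef]; exact_mod_cast hVc
    refine ⟨V, ?_, J, hM, ?_⟩
    · rw [← Finset.card_pos]
      have : (0 : ℝ) < V.card := by linarith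
      exact_mod_cast this
    · have h1 : (V.card : ℝ) = N - K := by linarith
      rw [h1]
      have h2 := mul_le_mul_of_nonneg_right hK1 (by linarith : (0 : ℝ) ≤ n)
      nlinarith
  · obtain ⟨S, hSY, hST, hmax⟩ := exists_max_tiled G (12 * s + 1) (by omega)
      (Z.filter (fun z => (dn G Finset.univ z : ℝ) < 2 * n))
    by_cases hSc : (S.card : ℝ) ≤ 2 * n
    · refine hM2 n hm2 G J Z S hmin hd1.le hN ?_ hadj hdeg hterm hSc hmax
      have h1 : N ≤ Z.card + 2 * k := by rw [hNdef]; exact_mod_cast hZc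
      have h2 : (k : ℝ) ≤ K := by exact_mod_cast hk
      linarith
    · apply hcon
      push Not at hSc
      refine minor_of_tiled hH (minorOn_refl G) (Finset.subset_univ S) hST 1 one_pos le_rfl ?_
        (by omega) hn0 ?_
      · push_cast; linarith
      · rw [← hn]; linarith

end BCM

theorem bounded_component_minor (Δ : ℕ) (hΔ : 0 < Δ) (ν : ℝ) (hν : 0 < ν) :
    ∃ μ : ℝ, 0 < μ ∧ ∀ s : ℕ, 0 < s → ∃ M : ℕ,
      ∀ (α W : Type) [Fintype α] [Fintype W] (H : SimpleGraph α) (G : SimpleGraph W),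
        H.Colorable 2 → (∀ v, deg H v ≤ Δ) →
        (∀ v : α, (H.connectedComponentMk v).supp.ncard ≤ s) →
        M ≤ Fintype.card α →
        (∀ w : W, (1 - μ) * (Fintype.card α : ℝ) ≤ (deg G w : ℝ)) →
        (1 + ν) * (Fintype.card α : ℝ) ≤ (Fintype.card W : ℝ) →
        IsMinor H G := by
  classical
  refine ⟨1 / 1000, by norm_num, fun s hs => ?_⟩
  set γ : ℝ := min ν (1 / 2) with hγ
  have hγ0 : 0 < γ := lt_min hν (by norm_num)
  have hγν : γ ≤ ν := min_le_left _ _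
  have hγ2 : γ ≤ 1 / 2 := min_le_right _ _
  obtain ⟨M1, hM1⟩ := sparse s
  obtain ⟨t, ht⟩ := exists_nat_gt (12 * s / γ)
  have htpos : 0 < t := by
    have : (0 : ℝ) < t := lt_of_le_of_lt (by positivity) ht
    exact_mod_cast this
  obtain ⟨M2, hM2⟩ := dense_tiling γ 100000 hγ0 (by linarith) (by norm_num) t htpos
  refine ⟨max M1 (max M2 1), fun α W _ _ H G hcol _ hcomp hM hmin hN => ?_⟩
  have hm1 : M1 ≤ Fintype.card α := le_trans (le_max_left _ _) hM
  have hm2 : M2 ≤ Fintype.card α := le_trans (le_trans (le_max_left _ _) (le_max_right _ _)) hM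
  have hn0 : 0 < Fintype.card α := le_trans (le_trans (le_max_right _ _) (le_max_right _ _)) hM
  have hn1 : (1 : ℝ) ≤ Fintype.card α := by exact_mod_cast hn0
  have hH : GoodH H s := by
    refine ⟨?_, ?_⟩
    · obtain ⟨c⟩ := hcol
      refine ⟨fun v => decide (c v = 0), fun u v huv h => ?_⟩
      have hne := c.valid huv
      have h' := decide_eq_decide.1 h
      generalize c u = a at *
      generalize c v = b at *
      revert a b
      decide
    · intro v
      refine le_trans (le_of_eq ?_) (hcomp v)
      rw [← Set.ncard_coe_finset]
      congr 1
      ext w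
      simp only [Finset.coe_filter, Finset.mem_univ, true_and, Set.mem_ofPred_eq,
        SimpleGraph.ConnectedComponent.mem_supp_iff, SimpleGraph.ConnectedComponent.eq]
      exact ⟨fun h => h.symm, fun h => h.symm⟩
  have hdeg : ∀ w, deg G w = dn G Finset.univ w := by
    intro w
    unfold deg dn
    rw [← Set.ncard_coe_finset]
    congr 1
    ext x
    simp
  have hmin' : ∀ w, (999 / 1000 : ℝ) * Fintype.card α ≤ dn G Finset.univ w := by
    intro w
    rw [← hdeg]
    have := hmin w
    linarith
  by_cases hbig : (100000 : ℝ) * Fintype.card α ≤ Fintype.card W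
  · exact hM1 α W H G hH hm1 hmin' hbig
  · push Not at hbig
    have hγn : γ * (Fintype.card α : ℝ) ≤ ν * Fintype.card α :=
      mul_le_mul_of_nonneg_right hγν (by linarith)
    have hγn2 : γ * (Fintype.card α : ℝ) ≤ 1 / 2 * Fintype.card α :=
      mul_le_mul_of_nonneg_right hγ2 (by linarith)
    obtain ⟨S, hS1, hS2, hS3⟩ := hM2 _ hm2 W G Finset.univ (by rw [Finset.card_univ]; exact hbig.le)
      (by rw [Finset.card_univ]; linarith) (fun v _ => by have := hmin' v; linarith)
    refine minor_of_tiled hH (minorOn_refl G) hS1 hS2 γ hγ0 (by linarith) ?_ htpos hn0 hS3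
    rw [div_lt_iff₀ hγ0] at ht
    linarith
end

section
/- There exists ε > 0 such that for every positive integer K there exist ε′ > 0 and C ≥ 1 (both depending on K) such that for every D ≥ C and every graph G with minimum degree δ(G) ≥ D and |V(G)| ≥ C·D, at least one of the following holds: (1) G contains pairwise vertex-disjoint subgraphs J₁, …, J_K such that |V(J_i)| ≤ D/ε and d(J_i) ≥ ε·D for every i ∈ {1,…,K}; or (2) G contains a minor H such that d(H) ≥ (1+ε′)·D/2. -/
open SimpleGraph

open scoped Classical in
/-- State of the greedy contraction after `k` steps. -/
structure CState_s4 {W : Type} [Fintype W] (G : SimpleGraph W) (k : ℕ) (lam : ℝ)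
    (U R : Finset W) (μ : W → Set W) (H : SimpleGraph W) : Prop where
  cardU : U.card = 2 * k
  cardR : R.card + k = Fintype.card W
  supp : ∀ x y, H.Adj x y → x ∈ R
  disj : ∀ x ∈ R, ∀ y ∈ R, x ≠ y → Disjoint (μ x) (μ y)
  conn : ∀ x ∈ R, (G.induce (μ x)).Connected
  adj : ∀ x y, H.Adj x y → ∃ a ∈ μ x, ∃ b ∈ μ y, G.Adj a b
  offR : ∀ x, x ∉ U → x ∈ R
  offμ : ∀ x, x ∉ U → μ x = {x}
  onμ : ∀ x ∈ R, x ∈ U → μ x ⊆ (U : Set W)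
  offadj : ∀ x y, x ∉ U → y ∉ U → H.Adj x y → G.Adj x y
  edges : (G.edgeFinset.card : ℝ) ≤ H.edgeFinset.card + k * lam

/-- Contract the edge `uv` onto `v`. -/
def contr {W : Type} (H : SimpleGraph W) (u v : W) : SimpleGraph W where
  Adj x y := x ≠ u ∧ y ≠ u ∧ x ≠ y ∧
    (H.Adj x y ∨ (x = v ∧ H.Adj u y) ∨ (y = v ∧ H.Adj u x))
  symm := ⟨by
    rintro x y ⟨h1, h2, h3, h4⟩
    refine ⟨h2, h1, h3.symm, ?_⟩
    rcases h4 with h | h | h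
    · exact Or.inl h.symm
    · exact Or.inr (Or.inr h)
    · exact Or.inr (Or.inl h)⟩
  loopless := ⟨fun x h => h.2.2.1 rfl⟩

open scoped Classical in
theorem contr_edges {W : Type} [Fintype W] (H : SimpleGraph W) (u v : W) (huv : u ≠ v) :
    H.edgeFinset.card ≤ (contr H u v).edgeFinset.card + 1 +
      (H.neighborFinset u ∩ H.neighborFinset v).card := by
  set N := H.neighborFinset u \ insert v (H.neighborFinset v) with hN
  have hsub : (H.edgeFinset \ H.incidenceFinset u) ∪ N.image (fun w => s(v, w)) ⊆
      (contr H u v).edgeFinset := by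
    intro e he
    induction e using Sym2.ind with
    | _ x y =>
    rw [Finset.mem_union] at he
    rw [SimpleGraph.mem_edgeFinset, SimpleGraph.mem_edgeSet]
    rcases he with he | he
    · rw [Finset.mem_sdiff, SimpleGraph.mem_edgeFinset, SimpleGraph.mem_incidenceFinset,
        SimpleGraph.mk'_mem_incidenceSet_iff, SimpleGraph.mem_edgeSet] at he
      obtain ⟨h1, h2⟩ := he
      refine ⟨?_, ?_, h1.ne, Or.inl h1⟩
      · rintro rfl; exact h2 ⟨h1, Or.inl rfl⟩
      · rintro rfl; exact h2 ⟨h1, Or.inr rfl⟩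
    · rw [Finset.mem_image] at he
      obtain ⟨w, hw, hwe⟩ := he
      rw [hN, Finset.mem_sdiff, Finset.mem_insert, SimpleGraph.mem_neighborFinset,
        SimpleGraph.mem_neighborFinset] at hw
      push Not at hw
      have hc : (contr H u v).Adj v w :=
        ⟨huv.symm, hw.1.ne', hw.2.1.symm, Or.inr (Or.inl ⟨rfl, hw.1⟩)⟩
      rw [← SimpleGraph.mem_edgeSet, ← hwe]
      exact hc
  have hdisj : Disjoint (H.edgeFinset \ H.incidenceFinset u) (N.image (fun w => s(v, w))) := by
    rw [Finset.disjoint_left]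
    intro e he he2
    rw [Finset.mem_image] at he2
    obtain ⟨w, hw, rfl⟩ := he2
    rw [Finset.mem_sdiff, SimpleGraph.mem_edgeFinset, SimpleGraph.mem_edgeSet] at he
    rw [hN, Finset.mem_sdiff, Finset.mem_insert, SimpleGraph.mem_neighborFinset,
        SimpleGraph.mem_neighborFinset] at hw
    exact hw.2 (Or.inr he.1)
  have h1 := Finset.card_le_card hsub
  rw [Finset.card_union_of_disjoint hdisj, Finset.card_image_of_injective _
    (fun a b h => Sym2.congr_right.1 h)] at h1
  have h2 : H.edgeFinset.card ≤ (H.edgeFinset \ H.incidenceFinset u).card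
      + (H.incidenceFinset u).card := by
    have := Finset.le_card_sdiff (H.incidenceFinset u) H.edgeFinset
    omega
  rw [SimpleGraph.card_incidenceFinset_eq_degree, ← SimpleGraph.card_neighborFinset_eq_degree] at h2
  have h3 : (H.neighborFinset u).card ≤ N.card + 1 +
      (H.neighborFinset u ∩ H.neighborFinset v).card := by
    have : H.neighborFinset u ⊆ (N ∪ {v}) ∪ (H.neighborFinset u ∩ H.neighborFinset v) := by
      intro w hw
      by_cases h : w = v
      · simp [h]
      by_cases h' : w ∈ H.neighborFinset v
      · exact Finset.mem_union_right _ (Finset.mem_inter.2 ⟨hw, h'⟩)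
      · refine Finset.mem_union_left _ (Finset.mem_union_left _ ?_)
        rw [hN, Finset.mem_sdiff, Finset.mem_insert]
        exact ⟨hw, by tauto⟩
    have h4 := Finset.card_le_card this
    have h5 := Finset.card_union_le (N ∪ {v}) (H.neighborFinset u ∩ H.neighborFinset v)
    have h6 := Finset.card_union_le N {v}
    rw [Finset.card_singleton] at h6
    omega
  omega

open scoped Classical in
theorem cstate_nbrs {W : Type} [Fintype W] {G : SimpleGraph W} {k : ℕ} {lam : ℝ}
    {U R : Finset W} {μ : W → Set W} {H : SimpleGraph W} (S : CState_s4 G k lam U R μ H)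
    (v : W) (hv : v ∉ U) :
    (H.neighborFinset v ∩ U).card ≤ (G.neighborFinset v ∩ U).card := by
  have : ∀ y, ∃ b, y ∈ H.neighborFinset v ∩ U → b ∈ μ y ∧ b ∈ G.neighborFinset v ∩ U := by
    intro y
    by_cases hy : y ∈ H.neighborFinset v ∩ U
    · rw [Finset.mem_inter, SimpleGraph.mem_neighborFinset] at hy
      obtain ⟨a, ha, b, hb, hab⟩ := S.adj v y hy.1
      rw [S.offμ v hv] at ha
      obtain rfl : a = v := ha
      refine ⟨b, fun _ => ⟨hb, ?_⟩⟩
      rw [Finset.mem_inter, SimpleGraph.mem_neighborFinset]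
      exact ⟨hab, S.onμ y (S.supp _ _ hy.1.symm) hy.2 hb⟩
    · exact ⟨v, fun h => absurd h hy⟩
  choose f hf using this
  apply Finset.card_le_card_of_injOn f
  · intro y hy
    exact (hf y hy).2
  · intro y hy z hz hyz
    by_contra hne
    have hy' := Finset.mem_coe.1 hy
    have hz' := Finset.mem_coe.1 hz
    have a := (hf y hy').1
    have b := (hf z hz').1
    rw [Finset.mem_inter, SimpleGraph.mem_neighborFinset] at hy' hz'
    have := S.disj y (S.supp _ _ hy'.1.symm) z (S.supp _ _ hz'.1.symm) hne
    rw [Set.disjoint_left] at this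
    exact this a (hyz ▸ b)

open scoped Classical in
theorem cstate_step {W : Type} [Fintype W] {G : SimpleGraph W} {k : ℕ} {lam : ℝ}
    {U R : Finset W} {μ : W → Set W} {H : SimpleGraph W} (S : CState_s4 G k lam U R μ H)
    (u v : W) (hu : u ∉ U) (hv : v ∉ U) (huv : G.Adj v u)
    (hl : 1 + ((G.neighborFinset u ∩ G.neighborFinset v).card : ℝ) +
      (G.neighborFinset v ∩ U).card ≤ lam) :
    CState_s4 G (k+1) lam (insert u (insert v U)) (R.erase u) (Function.update μ v {v, u})
      (contr H u v) := by
  have hne : u ≠ v := huv.ne'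
  have hμ : ∀ x, x ≠ v → Function.update μ v {v, u} x = μ x :=
    fun x hx => Function.update_of_ne hx _ _
  have hμv : Function.update μ v {v, u} v = {v, u} := Function.update_self _ _ _
  have key : ∀ x ∈ R, x ≠ u → x ≠ v → Disjoint (μ x) {v, u} := by
    intro x hx h1 h2
    have a := S.disj x hx u (S.offR u hu) h1
    have b := S.disj x hx v (S.offR v hv) h2
    rw [S.offμ u hu] at a
    rw [S.offμ v hv] at b
    rw [Set.disjoint_singleton_right] at a b
    rw [Set.disjoint_right]
    rintro y (rfl | rfl) <;> assumption
  constructor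
  · rw [Finset.card_insert_of_notMem, Finset.card_insert_of_notMem hv, S.cardU]
    · ring
    · simp [hne, hu]
  · have := Finset.card_erase_add_one (S.offR u hu)
    have := S.cardR
    omega
  · rintro x y ⟨h1, h2, h3, h4⟩
    rw [Finset.mem_erase]
    refine ⟨h1, ?_⟩
    rcases h4 with h | h | h
    · exact S.supp _ _ h
    · exact h.1 ▸ S.offR v hv
    · exact S.supp _ _ h.2.symm
  · intro x hx y hy hxy
    rw [Finset.mem_erase] at hx hy
    by_cases hxv : x = v
    · subst hxv
      rw [hμv, hμ y hxy.symm]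
      exact (key y hy.2 hy.1 hxy.symm).symm
    · rw [hμ x hxv]
      by_cases hyv : y = v
      · subst hyv
        rw [hμv]
        exact key x hx.2 hx.1 hxv
      · rw [hμ y hyv]
        exact S.disj x hx.2 y hy.2 hxy
  · intro x hx
    rw [Finset.mem_erase] at hx
    by_cases hxv : x = v
    · subst hxv
      rw [hμv]
      exact SimpleGraph.induce_pair_connected_of_adj huv
    · rw [hμ x hxv]
      exact S.conn x hx.2
  · have aux : ∀ x y, H.Adj x y → x ≠ u → y ≠ u →
        ∃ a ∈ Function.update μ v {v, u} x, ∃ b ∈ Function.update μ v {v, u} y, G.Adj a b := by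
      have sub : ∀ x, μ x ⊆ Function.update μ v {v, u} x := by
        intro x
        by_cases hxv : x = v
        · subst hxv
          rw [hμv, S.offμ x hv]
          simp
        · rw [hμ x hxv]
      intro x y h _ _
      obtain ⟨a, ha, b, hb, hab⟩ := S.adj x y h
      exact ⟨a, sub x ha, b, sub y hb, hab⟩
    have aux2 : ∀ y, H.Adj u y → y ≠ v →
        ∃ b ∈ Function.update μ v {v, u} y, G.Adj u b := by
      intro y h hyv
      obtain ⟨a, ha, b, hb, hab⟩ := S.adj u y h
      rw [S.offμ u hu] at ha
      obtain rfl : a = u := ha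
      rw [hμ y hyv]
      exact ⟨b, hb, hab⟩
    rintro x y ⟨h1, h2, h3, h4⟩
    rcases h4 with h | ⟨rfl, h⟩ | ⟨rfl, h⟩
    · exact aux x y h h1 h2
    · obtain ⟨b, hb, hab⟩ := aux2 y h h3.symm
      refine ⟨u, ?_, b, hb, hab⟩
      rw [hμv]; simp
    · obtain ⟨b, hb, hab⟩ := aux2 x h h3
      refine ⟨b, hb, u, ?_, hab.symm⟩
      rw [hμv]; simp
  · intro x hx
    simp only [Finset.mem_insert, not_or] at hx
    exact Finset.mem_erase.2 ⟨hx.1, S.offR x hx.2.2⟩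
  · intro x hx
    simp only [Finset.mem_insert, not_or] at hx
    rw [hμ x hx.2.1, S.offμ x hx.2.2]
  · intro x hx hxU
    rw [Finset.mem_erase] at hx
    by_cases hxv : x = v
    · subst hxv
      rw [hμv]
      rintro y (rfl | rfl) <;> simp
    · rw [hμ x hxv]
      simp only [Finset.mem_insert, hx.1, hxv, false_or] at hxU
      intro y hy
      have := S.onμ x hx.2 hxU hy
      simp only [Finset.coe_insert, Set.mem_insert_iff]
      exact Or.inr (Or.inr this)
  · rintro x y hx hy ⟨h1, h2, h3, h4⟩
    simp only [Finset.mem_insert, not_or] at hx hy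
    rcases h4 with h | h | h
    · exact S.offadj x y hx.2.2 hy.2.2 h
    · exact absurd h.1 hx.2.1
    · exact absurd h.1 hy.2.1
  · have h1 := contr_edges H u v hne
    have h2 := S.edges
    have h3 := cstate_nbrs S v hv
    have h4 : (H.neighborFinset u ∩ H.neighborFinset v).card ≤
        (G.neighborFinset u ∩ G.neighborFinset v).card + (H.neighborFinset v ∩ U).card := by
      refine le_trans (Finset.card_le_card ?_) (Finset.card_union_le _ _)
      intro w hw
      simp only [Finset.mem_inter, Finset.mem_union, SimpleGraph.mem_neighborFinset] at hw ⊢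
      by_cases hwU : w ∈ U
      · exact Or.inr ⟨hw.2, hwU⟩
      · exact Or.inl ⟨S.offadj u w hu hwU hw.1, S.offadj v w hv hwU hw.2⟩
    have h5 : (H.edgeFinset.card : ℝ) ≤ (contr H u v).edgeFinset.card + 1 +
      ((G.neighborFinset u ∩ G.neighborFinset v).card + (G.neighborFinset v ∩ U).card) := by
      exact_mod_cast h1.trans (by omega)
    push_cast
    linarith

open scoped Classical in
theorem cstate_start {W : Type} [Fintype W] (G : SimpleGraph W) (lam : ℝ) :
    CState_s4 G 0 lam ∅ Finset.univ (fun x => {x}) G := by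
  constructor <;> try simp

open scoped Classical in
theorem cstate_minor {W : Type} [Fintype W] {G : SimpleGraph W} {k : ℕ} {lam : ℝ}
    {U R : Finset W} {μ : W → Set W} {H : SimpleGraph W} (S : CState_s4 G k lam U R μ H)
    (hR : 0 < R.card) : ∃ (m : ℕ) (H' : SimpleGraph (Fin m)), 0 < m ∧ IsMinor H' G ∧
      density H' = (H.edgeFinset.card : ℝ) / R.card := by
  let e := R.equivFin.symm
  let f : Fin R.card ↪ W := ⟨fun i => (e i : W), fun a b h => e.injective (Subtype.ext h)⟩
  refine ⟨R.card, H.comap f, hR, ⟨fun i => μ (f i), ?_, ?_, ?_⟩, ?_⟩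
  · intro i j hij
    exact S.disj _ (e i).2 _ (e j).2 (fun h => hij (f.injective h))
  · intro i
    exact S.conn _ (e i).2
  · intro i j h
    exact S.adj _ _ h
  · have hm : (H.comap f).map f = H := by
      ext x y
      rw [SimpleGraph.map_adj]
      constructor
      · rintro ⟨a, b, h, rfl, rfl⟩
        exact h
      · intro h
        have hx := S.supp _ _ h
        have hy := S.supp _ _ h.symm
        have ex : f (e.symm ⟨x, hx⟩) = x := congrArg Subtype.val (e.apply_symm_apply ⟨x, hx⟩)
        have ey : f (e.symm ⟨y, hy⟩) = y := congrArg Subtype.val (e.apply_symm_apply ⟨y, hy⟩)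
        refine ⟨e.symm ⟨x, hx⟩, e.symm ⟨y, hy⟩, ?_, ex, ey⟩
        rw [SimpleGraph.comap_adj, ex, ey]
        exact h
    have hc : (H.comap f).edgeSet.ncard = H.edgeFinset.card := by
      have h1 : H.edgeFinset.card = H.edgeSet.ncard := by
        rw [← Set.ncard_coe_finset, SimpleGraph.coe_edgeFinset]
      have h2 : H.edgeSet.ncard = ((H.comap f).map f).edgeSet.ncard := by rw [hm]
      rw [h1, h2, SimpleGraph.edgeSet_map]
      exact (Set.ncard_image_of_injective _ f.sym2Map.injective).symm
    rw [density, hc]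
    simp

open scoped Classical in
/-- A set of vertices without high density has few vertices of high inner degree. -/
theorem few_bad {W : Type} [Fintype W] (G : SimpleGraph W) (A : Finset W) (D : ℝ) (hD : 0 < D)
    (hA0 : 0 < A.card) (hA : (A.card : ℝ) ≤ 2 * D)
    (hd : subDensity ((⊤ : G.Subgraph).induce (A : Set W)) < 1 / 200 * D) :
    ((A.filter (fun u => D / 8 < ((G.neighborFinset u ∩ A).card : ℝ))).card : ℝ) ≤ 4 / 25 * D := by
  set J := (⊤ : G.Subgraph).induce (A : Set W) with hJ
  set F := A.filter (fun u => D / 8 < ((G.neighborFinset u ∩ A).card : ℝ)) with hF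
  have hA' : (0 : ℝ) < A.card := by exact_mod_cast hA0
  have hv : J.verts.ncard = A.card := by
    rw [hJ, SimpleGraph.Subgraph.induce_verts, Set.ncard_coe_finset]
  have he : J.edgeSet.ncard = J.spanningCoe.edgeFinset.card := by
    rw [← Set.ncard_coe_finset, SimpleGraph.coe_edgeFinset]
    rfl
  have h1 : (J.spanningCoe.edgeFinset.card : ℝ) < 1 / 200 * D * A.card := by
    rw [subDensity, hv, he, div_lt_iff₀ hA'] at hd
    exact hd
  have h2 := J.spanningCoe.sum_degrees_eq_twice_card_edges
  have h3 : ∀ u ∈ A, J.spanningCoe.degree u = (G.neighborFinset u ∩ A).card := by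
    intro u hu
    rw [← SimpleGraph.card_neighborFinset_eq_degree]
    congr 1
    ext w
    simp [hJ, hu, and_comm]
  have h4 : (F.card : ℝ) * (D / 8) ≤ ∑ u ∈ F, (J.spanningCoe.degree u : ℝ) := by
    rw [← nsmul_eq_mul]
    apply Finset.card_nsmul_le_sum
    intro u hu
    rw [hF, Finset.mem_filter] at hu
    rw [h3 u hu.1]
    exact hu.2.le
  have h5 : ∑ u ∈ F, (J.spanningCoe.degree u : ℝ) ≤ ∑ u, (J.spanningCoe.degree u : ℝ) :=
    Finset.sum_le_sum_of_subset_of_nonneg (Finset.subset_univ _) (fun _ _ _ => by positivity)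
  have h6 : ∑ u, (J.spanningCoe.degree u : ℝ) = 2 * J.spanningCoe.edgeFinset.card := by
    exact_mod_cast h2
  have h7 : (F.card : ℝ) * (D / 8) ≤ (4 / 25 * D) * (D / 8) := by nlinarith
  exact le_of_mul_le_mul_right h7 (by positivity)

set_option maxHeartbeats 2000000 in
open scoped Classical in
theorem key_lemma (K : ℕ) (hK : 0 < K) (D : ℝ) (hC : 160000 * (K : ℝ) ≤ D)
    (W : Type) [Fintype W] (G : SimpleGraph W)
    (hmin : ∀ w : W, D ≤ (G.degree w : ℝ)) (hn : 160000 * (K : ℝ) * D ≤ (Fintype.card W : ℝ))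
    (X : Finset W) (hX : (X.card : ℝ) ≤ K * (200 * D))
    (hno : ∀ A : Finset W, Disjoint A X → (A.card : ℝ) ≤ 2 * D →
      subDensity ((⊤ : G.Subgraph).induce (A : Set W)) < 1 / 200 * D) :
    ∃ (m : ℕ) (H : SimpleGraph (Fin m)), 0 < m ∧ IsMinor H G ∧
      (1 + 1 / 800) * (D / 2) ≤ density H := by
  have hK1 : (1 : ℝ) ≤ K := by exact_mod_cast hK
  have hDbig : 160000 ≤ D := by linarith
  have hD : 0 < D := by linarith
  set n : ℕ := Fintype.card W with hndef
  have hnpos : (0 : ℝ) < n := by nlinarith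
  have hdeg := G.sum_degrees_eq_twice_card_edges
  have hdegR : ∑ w, (G.degree w : ℝ) = 2 * G.edgeFinset.card := by exact_mod_cast hdeg
  have hlow : (n : ℝ) * D ≤ 2 * G.edgeFinset.card := by
    rw [← hdegR, ← nsmul_eq_mul]
    exact Finset.card_nsmul_le_sum _ _ _ (fun w _ => hmin w)
  by_cases hdense : (1 + 1 / 800) * (D / 2) ≤ (G.edgeFinset.card : ℝ) / n
  · have S := cstate_start G 0
    obtain ⟨m, H, h1, h2, h3⟩ := cstate_minor S (by
      rw [Finset.card_univ]; exact_mod_cast hnpos)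
    refine ⟨m, H, h1, h2, ?_⟩
    rw [h3, Finset.card_univ]
    exact hdense
  push Not at hdense
  rw [div_lt_iff₀ hnpos] at hdense
  -- the low-degree vertices outside `X`
  set L : Finset W := Finset.univ.filter (fun w => w ∉ X ∧ (G.degree w : ℝ) ≤ 2 * D) with hL
  set Q : Finset W := Finset.univ.filter (fun w => 2 * D < (G.degree w : ℝ)) with hQ
  have hexc : ∀ T : Finset W, ∑ w ∈ T, ((G.degree w : ℝ) - D) ≤ 1 / 800 * D * n := by
    intro T
    have h1 : ∑ w ∈ T, ((G.degree w : ℝ) - D) ≤ ∑ w, ((G.degree w : ℝ) - D) :=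
      Finset.sum_le_sum_of_subset_of_nonneg (Finset.subset_univ _)
        (fun w _ _ => by linarith [hmin w])
    rw [Finset.sum_sub_distrib (s := Finset.univ), hdegR, Finset.sum_const, Finset.card_univ, nsmul_eq_mul] at h1
    have : (Fintype.card W : ℝ) = n := rfl
    rw [this] at h1
    linarith
  have hQc : (Q.card : ℝ) ≤ 1 / 800 * n := by
    have h1 : (Q.card : ℝ) * D ≤ ∑ w ∈ Q, ((G.degree w : ℝ) - D) := by
      rw [← nsmul_eq_mul]
      apply Finset.card_nsmul_le_sum
      intro w hw
      rw [hQ, Finset.mem_filter] at hw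
      linarith [hw.2]
    have h2 := hexc Q
    have : (Q.card : ℝ) * D ≤ (1 / 800 * n) * D := by linarith
    exact le_of_mul_le_mul_right this hD
  have hLc : ((Lᶜ).card : ℝ) ≤ 1 / 400 * n := by
    have h1 : Lᶜ ⊆ X ∪ Q := by
      intro w hw
      simp only [hL, Finset.mem_compl, Finset.mem_filter, Finset.mem_univ, true_and,
        not_and, not_le] at hw
      rw [Finset.mem_union]
      by_cases hwX : w ∈ X
      · exact Or.inl hwX
      · right
        rw [hQ, Finset.mem_filter]
        exact ⟨Finset.mem_univ _, hw hwX⟩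
    have h2 : ((Lᶜ).card : ℝ) ≤ X.card + Q.card := by
      exact_mod_cast (Finset.card_le_card h1).trans (Finset.card_union_le _ _)
    linarith
  have hLsum : ∑ w ∈ Lᶜ, (G.degree w : ℝ) ≤ 3 / 800 * D * n := by
    have h1 := hexc Lᶜ
    rw [Finset.sum_sub_distrib, Finset.sum_const, nsmul_eq_mul] at h1
    nlinarith
  have hdouble : ∀ P T : Finset W, ∑ v ∈ P, ((G.neighborFinset v ∩ T).card : ℝ) ≤
      ∑ w ∈ T, (G.degree w : ℝ) := by
    intro P T
    have h1 := Finset.sum_card_bipartiteAbove_eq_sum_card_bipartiteBelow (s := P) (t := T) G.Adj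
    have h2 : ∀ v, (G.neighborFinset v ∩ T).card = (Finset.bipartiteAbove G.Adj T v).card := by
      intro v
      congr 1
      ext w
      simp [Finset.bipartiteAbove, and_comm]
    have h3 : ∀ w, (Finset.bipartiteBelow G.Adj P w).card ≤ G.degree w := by
      intro w
      rw [← SimpleGraph.card_neighborFinset_eq_degree]
      apply Finset.card_le_card
      intro x hx
      simp only [Finset.bipartiteBelow, Finset.mem_filter] at hx
      simpa using hx.2.symm
    have h4 : ∑ v ∈ P, (G.neighborFinset v ∩ T).card ≤ ∑ w ∈ T, G.degree w := by
      simp only [h2]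
      rw [h1]
      exact Finset.sum_le_sum (fun w _ => h3 w)
    exact_mod_cast h4
  have hmarkov : ∀ T : Finset W, ((Finset.univ.filter (fun v => D / 8 <
      ((G.neighborFinset v ∩ T).card : ℝ))).card : ℝ) * (D / 8) ≤ ∑ w ∈ T, (G.degree w : ℝ) := by
    intro T
    refine le_trans ?_ (hdouble (Finset.univ.filter (fun v => D / 8 <
      ((G.neighborFinset v ∩ T).card : ℝ))) T)
    rw [← nsmul_eq_mul]
    apply Finset.card_nsmul_le_sum
    intro v hv
    rw [Finset.mem_filter] at hv
    exact hv.2.le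
  -- the greedy contraction
  have hgreedy : ∀ k : ℕ, (k : ℝ) < n / 100 + 1 → ∃ U R μ H,
      CState_s4 G k (3 / 8 * D + 1) U R μ H ∧ U ⊆ L := by
    intro k
    induction k with
    | zero => exact fun _ => ⟨∅, _, _, G, cstate_start G _, by simp⟩
    | succ k ih =>
      intro hk
      push_cast at hk
      obtain ⟨U, R, μ, H, S, hUL⟩ := ih (by linarith)
      have hUc : (U.card : ℝ) = 2 * k := by exact_mod_cast S.cardU
      have hUsum : ∑ w ∈ U, (G.degree w : ℝ) ≤ 4 * k * D := by
        have : ∑ w ∈ U, (G.degree w : ℝ) ≤ U.card • (2 * D) := by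
          apply Finset.sum_le_card_nsmul
          intro w hw
          have := hUL hw
          rw [hL, Finset.mem_filter] at this
          exact this.2.2
        rw [nsmul_eq_mul, hUc] at this
        linarith
      set B1 := Finset.univ.filter (fun v => D / 8 < ((G.neighborFinset v ∩ Lᶜ).card : ℝ)) with hB1
      set B2 := Finset.univ.filter (fun v => D / 8 < ((G.neighborFinset v ∩ U).card : ℝ)) with hB2
      have hb1 : (B1.card : ℝ) ≤ 3 / 100 * n := by
        have h := hmarkov Lᶜ
        have : (B1.card : ℝ) * (D / 8) ≤ (3 / 100 * n) * (D / 8) := by linarith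
        exact le_of_mul_le_mul_right this (by positivity)
      have hb2 : (B2.card : ℝ) ≤ 32 * k := by
        have h := hmarkov U
        have : (B2.card : ℝ) * (D / 8) ≤ (32 * k) * (D / 8) := by linarith
        exact le_of_mul_le_mul_right this (by positivity)
      obtain ⟨v, hv⟩ : ∃ v, v ∉ Lᶜ ∪ U ∪ B1 ∪ B2 := by
        by_contra hcon
        push Not at hcon
        have h1 : n ≤ (Lᶜ ∪ U ∪ B1 ∪ B2).card := by
          rw [hndef, ← Finset.card_univ]
          exact Finset.card_le_card (fun x _ => hcon x)
        have h2 := Finset.card_union_le (Lᶜ ∪ U ∪ B1) B2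
        have h3 := Finset.card_union_le (Lᶜ ∪ U) B1
        have h4 := Finset.card_union_le Lᶜ U
        have h5 : (n : ℝ) ≤ (Lᶜ).card + U.card + B1.card + B2.card := by
          exact_mod_cast (by omega)
        linarith
      simp only [Finset.mem_union, not_or, Finset.mem_compl, not_not] at hv
      obtain ⟨⟨⟨hvL, hvU⟩, hv1⟩, hv2⟩ := hv
      rw [hB1, Finset.mem_filter, not_and, not_lt] at hv1
      rw [hB2, Finset.mem_filter, not_and, not_lt] at hv2
      have hv1 := hv1 (Finset.mem_univ _)
      have hv2 := hv2 (Finset.mem_univ _)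
      have hvL' := hvL
      rw [hL, Finset.mem_filter] at hvL'
      set A := G.neighborFinset v ∩ L with hA
      have hAc : (A.card : ℝ) + (G.neighborFinset v ∩ Lᶜ).card = G.degree v := by
        rw [← SimpleGraph.card_neighborFinset_eq_degree]
        have := Finset.card_inter_add_card_sdiff (G.neighborFinset v) L
        rw [Finset.sdiff_eq_inter_compl] at this
        exact_mod_cast this
      have hAlow : 7 / 8 * D ≤ A.card := by linarith [hmin v]
      have hAhigh : (A.card : ℝ) ≤ 2 * D := by
        have : (0 : ℝ) ≤ (G.neighborFinset v ∩ Lᶜ).card := by positivity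
        linarith [hvL'.2.2]
      have hAX : Disjoint A X := by
        rw [Finset.disjoint_left]
        intro x hx
        rw [hA, Finset.mem_inter, hL, Finset.mem_filter] at hx
        exact hx.2.2.1
      have hbad := few_bad G A D hD (by
        have : (0 : ℝ) < A.card := by linarith
        exact_mod_cast this) hAhigh (hno A hAX hAhigh)
      set F := A.filter (fun u => D / 8 < ((G.neighborFinset u ∩ A).card : ℝ)) with hF
      obtain ⟨u, huA, hu⟩ : ∃ u ∈ A, u ∉ F ∪ (G.neighborFinset v ∩ U) := by
        by_contra hcon
        push Not at hcon
        have h1 : A.card ≤ F.card + (G.neighborFinset v ∩ U).card :=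
          (Finset.card_le_card hcon).trans (Finset.card_union_le _ _)
        have h2 : (A.card : ℝ) ≤ F.card + (G.neighborFinset v ∩ U).card := by exact_mod_cast h1
        linarith
      have huA' := huA
      rw [hA, Finset.mem_inter, SimpleGraph.mem_neighborFinset] at huA'
      simp only [Finset.mem_union, not_or] at hu
      have huU : u ∉ U := by
        intro h
        apply hu.2
        rw [Finset.mem_inter, SimpleGraph.mem_neighborFinset]
        exact ⟨huA'.1, h⟩
      have huF : ((G.neighborFinset u ∩ A).card : ℝ) ≤ D / 8 := by
        by_contra hcon
        push Not at hcon
        exact hu.1 (Finset.mem_filter.2 ⟨huA, hcon⟩)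
      have hcod : ((G.neighborFinset u ∩ G.neighborFinset v).card : ℝ) ≤
          (G.neighborFinset u ∩ A).card + (G.neighborFinset v ∩ Lᶜ).card := by
        have : (G.neighborFinset u ∩ G.neighborFinset v).card ≤
          (G.neighborFinset u ∩ A).card + (G.neighborFinset v ∩ Lᶜ).card := by
          refine le_trans (Finset.card_le_card ?_) (Finset.card_union_le _ _)
          intro w hw
          rw [Finset.mem_inter] at hw
          rw [Finset.mem_union, Finset.mem_inter, Finset.mem_inter, Finset.mem_inter,
            Finset.mem_compl]
          tauto
        exact_mod_cast this
      refine ⟨_, _, _, _, cstate_step S u v huU hvU huA'.1 (by linarith), ?_⟩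
      intro x hx
      simp only [Finset.mem_insert] at hx
      rcases hx with rfl | rfl | hx
      · exact huA'.2
      · exact hvL
      · exact hUL hx
  set s := ⌈(n : ℝ) / 100⌉₊ with hs
  have hs1 : (n : ℝ) / 100 ≤ s := Nat.le_ceil _
  have hs2 : (s : ℝ) < n / 100 + 1 := Nat.ceil_lt_add_one (by positivity)
  obtain ⟨U, R, μ, H, S, -⟩ := hgreedy s hs2
  have hRc : (R.card : ℝ) + s = n := by exact_mod_cast S.cardR
  have hnbig : 160000 ≤ (n : ℝ) := by nlinarith
  have hRpos : (0 : ℝ) < R.card := by linarith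
  obtain ⟨m, H', h1, h2, h3⟩ := cstate_minor S (by exact_mod_cast hRpos)
  refine ⟨m, H', h1, h2, ?_⟩
  rw [h3, le_div_iff₀ hRpos]
  have h4 := S.edges
  have h5 : (R.card : ℝ) = n - s := by linarith
  rw [h5]
  have h6 : (s : ℝ) * (3 / 8 * D + 1) ≤ s * (7 / 16 * D) := by
    apply mul_le_mul_of_nonneg_left _ (by positivity)
    linarith
  have h7 : (n : ℝ) / 100 * D ≤ s * D := mul_le_mul_of_nonneg_right hs1 hD.le
  have h8 : (0 : ℝ) ≤ s * D := by positivity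
  linarith

theorem repeated_density_increment :
    ∃ ε : ℝ, 0 < ε ∧ ∀ K : ℕ, 0 < K →
      ∃ ε' C : ℝ, 0 < ε' ∧ 1 ≤ C ∧
        ∀ D : ℝ, C ≤ D →
          ∀ (W : Type) [Fintype W] (G : SimpleGraph W),
            (∀ w : W, D ≤ (deg G w : ℝ)) → C * D ≤ (Fintype.card W : ℝ) →
            ((∃ J : Fin K → G.Subgraph,
                (∀ i j, i ≠ j → Disjoint (J i).verts (J j).verts) ∧
                (∀ i, ((J i).verts.ncard : ℝ) ≤ D / ε ∧ ε * D ≤ subDensity (J i))) ∨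
             (∃ (m : ℕ) (H : SimpleGraph (Fin m)), 0 < m ∧ IsMinor H G ∧
                (1 + ε') * (D / 2) ≤ density H)) := by
  classical
  refine ⟨1 / 200, by norm_num, fun K hK => ⟨1 / 800, 160000 * K, by norm_num, ?_, ?_⟩⟩
  · have : (1 : ℝ) ≤ K := by exact_mod_cast hK
    linarith
  intro D hD W _ G hmin hn
  by_cases hminor : ∃ (m : ℕ) (H : SimpleGraph (Fin m)), 0 < m ∧ IsMinor H G ∧
      (1 + 1 / 800) * (D / 2) ≤ density H
  · exact Or.inr hminor
  left
  have hmin' : ∀ w, D ≤ (G.degree w : ℝ) := by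
    intro w
    have h := hmin w
    rw [deg, Set.ncard_eq_toFinset_card'] at h
    exact h
  have hDpos : 0 < D := by
    have : (1 : ℝ) ≤ K := by exact_mod_cast hK
    linarith
  have main : ∀ j : ℕ, j ≤ K → ∃ J : Fin j → G.Subgraph,
      (∀ i i', i ≠ i' → Disjoint (J i).verts (J i').verts) ∧
      (∀ i, ((J i).verts.ncard : ℝ) ≤ D / (1 / 200) ∧ 1 / 200 * D ≤ subDensity (J i)) := by
    intro j
    induction j with
    | zero => exact fun _ => ⟨fun i => i.elim0, fun i => i.elim0, fun i => i.elim0⟩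
    | succ j ih =>
      intro hj
      obtain ⟨J, hJ1, hJ2⟩ := ih (by omega)
      set X : Finset W := Finset.univ.biUnion (fun i => (J i).verts.toFinset) with hXdef
      have hX : (X.card : ℝ) ≤ K * (200 * D) := by
        have h1 : (X.card : ℝ) ≤ ∑ i, ((J i).verts.toFinset.card : ℝ) := by
          exact_mod_cast Finset.card_biUnion_le
        have h2 : ∑ i, ((J i).verts.toFinset.card : ℝ) ≤ ∑ _i : Fin j, (200 * D) := by
          apply Finset.sum_le_sum
          intro i _
          have := (hJ2 i).1
          rw [Set.ncard_eq_toFinset_card'] at this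
          linarith
        rw [Finset.sum_const, Finset.card_univ, Fintype.card_fin, nsmul_eq_mul] at h2
        have h3 : (j : ℝ) ≤ K := by exact_mod_cast (by omega)
        have h4 : (j : ℝ) * (200 * D) ≤ K * (200 * D) :=
          mul_le_mul_of_nonneg_right h3 (by positivity)
        linarith
      have hex : ∃ A : Finset W, Disjoint A X ∧ (A.card : ℝ) ≤ 2 * D ∧
          1 / 200 * D ≤ subDensity ((⊤ : G.Subgraph).induce (A : Set W)) := by
        by_contra hcon
        push Not at hcon
        exact hminor (key_lemma K hK D hD W G hmin' hn X hX hcon)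
      obtain ⟨A, hAX, hAc, hAd⟩ := hex
      have hdis : ∀ i, Disjoint (A : Set W) (J i).verts := by
        intro i
        rw [Set.disjoint_left]
        intro x hx hx'
        refine Finset.disjoint_left.1 hAX hx ?_
        rw [hXdef, Finset.mem_biUnion]
        exact ⟨i, Finset.mem_univ _, by simpa using hx'⟩
      refine ⟨Fin.cons ((⊤ : G.Subgraph).induce (A : Set W)) J, ?_, ?_⟩
      · intro i i'
        refine Fin.cases ?_ (fun a => ?_) i <;> refine Fin.cases ?_ (fun b => ?_) i'
        · intro h; exact absurd rfl h
        · intro _; exact hdis b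
        · intro _; exact (hdis a).symm
        · intro h
          exact hJ1 a b (fun hab => h (by rw [hab]))
      · intro i
        refine Fin.cases ?_ (fun a => ?_) i
        · refine ⟨?_, hAd⟩
          rw [Fin.cons_zero, SimpleGraph.Subgraph.induce_verts, Set.ncard_coe_finset]
          linarith
        · exact hJ2 a
  exact main K le_rfl
end

section
/- If 0 < ε < 1/100 and G is a graph with density d(G) ≥ 2/ε, then G contains either (1) a subgraph J such that |V(J)| ≤ d(G)/(2ε) and d(J) ≥ ε·d(G), or (2) a minor H such that d(H) ≥ (1+ε)·d(G). -/
open SimpleGraph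

section helpers
open Classical Finset

variable {V : Type} [Fintype V]

/-- Degeneracy orientation. -/
lemma di_orient (H : SimpleGraph V) (K : ℝ) (hK : 0 ≤ K) (F : Finset V) :
    (∀ X ⊆ F, X.Nonempty → ∑ x ∈ X, ((X.filter (H.Adj x)).card : ℝ) ≤ K * X.card) →
    ∃ Np : V → Finset V, (∀ u, ((Np u).card : ℝ) ≤ K) ∧
      ∀ u ∈ F, ∀ w ∈ F, H.Adj u w → w ∈ Np u ∨ u ∈ Np w := by
  induction F using Finset.strongInduction with
  | H F ih =>
    intro h
    by_cases hF : F.Nonempty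
    · have h1 := h F (Finset.Subset.refl _) hF
      obtain ⟨x, hx, hxd⟩ : ∃ x ∈ F, ((F.filter (H.Adj x)).card : ℝ) ≤ K := by
        by_contra hc
        push Not at hc
        have := Finset.sum_lt_sum_of_nonempty hF hc
        rw [Finset.sum_const, nsmul_eq_mul] at this
        linarith
      obtain ⟨Np, hN1, hN2⟩ := ih (F.erase x) (Finset.erase_ssubset hx)
        (fun X hX hXn => h X (hX.trans (Finset.erase_subset _ _)) hXn)
      refine ⟨Function.update Np x (F.filter (H.Adj x)), ?_, ?_⟩
      · intro u
        by_cases hu : u = x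
        · subst hu; simpa using hxd
        · simpa [Function.update_of_ne hu] using hN1 u
      · intro u hu w hw huw
        by_cases hux : u = x
        · subst hux; left; simp [hw, huw]
        · by_cases hwx : w = x
          · subst hwx; right; simp [hu, huw.symm]
          · have := hN2 u (by simp [hux, hu]) w (by simp [hwx, hw]) huw
            simpa [Function.update_of_ne hux, Function.update_of_ne hwx] using this
    · refine ⟨fun _ => ∅, fun _ => by simpa using hK, ?_⟩
      intro u hu
      exact absurd ⟨u, hu⟩ hF

lemma di_Q (G : SimpleGraph V) (ε d : ℝ) (hε : 0 < ε) (hε' : ε < 1 / 100) (hd : 2 / ε ≤ d)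
    (hJ : ∀ S : Finset V, (S.card : ℝ) ≤ d / (2 * ε) →
      ∑ x ∈ S, ((S.filter (G.Adj x)).card : ℝ) ≤ 2 * ε * d * S.card)
    (M : Finset V) (hM : (M.card : ℝ) ≤ 2.02 * d) (T : Finset V) :
    ∑ v ∈ T, ((M.filter (G.Adj v)).card : ℝ) ≤ 2 * ε * d * (1.05 * T.card + 2.02 * d) := by
  have hd0 : 0 < d := lt_of_lt_of_le (by positivity) hd
  have hεd : 2 ≤ d * ε := by rwa [div_le_iff₀ hε] at hd
  have base : ∀ T : Finset V, (T.card : ℝ) + M.card ≤ d / (2 * ε) →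
      ∑ v ∈ T, ((M.filter (G.Adj v)).card : ℝ) ≤ 2 * ε * d * (T.card + M.card) := by
    intro T hT
    have hc : ((T ∪ M).card : ℝ) ≤ T.card + M.card := by exact_mod_cast Finset.card_union_le T M
    have := hJ (T ∪ M) (hc.trans hT)
    calc _ ≤ ∑ v ∈ T, (((T ∪ M).filter (G.Adj v)).card : ℝ) := by
          apply Finset.sum_le_sum
          intro v _
          exact_mod_cast Finset.card_le_card
            (Finset.filter_subset_filter _ Finset.subset_union_right)
      _ ≤ ∑ v ∈ T ∪ M, (((T ∪ M).filter (G.Adj v)).card : ℝ) := by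
          apply Finset.sum_le_sum_of_subset_of_nonneg Finset.subset_union_left
          intros; positivity
      _ ≤ _ := this
      _ ≤ _ := by gcongr
  induction T using Finset.strongInduction with
  | H T ih =>
    by_cases hT : (T.card : ℝ) + M.card ≤ d / (2 * ε)
    · refine (base T hT).trans ?_
      gcongr
      have : (0:ℝ) ≤ T.card := by positivity
      linarith
    · push Not at hT
      set q := d / (2 * ε) with hq
      have hqd : q * (2 * ε) = d := by rw [hq]; field_simp
      have hq0 : 0 < q := by positivity
      have hdq : d ≤ 0.02 * q := by nlinarith
      have hd200 : 200 ≤ d := by nlinarith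
      have hpos : 0 ≤ q - 2.02 * d := by linarith
      set s := ⌊q - 2.02 * d⌋₊ with hs
      have hs1 : (s : ℝ) ≤ q - 2.02 * d := Nat.floor_le hpos
      have hs2 : q - 2.02 * d < s + 1 := Nat.lt_floor_add_one _
      have hsT : s ≤ T.card := by
        have : (s : ℝ) ≤ T.card := by linarith
        exact_mod_cast this
      obtain ⟨T0, hT0, hT0c⟩ := Finset.exists_subset_card_eq hsT
      have hspos : (0:ℝ) < s := by linarith
      have hlt : T \ T0 ⊂ T := by
        apply Finset.sdiff_ssubset hT0
        rw [← Finset.card_pos, hT0c]; exact_mod_cast hspos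
      have h1 := ih _ hlt
      have h2 := base T0 (by rw [hT0c]; linarith)
      rw [← Finset.sum_sdiff hT0]
      have hc : ((T \ T0).card : ℝ) = T.card - s := by
        rw [Finset.card_sdiff_of_subset hT0, hT0c, Nat.cast_sub hsT]
      rw [hc] at h1
      rw [hT0c] at h2
      have h3 : 2 * ε * d * ((s:ℝ) + M.card) ≤ 2 * ε * d * (1.05 * s) := by
        gcongr
        linarith
      nlinarith

/-- Twice the number of edges of an induced subgraph. -/
lemma di_induce_edges (G : SimpleGraph V) (S : Finset V) :
    (2 * ((G.induce (S : Set V)).edgeSet.ncard : ℝ)) =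
      ∑ x ∈ S, ((S.filter (G.Adj x)).card : ℝ) := by
  have h1 := (G.induce (S : Set V)).sum_degrees_eq_twice_card_edges
  have h2 : (G.induce (S : Set V)).edgeSet.ncard = #(G.induce (S : Set V)).edgeFinset := by
    rw [← SimpleGraph.coe_edgeFinset, Set.ncard_coe_finset]
  rw [h2]
  have h3 : ∑ x ∈ S, (S.filter (G.Adj x)).card =
      ∑ v : (S : Set V), (G.induce (S : Set V)).degree v := by
    rw [← Finset.sum_coe_sort S]
    apply Finset.sum_congr rfl
    intro x _
    rw [← SimpleGraph.card_neighborFinset_eq_degree]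
    symm
    apply Finset.card_bij (fun (a : (S : Set V)) _ => (a : V))
    · intro a ha
      simpa using ha
    · intro a _ b _ h; exact Subtype.ext h
    · intro b hb
      simp only [Finset.mem_filter] at hb
      exact ⟨⟨b, hb.1⟩, by simpa using hb.2, rfl⟩
  exact_mod_cast (h3.trans h1).symm

/-- The contraction of `G` along `g`. -/
def diH (G : SimpleGraph V) (g : V → V) : SimpleGraph V where
  Adj x y := x ≠ y ∧ ∃ a b, g a = x ∧ g b = y ∧ G.Adj a b
  symm := ⟨fun x y ⟨h, a, b, ha, hb, hab⟩ => ⟨h.symm, b, a, hb, ha, hab.symm⟩⟩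
  loopless := ⟨fun x h => h.1 rfl⟩

def diGood (G : SimpleGraph V) (g : V → V) : Prop :=
  (∀ x, g (g x) = g x) ∧ ∀ x, g x ≠ x → G.Adj x (g x)

lemma di_minor (G : SimpleGraph V) (g : V → V) (hg : diGood G g) (X : Set V)
    (hX : ∀ x ∈ X, g x = x) : IsMinor ((diH G g).induce X) G := by
  refine ⟨fun x => {a | g a = x}, ?_, ?_, ?_⟩
  · intro u v huv
    rw [Set.disjoint_left]
    intro a ha hb
    exact huv (Subtype.ext (ha.symm.trans hb))
  · rintro ⟨x, hx⟩
    rw [SimpleGraph.connected_iff_exists_forall_reachable]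
    refine ⟨⟨x, hX x hx⟩, ?_⟩
    rintro ⟨a, ha⟩
    simp only [Set.mem_ofPred_eq] at ha
    by_cases h : a = x
    · subst h; exact SimpleGraph.Reachable.refl _
    · apply SimpleGraph.Adj.reachable
      have := hg.2 a (by rw [ha]; exact fun h' => h h'.symm)
      rw [ha] at this
      simpa using this.symm
  · rintro ⟨u, hu⟩ ⟨v, hv⟩ h
    obtain ⟨_, a, b, ha, hb, hab⟩ := h
    exact ⟨a, ha, b, hb, hab⟩

lemma di_step (G : SimpleGraph V) (g : V → V) (hg : diGood G g) (v u : V)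
    (hv : ∀ x, g x = v ↔ x = v) (hu : g u = u) (hvu : G.Adj v u)
    (A : Finset V) (hA : ∀ x, x ∈ A ↔ g x ≠ x) :
    diGood G (Function.update g v u) ∧
    #(diH G g).edgeFinset ≤ #(diH G (Function.update g v u)).edgeFinset
      + #((G.neighborFinset v).filter (· ∈ A)) + 1
      + #(((G.neighborFinset v).filter (· ∉ A)).filter ((diH G g).Adj u)) := by
  have hne : u ≠ v := hvu.ne'
  set g' := Function.update g v u with hg'
  have g'v : g' v = u := by simp [hg']
  have g'n : ∀ x, x ≠ v → g' x = g x := fun x hx => by simp [hg', hx]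
  have hgn : ∀ x, x ≠ v → g x ≠ v := fun x hx h => hx ((hv x).1 h)
  refine ⟨⟨?_, ?_⟩, ?_⟩
  · intro x
    by_cases hx : x = v
    · subst hx; rw [g'v, g'n _ hne, hu]
    · rw [g'n x hx, g'n _ (hgn x hx), hg.1]
  · intro x h
    by_cases hx : x = v
    · subst hx; rw [g'v]; exact hvu
    · rw [g'n x hx] at h ⊢; exact hg.2 x h
  · set H := diH G g with hH
    set H' := diH G g' with hH'
    set R := (G.neighborFinset v).filter (· ∉ A) with hR
    set N := R.filter (fun w => w ≠ u ∧ ¬ H.Adj u w) with hN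
    -- degree of v in H
    have hdeg : #(H.incidenceFinset v) ≤ #((G.neighborFinset v).filter (· ∈ A)) + #R := by
      rw [SimpleGraph.card_incidenceFinset_eq_degree, ← SimpleGraph.card_neighborFinset_eq_degree]
      have hsub : H.neighborFinset v ⊆ (G.neighborFinset v).image g := by
        intro w hw
        rw [SimpleGraph.mem_neighborFinset] at hw
        obtain ⟨_, a, b, ha, hb, hab⟩ := hw
        rw [hv] at ha
        subst ha
        rw [Finset.mem_image]
        exact ⟨b, by simpa using hab, hb⟩
      calc _ ≤ _ := Finset.card_le_card hsub
        _ ≤ _ := Finset.card_image_le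
        _ = _ := by rw [hR, Finset.card_filter_add_card_filter_not]
    have hRc : #R ≤ #N + 1 + #(R.filter (H.Adj u)) := by
      have : R ⊆ (N ∪ {u}) ∪ R.filter (H.Adj u) := by
        intro w hw
        simp only [hN, Finset.mem_union, Finset.mem_filter, Finset.mem_singleton]
        tauto
      calc _ ≤ _ := Finset.card_le_card this
        _ ≤ _ := Finset.card_union_le _ _
        _ ≤ _ := by gcongr; exact (Finset.card_union_le _ _).trans (by simp)
    have hRfix : ∀ w ∈ R, g w = w ∧ G.Adj v w := by
      intro w hw
      simp only [hR, Finset.mem_filter, SimpleGraph.mem_neighborFinset, hA] at hw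
      exact ⟨by tauto, hw.1⟩
    have hinj : #(N.image (fun w => s(u, w))) = #N := by
      apply Finset.card_image_of_injective
      intro a b h
      exact Sym2.congr_right.1 h
    have hdisj : Disjoint (H.edgeFinset \ H.incidenceFinset v) (N.image (fun w => s(u, w))) := by
      rw [Finset.disjoint_left]
      intro e he he'
      rw [Finset.mem_image] at he'
      obtain ⟨w, hw, rfl⟩ := he'
      simp only [hN, Finset.mem_filter] at hw
      simp only [Finset.mem_sdiff, SimpleGraph.mem_edgeFinset, SimpleGraph.mem_edgeSet] at he
      exact hw.2.2 he.1
    have hsub : (H.edgeFinset \ H.incidenceFinset v) ∪ (N.image (fun w => s(u, w))) ⊆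
        H'.edgeFinset := by
      intro e he
      rw [Finset.mem_union] at he
      rcases he with he | he
      · induction e using Sym2.ind with
        | _ x y =>
          simp only [Finset.mem_sdiff, SimpleGraph.mem_edgeFinset, SimpleGraph.mem_edgeSet,
            SimpleGraph.mem_incidenceFinset, SimpleGraph.incidenceSet, Set.mem_ofPred_eq,
            Sym2.mem_iff] at he ⊢
          obtain ⟨hxy, hnot⟩ := he
          obtain ⟨hne', a, b, ha, hb, hab⟩ := id hxy
          have hxv : v ≠ x := fun h => hnot ⟨hxy, Or.inl h⟩
          have hyv : v ≠ y := fun h => hnot ⟨hxy, Or.inr h⟩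
          refine ⟨hne', a, b, ?_, ?_, hab⟩
          · rw [g'n, ha]
            rintro rfl
            exact hxv (((hv a).2 rfl).symm.trans ha)
          · rw [g'n, hb]
            rintro rfl
            exact hyv (((hv b).2 rfl).symm.trans hb)
      · rw [Finset.mem_image] at he
        obtain ⟨w, hw, rfl⟩ := he
        simp only [hN, Finset.mem_filter] at hw
        obtain ⟨hw1, hw2, hw3⟩ := hw
        obtain ⟨hw4, hw5⟩ := hRfix w hw1
        rw [SimpleGraph.mem_edgeFinset, SimpleGraph.mem_edgeSet]
        exact ⟨hw2.symm, v, w, g'v, by rw [g'n w hw5.ne', hw4], hw5⟩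
    have hcard := Finset.card_le_card hsub
    rw [Finset.card_union_of_disjoint hdisj, hinj] at hcard
    have h1 : #H.edgeFinset ≤ #(H.edgeFinset \ H.incidenceFinset v) + #(H.incidenceFinset v) := by
      have := Finset.le_card_sdiff (H.incidenceFinset v) H.edgeFinset
      omega
    omega

set_option maxHeartbeats 1600000 in
lemma di_greedy (G : SimpleGraph V) [Nonempty V] (ε d : ℝ) (hε : 0 < ε) (hε' : ε < 1 / 100)
    (hd : 2 / ε ≤ d)
    (hmin : ∀ v, d ≤ (#(G.neighborFinset v) : ℝ))
    (hsum : ∑ v, (#(G.neighborFinset v) : ℝ) ≤ 2.02 * d * Fintype.card V)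
    (hJ : ∀ S : Finset V, (S.card : ℝ) ≤ d / (2 * ε) →
      ∑ x ∈ S, ((S.filter (G.Adj x)).card : ℝ) ≤ 2 * ε * d * S.card)
    (g : V → V) (A : Finset V) (hA : ∀ x, x ∈ A ↔ g x ≠ x)
    (hgg : ∀ x, g (g x) = g x)
    (hM : ∀ X : Finset V, (∀ x ∈ X, g x = x) → X.Nonempty →
      ∑ x ∈ X, ((X.filter ((diH G g).Adj x)).card : ℝ) ≤ 2.02 * d * X.card)
    (hAdeg : ∀ x ∈ A, (#(G.neighborFinset x) : ℝ) ≤ 5 * d)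
    (hAc : (#A : ℝ) ≤ 2 * ε * Fintype.card V) :
    ∃ v u, (∀ x, g x = v ↔ x = v) ∧ g u = u ∧ G.Adj v u ∧
      (#(G.neighborFinset v) : ℝ) ≤ 5 * d ∧
      (#((G.neighborFinset v).filter (· ∈ A)) : ℝ) + 1
        + #(((G.neighborFinset v).filter (· ∉ A)).filter ((diH G g).Adj u)) ≤ 0.5 * d := by
  have hd0 : 0 < d := lt_of_lt_of_le (by positivity) hd
  have hεd : 2 ≤ d * ε := by rwa [div_le_iff₀ hε] at hd
  have hd200 : 200 ≤ d := by nlinarith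
  set n : ℝ := (Fintype.card V : ℝ) with hn
  have hn0 : 0 < n := by rw [hn]; exact_mod_cast Fintype.card_pos
  set H := diH G g with hH
  obtain ⟨Np, hNp, hor⟩ := di_orient H (2.02 * d) (by positivity)
    (Finset.univ.filter (fun x => g x = x)) (by
      intro X hX hXn
      exact hM X (fun x hx => by simpa using hX hx) hXn)
  set a : V → ℝ := fun v => #((G.neighborFinset v).filter (· ∈ A)) with ha
  set e : V → ℝ := fun v => ∑ u ∈ G.neighborFinset v, (#((Np u).filter (G.Adj v)) : ℝ) with he
  have hsa : ∑ v, a v ≤ 10 * ε * d * n := by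
    have h1 : ∑ v, a v = ∑ x ∈ A, (#(G.neighborFinset x) : ℝ) := by
      have h2 : ∀ v, a v = ∑ x ∈ A, if G.Adj v x then (1:ℝ) else 0 := by
        intro v
        simp only [ha]
        rw [← Finset.sum_filter, Finset.sum_const, nsmul_eq_mul, mul_one]
        congr 2
        ext x; simp [and_comm]
      simp_rw [h2]
      rw [Finset.sum_comm]
      apply Finset.sum_congr rfl
      intro x _
      rw [← Finset.sum_filter, Finset.sum_const, nsmul_eq_mul, mul_one]
      congr 2
      ext y; simp [G.adj_comm]
    rw [h1]
    calc _ ≤ ∑ x ∈ A, 5 * d := Finset.sum_le_sum hAdeg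
      _ = #A * (5 * d) := by rw [Finset.sum_const, nsmul_eq_mul]
      _ ≤ (2 * ε * n) * (5 * d) := by gcongr
      _ = _ := by ring
  have hse : ∑ v, e v ≤ 2 * ε * d * (1.05 * (2.02 * d * n) + 2.02 * d * n) := by
    have h1 : ∑ v, e v = ∑ u, ∑ v ∈ G.neighborFinset u, (#((Np u).filter (G.Adj v)) : ℝ) := by
      simp only [he]
      apply Finset.sum_comm'
      intro x y
      simp [G.adj_comm]
    rw [h1]
    calc _ ≤ ∑ u, 2 * ε * d * (1.05 * (#(G.neighborFinset u) : ℝ) + 2.02 * d) :=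
          Finset.sum_le_sum fun u _ => di_Q G ε d hε hε' hd hJ (Np u) (hNp u) _
      _ = 2 * ε * d * (1.05 * (∑ u, (#(G.neighborFinset u) : ℝ)) + 2.02 * d * n) := by
          rw [← Finset.mul_sum, Finset.sum_add_distrib, ← Finset.mul_sum, Finset.sum_const,
            nsmul_eq_mul, Finset.card_univ]
          ring
      _ ≤ _ := by gcongr
  set Hi := Finset.univ.filter (fun v => 5 * d < (#(G.neighborFinset v) : ℝ)) with hHi
  have hHic : (#Hi : ℝ) ≤ 0.255 * n := by
    have h1 : ∑ v, (d + if 5 * d < (#(G.neighborFinset v) : ℝ) then 4 * d else 0) ≤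
        ∑ v, (#(G.neighborFinset v) : ℝ) := by
      apply Finset.sum_le_sum
      intro v _
      have := hmin v
      split_ifs <;> linarith
    rw [Finset.sum_add_distrib, ← Finset.sum_filter, Finset.sum_const, Finset.sum_const,
      nsmul_eq_mul, nsmul_eq_mul, Finset.card_univ, ← hHi] at h1
    have h2 := h1.trans hsum
    rw [← hn] at h2
    by_contra hc
    push Not at hc
    nlinarith
  set C := Finset.univ.filter (fun v => (#(G.neighborFinset v) : ℝ) ≤ 5 * d ∧ v ∉ A ∧
    v ∉ A.image g) with hC
  have hCc : 0.705 * n ≤ #C := by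
    have h1 : (Finset.univ : Finset V) ⊆ ((C ∪ Hi) ∪ A) ∪ A.image g := by
      intro v _
      simp only [hC, hHi, Finset.mem_union, Finset.mem_filter, Finset.mem_univ, true_and]
      by_cases h1 : (#(G.neighborFinset v) : ℝ) ≤ 5 * d
      · tauto
      · push Not at h1
        tauto
    have h2 := Finset.card_le_card h1
    have h3 := Finset.card_union_le ((C ∪ Hi) ∪ A) (A.image g)
    have h4 := Finset.card_union_le (C ∪ Hi) A
    have h5 := Finset.card_union_le C Hi
    have h6 : #(A.image g) ≤ #A := Finset.card_image_le
    rw [Finset.card_univ] at h2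
    have h7 : Fintype.card V ≤ #C + #Hi + #A + #A := by omega
    have h8 : n ≤ #C + #Hi + #A + #A := by rw [hn]; exact_mod_cast h7
    nlinarith
  obtain ⟨v, hvC, hv⟩ : ∃ v ∈ C, a v * d + 2.4 * e v ≤ 0.425 * d ^ 2 := by
    by_contra hc
    push Not at hc
    have hCn : (0:ℝ) < #C := by nlinarith
    have h1 : ∑ v ∈ C, 0.425 * d ^ 2 ≤ ∑ v ∈ C, (a v * d + 2.4 * e v) :=
      Finset.sum_le_sum fun v hv => (hc v hv).le
    have h2 : ∑ v ∈ C, (a v * d + 2.4 * e v) ≤ ∑ v, (a v * d + 2.4 * e v) := by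
      apply Finset.sum_le_sum_of_subset_of_nonneg (Finset.subset_univ _)
      intro i _ _
      have h1 : 0 ≤ a i := Nat.cast_nonneg _
      have h2 : 0 ≤ e i := Finset.sum_nonneg fun _ _ => Nat.cast_nonneg _
      exact add_nonneg (mul_nonneg h1 hd0.le) (mul_nonneg (by norm_num) h2)
    have h2' : ∑ v, (a v * d + 2.4 * e v) = (∑ v, a v) * d + 2.4 * ∑ v, e v := by
      rw [Finset.sum_add_distrib, ← Finset.sum_mul, ← Finset.mul_sum]
    rw [h2'] at h2
    rw [Finset.sum_const, nsmul_eq_mul] at h1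
    have hp : 0 < d ^ 2 * n := by positivity
    have h3 : (∑ v, a v) * d ≤ 0.1 * (d ^ 2 * n) := by
      calc _ ≤ (10 * ε * d * n) * d := by gcongr
        _ = 10 * ε * (d ^ 2 * n) := by ring
        _ ≤ _ := by gcongr; linarith
    have h4 : (∑ v, e v) ≤ 0.08283 * (d ^ 2 * n) := by
      calc _ ≤ _ := hse
        _ = (8.282 * ε) * (d ^ 2 * n) := by ring
        _ ≤ _ := by gcongr; linarith
    have h5 : 0.705 * n * (0.425 * d ^ 2) ≤ #C * (0.425 * d ^ 2) := by gcongr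
    nlinarith
  simp only [hC, Finset.mem_filter, Finset.mem_univ, true_and] at hvC
  obtain ⟨hv5, hvA, hvB⟩ := hvC
  set R := (G.neighborFinset v).filter (· ∉ A) with hR
  have ha0 : 0 ≤ a v := Nat.cast_nonneg _
  have he0 : 0 ≤ e v := Finset.sum_nonneg fun _ _ => Nat.cast_nonneg _
  have hRc : d - a v ≤ #R := by
    have h1 : #((G.neighborFinset v).filter (· ∈ A)) + #R = #(G.neighborFinset v) := by
      rw [hR, Finset.card_filter_add_card_filter_not]
    have h2 : a v + #R = #(G.neighborFinset v) := by simp only [ha]; exact_mod_cast h1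
    have := hmin v
    linarith
  have had : a v < 0.43 * d := by
    by_contra hc
    push Not at hc
    nlinarith
  have hR0 : (0:ℝ) < #R := by linarith
  have hRne : R.Nonempty := by rw [← Finset.card_pos]; exact_mod_cast hR0
  have hRsub : ∀ w ∈ R, g w = w ∧ G.Adj v w := by
    intro w hw
    simp only [hR, Finset.mem_filter, SimpleGraph.mem_neighborFinset, hA] at hw
    exact ⟨by tauto, hw.1⟩
  have hRs : ∑ u ∈ R, (#(R.filter (H.Adj u)) : ℝ) ≤ 2 * e v := by
    have h1 : ∀ u ∈ R, (#(R.filter (H.Adj u)) : ℝ) ≤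
        #(R.filter (· ∈ Np u)) + #(R.filter (u ∈ Np ·)) := by
      intro u hu
      have : R.filter (H.Adj u) ⊆ R.filter (· ∈ Np u) ∪ R.filter (u ∈ Np ·) := by
        intro w hw
        simp only [Finset.mem_filter, Finset.mem_union] at hw ⊢
        have := hor u (by simpa using (hRsub u hu).1) w (by simpa using (hRsub w hw.1).1) hw.2
        tauto
      exact_mod_cast (Finset.card_le_card this).trans (Finset.card_union_le _ _)
    have h2 : ∑ u ∈ R, (#(R.filter (u ∈ Np ·)) : ℝ) = ∑ u ∈ R, (#(R.filter (· ∈ Np u)) : ℝ) := by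
      simp_rw [Finset.card_filter]
      push_cast
      rw [Finset.sum_comm]
    have h3 : ∑ u ∈ R, (#(R.filter (· ∈ Np u)) : ℝ) ≤ e v := by
      calc _ ≤ ∑ u ∈ R, (#((Np u).filter (G.Adj v)) : ℝ) := by
            apply Finset.sum_le_sum
            intro u hu
            have : R.filter (· ∈ Np u) ⊆ (Np u).filter (G.Adj v) := by
              intro w hw
              simp only [Finset.mem_filter] at hw ⊢
              exact ⟨hw.2, (hRsub w hw.1).2⟩
            exact_mod_cast Finset.card_le_card this
        _ ≤ _ := by
            apply Finset.sum_le_sum_of_subset_of_nonneg (Finset.filter_subset _ _)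
            intros; positivity
    calc _ ≤ _ := Finset.sum_le_sum h1
      _ ≤ _ := by rw [Finset.sum_add_distrib, h2]; linarith
  obtain ⟨u, huR, hu⟩ : ∃ u ∈ R, (#(R.filter (H.Adj u)) : ℝ) * #R ≤ 2 * e v := by
    by_contra hc
    push Not at hc
    have h1 := Finset.sum_lt_sum_of_nonempty hRne hc
    rw [Finset.sum_const, nsmul_eq_mul, ← Finset.sum_mul] at h1
    have h2 := mul_le_mul_of_nonneg_right hRs hR0.le
    linarith
  refine ⟨v, u, ?_, (hRsub u huR).1, (hRsub u huR).2, hv5, ?_⟩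
  · intro x
    constructor
    · intro hx
      by_contra hne
      apply hvB
      rw [Finset.mem_image]
      exact ⟨x, (hA x).2 (by rw [hx]; exact fun h => hne h.symm), hx⟩
    · rintro rfl
      by_contra h
      exact hvA ((hA x).2 h)
  · change a v + 1 + (#(R.filter (H.Adj u)) : ℝ) ≤ 0.5 * d
    set t : ℝ := (#(R.filter (H.Adj u)) : ℝ) with ht
    have ht0 : 0 ≤ t := by positivity
    have h1 : t * (d - a v) ≤ 2 * e v := (mul_le_mul_of_nonneg_left hRc ht0).trans hu
    by_contra hc
    push Not at hc
    have h2 : 0.495 * d - a v < t := by linarith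
    have h3 : (0.495 * d - a v) * (d - a v) ≤ t * (d - a v) :=
      mul_le_mul_of_nonneg_right h2.le (by linarith)
    nlinarith [sq_nonneg (a v - 0.33 * d)]

set_option maxHeartbeats 1600000 in
lemma di_core (G : SimpleGraph V) [Nonempty V] (ε d : ℝ) (hε : 0 < ε) (hε' : ε < 1 / 100)
    (hd : 2 / ε ≤ d)
    (hmin : ∀ v, d ≤ (#(G.neighborFinset v) : ℝ))
    (hE : d * Fintype.card V ≤ #G.edgeFinset)
    (hJ : ∀ S : Finset V, (S.card : ℝ) ≤ d / (2 * ε) →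
      ∑ x ∈ S, ((S.filter (G.Adj x)).card : ℝ) ≤ 2 * ε * d * S.card) :
    ∃ g, diGood G g ∧ ∃ X : Finset V, (∀ x ∈ X, g x = x) ∧ X.Nonempty ∧
      2 * (1 + ε) * d * X.card ≤ ∑ x ∈ X, ((X.filter ((diH G g).Adj x)).card : ℝ) := by
  by_contra hcon
  push Not at hcon
  have hd0 : 0 < d := lt_of_lt_of_le (by positivity) hd
  have hεd : 2 ≤ d * ε := by rwa [div_le_iff₀ hε] at hd
  have hd200 : 200 ≤ d := by nlinarith
  have hM : ∀ g, diGood G g → ∀ X : Finset V, (∀ x ∈ X, g x = x) → X.Nonempty →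
      ∑ x ∈ X, ((X.filter ((diH G g).Adj x)).card : ℝ) ≤ 2.02 * d * X.card := by
    intro g hg X h1 h2
    refine (hcon g hg X h1 h2).le.trans ?_
    gcongr
    linarith
  have hid : diH G id = G := by
    ext x y
    constructor
    · rintro ⟨_, a, b, rfl, rfl, h⟩; exact h
    · intro h; exact ⟨h.ne, x, y, rfl, rfl, h⟩
  have hgid : diGood G id := ⟨fun _ => rfl, fun x h => absurd rfl h⟩
  have hsum : ∑ v, (#(G.neighborFinset v) : ℝ) ≤ 2.02 * d * Fintype.card V := by
    have := hM id hgid Finset.univ (fun _ _ => rfl) Finset.univ_nonempty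
    rw [hid, Finset.card_univ] at this
    refine le_trans (le_of_eq ?_) this
    apply Finset.sum_congr rfl
    intro x _
    congr 2
    ext y; simp
  set n : ℝ := (Fintype.card V : ℝ) with hn
  have hnd : d ≤ n := by
    obtain ⟨v⟩ := ‹Nonempty V›
    refine (hmin v).trans ?_
    rw [hn]
    exact_mod_cast Finset.card_le_univ _
  have key : ∀ i : ℕ, (i : ℝ) ≤ 2 * ε * n + 1 → ∃ g A, diGood G g ∧ (∀ x, x ∈ A ↔ g x ≠ x) ∧
      (∀ x ∈ A, (#(G.neighborFinset x) : ℝ) ≤ 5 * d) ∧ #A = i ∧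
      d * n - i * (0.5 * d) ≤ #(diH G g).edgeFinset := by
    intro i
    induction i with
    | zero =>
      intro _
      refine ⟨id, ∅, hgid, by simp, by simp, by simp, ?_⟩
      have : #(diH G id).edgeFinset = #G.edgeFinset := by
        congr 1
        ext e
        simp [hid]
      rw [this]
      simpa using hE
    | succ i ih =>
      intro hi
      push_cast at hi
      obtain ⟨g, A, hg, hA, hA5, hAc, hH⟩ := ih (by linarith)
      obtain ⟨v, u, hv, hu, hvu, hv5, hloss⟩ := di_greedy G ε d hε hε' hd hmin hsum hJ g A hA hg.1
        (hM g hg) hA5 (by rw [hAc]; linarith)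
      obtain ⟨hg', hst⟩ := di_step G g hg v u hv hu hvu A hA
      have hvA : v ∉ A := by rw [hA]; simpa using (hv v).2 rfl
      refine ⟨Function.update g v u, insert v A, hg', ?_, ?_, ?_, ?_⟩
      · intro x
        by_cases hx : x = v
        · subst hx; simpa using hvu.ne'
        · simp [hx, hA]
      · intro x hx
        rw [Finset.mem_insert] at hx
        rcases hx with rfl | hx
        · exact hv5
        · exact hA5 x hx
      · rw [Finset.card_insert_of_notMem hvA, hAc]
      · have hst' : (#(diH G g).edgeFinset : ℝ) ≤ #(diH G (Function.update g v u)).edgeFinset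
          + #((G.neighborFinset v).filter (· ∈ A)) + 1
          + #(((G.neighborFinset v).filter (· ∉ A)).filter ((diH G g).Adj u)) := by
          exact_mod_cast hst
        push_cast
        linarith
  obtain ⟨g, A, hg, hA, -, hAc, hH⟩ := key ⌈2 * ε * n⌉₊ (Nat.ceil_lt_add_one (by positivity)).le
  have hi1 := Nat.le_ceil (2 * ε * n)
  have hi2 := (Nat.ceil_lt_add_one (show 0 ≤ 2 * ε * n by positivity)).le
  set i := ⌈2 * ε * n⌉₊ with hi
  have hXc : (#(Aᶜ) : ℝ) = n - i := by
    rw [Finset.card_compl, Nat.cast_sub (Finset.card_le_univ _), hAc]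
  have hXfix : ∀ x, x ∈ Aᶜ ↔ g x = x := by
    intro x; rw [Finset.mem_compl, hA]; tauto
  have hXn : (Aᶜ).Nonempty := by
    rw [← Finset.card_pos]
    have : (0:ℝ) < #(Aᶜ) := by rw [hXc]; nlinarith
    exact_mod_cast this
  have hlt := hcon g hg Aᶜ (fun x hx => (hXfix x).1 hx) hXn
  have hsumH : ∑ x ∈ Aᶜ, (((Aᶜ).filter ((diH G g).Adj x)).card : ℝ) =
      2 * #(diH G g).edgeFinset := by
    have hadj : ∀ x y, (diH G g).Adj x y → x ∈ Aᶜ := by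
      rintro x y ⟨_, a, b, rfl, _, _⟩
      rw [hXfix, hg.1]
    have h1 := (diH G g).sum_degrees_eq_twice_card_edges
    have h2 : ∑ x ∈ Aᶜ, ((Aᶜ).filter ((diH G g).Adj x)).card = ∑ x, (diH G g).degree x := by
      rw [← Finset.sum_subset (Finset.subset_univ (Aᶜ))]
      · apply Finset.sum_congr rfl
        intro x _
        rw [← SimpleGraph.card_neighborFinset_eq_degree]
        congr 1
        ext y
        simp only [Finset.mem_filter, SimpleGraph.mem_neighborFinset]
        exact ⟨fun h => h.2, fun h => ⟨hadj y x h.symm, h⟩⟩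
      · intro x _ hx
        rw [← SimpleGraph.card_neighborFinset_eq_degree, Finset.card_eq_zero,
          Finset.eq_empty_iff_forall_notMem]
        intro y hy
        rw [SimpleGraph.mem_neighborFinset] at hy
        exact hx (hadj x y hy)
    exact_mod_cast h2.trans h1
  rw [hsumH, hXc] at hlt
  have h5 : d * (2 * ε * n) ≤ d * i := by gcongr
  have h6 : 0 ≤ ε * (d * i) := by positivity
  nlinarith

lemma di_erase (G : SimpleGraph V) (W : Finset V) (v : V) (hv : v ∈ W) :
    ∑ x ∈ W, ((W.filter (G.Adj x)).card : ℝ) =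
      ∑ x ∈ W.erase v, (((W.erase v).filter (G.Adj x)).card : ℝ)
        + 2 * (W.filter (G.Adj v)).card := by
  rw [← Finset.add_sum_erase W _ hv]
  have h1 : ∀ x ∈ W.erase v, ((W.filter (G.Adj x)).card : ℝ) =
      ((W.erase v).filter (G.Adj x)).card + if G.Adj v x then 1 else 0 := by
    intro x hx
    rw [← Finset.insert_erase hv, Finset.filter_insert]
    simp only [Finset.erase_insert_eq_erase, Finset.erase_idem, G.adj_comm v x]
    split_ifs with h
    · rw [Finset.card_insert_of_notMem (by simp)]
      push_cast; rfl
    · simp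
  rw [Finset.sum_congr rfl h1, Finset.sum_add_distrib, ← Finset.sum_filter, Finset.sum_const,
    nsmul_eq_mul, mul_one]
  have h2 : (W.erase v).filter (G.Adj v) = W.filter (G.Adj v) := by
    ext x
    simp only [Finset.mem_filter, Finset.mem_erase]
    exact ⟨fun h => ⟨h.1.2, h.2⟩, fun h => ⟨⟨h.2.ne', h.1⟩, h.2⟩⟩
  rw [h2]
  ring

lemma di_sub (G : SimpleGraph V) (S : Finset V) :
    ∃ J : G.Subgraph, J.verts = (S : Set V) ∧
      2 * (J.edgeSet.ncard : ℝ) = ∑ x ∈ S, ((S.filter (G.Adj x)).card : ℝ) := by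
  refine ⟨(⊤ : G.Subgraph).induce (S : Set V), rfl, ?_⟩
  rw [← di_induce_edges]
  congr 2
  have : ((⊤ : G.Subgraph).induce (S : Set V)).edgeSet =
      Sym2.map (Subtype.val) '' (G.induce (S : Set V)).edgeSet := by
    ext e
    induction e using Sym2.ind with
    | _ x y =>
      rw [SimpleGraph.Subgraph.mem_edgeSet]
      constructor
      · rintro ⟨hx, hy, h⟩
        exact ⟨s(⟨x, hx⟩, ⟨y, hy⟩), by simpa using h, rfl⟩
      · rintro ⟨e', he', heq⟩
        rw [← SimpleGraph.Subgraph.mem_edgeSet, ← heq]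
        induction e' using Sym2.ind with
        | _ a b =>
          rw [Sym2.map_mk, SimpleGraph.Subgraph.mem_edgeSet]
          exact ⟨a.2, b.2, by simpa using he'⟩
  rw [this, Set.ncard_image_of_injective _ (Sym2.map.injective Subtype.val_injective)]

lemma di_minor_induce {α : Type*} (H : SimpleGraph α) (G : SimpleGraph V) (W : Set V)
    (h : IsMinor H (G.induce W)) : IsMinor H G := by
  obtain ⟨μ, h1, h2, h3⟩ := h
  refine ⟨fun a => Subtype.val '' μ a, ?_, ?_, ?_⟩
  · intro u v huv
    exact (Set.disjoint_image_iff Subtype.val_injective).2 (h1 u v huv)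
  · intro a
    have hc := h2 a
    let f : ((G.induce W).induce (μ a)) →g (G.induce (Subtype.val '' μ a)) :=
      { toFun := fun x => ⟨x.1.1, ⟨x.1, x.2, rfl⟩⟩
        map_rel' := fun h => h }
    have hf : Function.Surjective f := by
      rintro ⟨_, x, hx, rfl⟩
      exact ⟨⟨x, hx⟩, rfl⟩
    exact hc.map f hf
  · intro u v huv
    obtain ⟨a, ha, b, hb, hab⟩ := h3 u v huv
    exact ⟨a, ⟨a, ha, rfl⟩, b, ⟨b, hb, rfl⟩, hab⟩

lemma di_fin {α : Type} [Fintype α] (H : SimpleGraph α) (X : Finset α) (G : SimpleGraph V)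
    (h : IsMinor (H.induce (X : Set α)) G) (hX : X.Nonempty) :
    ∃ (m : ℕ) (H' : SimpleGraph (Fin m)), 0 < m ∧ IsMinor H' G ∧
      2 * density H' * #X = ∑ x ∈ X, ((X.filter (H.Adj x)).card : ℝ) := by
  have e : Fin #X ≃ (X : Set α) := (Fintype.equivFinOfCardEq (by simp)).symm
  have hpos : (0:ℝ) < #X := by exact_mod_cast hX.card_pos
  refine ⟨#X, (H.induce (X : Set α)).comap e, hX.card_pos, ?_, ?_⟩
  · obtain ⟨μ, h1, h2, h3⟩ := h
    exact ⟨fun i => μ (e i), fun u v huv => h1 _ _ (fun h => huv (e.injective h)),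
      fun v => h2 _, fun u v huv => h3 _ _ huv⟩
  · rw [← di_induce_edges]
    have h1 : ((H.induce (X : Set α)).comap e).edgeSet.ncard =
        (H.induce (X : Set α)).edgeSet.ncard :=
      Nat.card_congr (SimpleGraph.Iso.comap e (H.induce (X : Set α))).mapEdgeSet
    rw [density, h1, Nat.card_eq_fintype_card, Fintype.card_fin]
    field_simp

lemma di_main (G : SimpleGraph V) [Nonempty V] (ε d : ℝ) (hε : 0 < ε) (hε' : ε < 1 / 100)
    (hd : 2 / ε ≤ d)
    (hE : 2 * d * Fintype.card V ≤ ∑ x, ((Finset.univ.filter (G.Adj x)).card : ℝ))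
    (hJ : ∀ S : Finset V, (S.card : ℝ) ≤ d / (2 * ε) →
      ∑ x ∈ S, ((S.filter (G.Adj x)).card : ℝ) ≤ 2 * ε * d * S.card) :
    ∃ (m : ℕ) (H : SimpleGraph (Fin m)), 0 < m ∧ IsMinor H G ∧ (1 + ε) * d ≤ density H := by
  have hd0 : 0 < d := lt_of_lt_of_le (by positivity) hd
  let P : Finset V → Prop := fun W => W.Nonempty ∧
    2 * d * #W ≤ ∑ x ∈ W, ((W.filter (G.Adj x)).card : ℝ)
  obtain ⟨W, hWP, hWmin⟩ : ∃ W, P W ∧ ∀ W', P W' → #W ≤ #W' := by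
    obtain ⟨W, hW, hmin⟩ := Finset.exists_min_image (Finset.univ.filter P) Finset.card
      ⟨Finset.univ, by
        simp only [Finset.mem_filter, Finset.mem_univ, true_and]
        exact ⟨Finset.univ_nonempty, by simpa using hE⟩⟩
    exact ⟨W, by simpa using hW, fun W' h => hmin W' (by simpa using h)⟩
  obtain ⟨hWn, hWE⟩ := hWP
  have hmin : ∀ v ∈ W, d ≤ #(W.filter (G.Adj v)) := by
    intro v hv
    have h1 := di_erase G W v hv
    have hcard : (#(W.erase v) : ℝ) = #W - 1 := by
      rw [Finset.card_erase_of_mem hv, Nat.cast_sub hWn.card_pos, Nat.cast_one]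
    by_contra hc
    push Not at hc
    have h2 : 2 * d * #(W.erase v) ≤
        ∑ x ∈ W.erase v, (((W.erase v).filter (G.Adj x)).card : ℝ) := by
      rw [hcard]; linarith
    by_cases hne : (W.erase v).Nonempty
    · have := hWmin _ ⟨hne, h2⟩
      have := Finset.card_erase_lt_of_mem hv
      omega
    · rw [Finset.not_nonempty_iff_eq_empty] at hne
      rw [hne] at h1 hcard
      simp only [Finset.card_empty, Finset.sum_empty, Nat.cast_zero] at h1 hcard
      nlinarith
  have hmap : ∀ S : Finset (W : Set V), ∀ x : (W : Set V),
      #(S.filter ((G.induce (W : Set V)).Adj x)) =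
        #((S.map (Function.Embedding.subtype _)).filter (G.Adj x)) := by
    intro S x
    rw [Finset.filter_map, Finset.card_map]
    congr 1
  have huniv : (Finset.univ : Finset (W : Set V)).map (Function.Embedding.subtype _) = W := by
    ext x; simp
  haveI : Nonempty (W : Set V) := hWn.to_subtype
  have hdeg : ∀ v : (W : Set V), #((G.induce (W : Set V)).neighborFinset v) =
      #(W.filter (G.Adj v)) := by
    intro v
    have := hmap Finset.univ v
    rw [huniv] at this
    rw [← this]
    congr 1
    ext y; simp
  have hWc : Fintype.card (W : Set V) = #W := by simp
  obtain ⟨g, hg, X, hX1, hX2, hX3⟩ := di_core (G.induce (W : Set V)) ε d hε hε' hd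
    (fun v => by have h := hmin v v.2; rw [← hdeg] at h; convert h)
    (by
      have h1 := di_induce_edges G W
      have h2 : (G.induce (W : Set V)).edgeSet.ncard = #(G.induce (W : Set V)).edgeFinset := by
        rw [← SimpleGraph.coe_edgeFinset, Set.ncard_coe_finset]
      rw [h2] at h1
      rw [hWc]
      have h3 : d * (#W : ℝ) ≤ #(G.induce (W : Set V)).edgeFinset := by linarith
      convert h3)
    (by
      intro S hS
      have h1 := hJ (S.map (Function.Embedding.subtype _)) (by rwa [Finset.card_map])
      rw [Finset.card_map, Finset.sum_map] at h1
      refine le_trans (le_of_eq ?_) h1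
      apply Finset.sum_congr rfl
      intro x _
      have h2 := hmap S x
      rw [Function.Embedding.subtype_apply, ← h2]
      congr!)
  obtain ⟨m, H', hm, hH', hden⟩ := di_fin (diH (G.induce (W : Set V)) g) X (G.induce (W : Set V))
    (di_minor _ g hg _ (fun x hx => hX1 x hx)) hX2
  refine ⟨m, H', hm, di_minor_induce _ _ _ hH', ?_⟩
  rw [← hden] at hX3
  have hpos : (0:ℝ) < #X := by exact_mod_cast hX2.card_pos
  by_contra hc
  push Not at hc
  nlinarith

end helpers

theorem density_increment (ε : ℝ) (hε : 0 < ε) (hε' : ε < 1 / 100)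
    (V : Type) [Fintype V] [Nonempty V] (G : SimpleGraph V)
    (hd : 2 / ε ≤ density G) :
    (∃ J : G.Subgraph, (J.verts.ncard : ℝ) ≤ density G / (2 * ε) ∧
        ε * density G ≤ subDensity J) ∨
    (∃ (m : ℕ) (H : SimpleGraph (Fin m)), 0 < m ∧ IsMinor H G ∧
        (1 + ε) * density G ≤ density H) := by
  classical
  set d := density G with hdd
  have hd0 : 0 < d := lt_of_lt_of_le (by positivity) hd
  by_cases hJ : ∀ S : Finset V, (S.card : ℝ) ≤ d / (2 * ε) →
      ∑ x ∈ S, ((S.filter (G.Adj x)).card : ℝ) ≤ 2 * ε * d * S.card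
  · right
    refine di_main G ε d hε hε' hd ?_ (by convert hJ)
    have h1 : 2 * (G.edgeSet.ncard : ℝ) =
        ∑ x, ((Finset.univ.filter (G.Adj x)).card : ℝ) := by
      have h2 := G.sum_degrees_eq_twice_card_edges
      rw [← SimpleGraph.coe_edgeFinset, Set.ncard_coe_finset]
      have h3 : ∑ x, (Finset.univ.filter (G.Adj x)).card = ∑ x, G.degree x := by
        apply Finset.sum_congr rfl
        intro x _
        rw [← SimpleGraph.card_neighborFinset_eq_degree]
        congr 1
        ext y; simp
      exact_mod_cast (h3.trans h2).symm
    have h4 : d * Fintype.card V = G.edgeSet.ncard := by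
      have : (0:ℝ) < Fintype.card V := by exact_mod_cast Fintype.card_pos
      rw [hdd, density, Nat.card_eq_fintype_card]
      field_simp
    refine le_of_eq ?_
    rw [mul_assoc, h4, h1]
  · left
    push Not at hJ
    obtain ⟨S, hS, hlt⟩ := hJ
    obtain ⟨J, hJv, hJe⟩ := di_sub G S
    have hJe' : 2 * (J.edgeSet.ncard : ℝ) = ∑ x ∈ S, ((S.filter (G.Adj x)).card : ℝ) := by
      rw [hJe]
    have hSpos : (0:ℝ) < S.card := by
      rcases Finset.eq_empty_or_nonempty S with h | h
      · subst h; simp at hlt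
      · exact_mod_cast h.card_pos
    refine ⟨J, ?_, ?_⟩
    · rw [hJv, Set.ncard_coe_finset]; exact hS
    · rw [subDensity, hJv, Set.ncard_coe_finset, le_div_iff₀ hSpos]
      linarith
end
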